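/- arXiv:2403.07211 — 3 statements merged into one kernel-verified Lean document; each statement's English description precedes it below -/
import Mathlib

section
/- (Regularity for small gradient) Let u ∈ C(B₁) be a normalized viscosity solution of D(x,∇u)F(x,D²u) = f(x) in B₁ ⊂ ℝⁿ with u(0) = 0 and u differentiable at 0, where F is (λ,Λ)-elliptic with ᾱ-Hölder coefficients, D is a degeneracy law with exponent γ ∈ (0,1), and |f(x)| ≤ K₂|x|^θ with θ ∈ (0,1). Fix β ∈ (0,α₀) ∩ (0,(1+θ)/(1+γ)]. Then there exist small positive universal numbers ρ and η* and a universal constant C = C(ρ,β) > 0 such that: if |∇u(0)| ≤ η* t^β for some 0 < t ≤ ρ, then sup_{B_t} |u| ≤ C t^{1+β}. -/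
/-!
The function `u` is approximated by affine functions at the scales `r₀ ρ₁^k`, with error
`ρ₁^(k(1+β))`. The slopes of these affine functions form a geometrically convergent sequence whose
limit is the gradient of `u` at the origin. If this gradient has size at most `t^β`, then the slope
of the affine function at the scale comparable to `t` is also of size `O(t^β)`, and the bound
`|u| ≤ C t^(1+β)` on `B_t` follows. In particular `η* = 1` works.

One step of the iteration is an improvement of flatness (`flat`). Subtracting the current affine
function and rescaling (`resc`), one obtains a function of the class `Cls`: a bounded solution of a
uniformly elliptic equation with nearly constant coefficients and nearly zero right-hand side, which
is however only tested with functions whose gradient `p` is not too close to a critical value `-b`.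
The condition `β ≤ (1+θ)/(1+γ)` is what makes the rescaled right-hand side remain small. The
vector `b` is not bounded, so all estimates are uniform in it.

* Functions in the class are Lipschitz in the interior, uniformly (`Cls.exists_lipschitz`). This is
  the Ishii–Lions method: `v x - v y` is compared with `L ω(|x - y|)` plus quadratic terms, with `ω`
  strictly concave. The theorem on sums is replaced by Lasry–Lions regularization (`exists_isReg`),
  which yields `C^{1,1}` functions, together with Jensen's lemma (`jensen`) and Rademacher's theorem;
  the outcome is `doubling`. The slopes at the contact points are of order `L`: they are non-critical
  if `b` is large compared with a fixed `L`, and for the remaining `b` a larger `L` is taken.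
* Limits of functions in the class solve a constant-coefficient equation `G(D²h) = 0` without any
  restriction on the slopes (`stab_sub`). A test paraboloid with critical slope is perturbed by a
  ridge in a direction of negative curvature (`cut`), which moves the slope away from `-b` and
  leaves the Hessian unchanged; if there is no such direction, ellipticity alone gives the
  inequality. By compactness, functions in the class are close to solutions of such equations
  (`compact_approx`).
* The `C^{1,α₀}` estimate for those solutions provides the affine function at the next scale.

That the limit slope is the gradient of `u` at `0` follows from differentiability (`slope_close`).
-/

open Metric Set
open scoped RealInnerProductSpace

noncomputable section

attribute [local instance] Matrix.normedAddCommGroup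

/-- Euclidean space ℝⁿ. -/
abbrev En (n : ℕ) := EuclideanSpace ℝ (Fin n)

/-- The Hessian matrix of `ψ` at `x`, given by second iterated Fréchet derivatives
in coordinate directions. -/
def hessMat {n : ℕ} (ψ : En n → ℝ) (x : En n) : Matrix (Fin n) (Fin n) ℝ :=
  Matrix.of fun i j =>
    iteratedFDeriv ℝ 2 ψ x ![EuclideanSpace.single i 1, EuclideanSpace.single j 1]

/-- The Pucci minimal operator `M⁻_{λ,Λ}`. -/
def pucciMinus {n : ℕ} (lam Lam : ℝ) (M : Matrix (Fin n) (Fin n) ℝ) : ℝ :=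
  sInf { t | ∃ A : Matrix (Fin n) (Fin n) ℝ, A.IsSymm ∧
      (A - lam • (1 : Matrix (Fin n) (Fin n) ℝ)).PosSemidef ∧
      (Lam • (1 : Matrix (Fin n) (Fin n) ℝ) - A).PosSemidef ∧ t = (A * M).trace }

/-- The Pucci maximal operator `M⁺_{λ,Λ}`. -/
def pucciPlus {n : ℕ} (lam Lam : ℝ) (M : Matrix (Fin n) (Fin n) ℝ) : ℝ :=
  - pucciMinus lam Lam (-M)

/-- `(λ,Λ)`-uniform ellipticity for a variable coefficient operator on `B₁`,
normalized so that `F(x,0) = 0`. -/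
def IsUnifElliptic {n : ℕ} (lam Lam : ℝ)
    (F : En n → Matrix (Fin n) (Fin n) ℝ → ℝ) : Prop :=
  (∀ x ∈ ball (0 : En n) 1, ∀ M N : Matrix (Fin n) (Fin n) ℝ, M.IsSymm → N.IsSymm →
      pucciMinus lam Lam (M - N) ≤ F x M - F x N ∧
        F x M - F x N ≤ pucciPlus lam Lam (M - N)) ∧
    ∀ x ∈ ball (0 : En n) 1, F x 0 = 0

/-- `(λ,Λ)`-uniform ellipticity for a constant coefficient operator, normalized. -/
def IsUnifEllipticConst {n : ℕ} (lam Lam : ℝ)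
    (G : Matrix (Fin n) (Fin n) ℝ → ℝ) : Prop :=
  (∀ M N : Matrix (Fin n) (Fin n) ℝ, M.IsSymm → N.IsSymm →
      pucciMinus lam Lam (M - N) ≤ G M - G N ∧ G M - G N ≤ pucciPlus lam Lam (M - N)) ∧
    G 0 = 0

/-- A degeneracy law with exponent `γ`: `λ̃|b|^γ ≤ D(x,b) ≤ Λ̃|b|^γ`. -/
def IsDegeneracyLaw {n : ℕ} (tlam tLam γ : ℝ) (Dg : En n → En n → ℝ) : Prop :=
  ∀ x ∈ ball (0 : En n) 1, ∀ b : En n,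
    tlam * ‖b‖ ^ γ ≤ Dg x b ∧ Dg x b ≤ tLam * ‖b‖ ^ γ

/-- Viscosity solution of `G(x, ∇u, D²u) = f(x)` on a set `Ω`. -/
def IsViscositySolutionOn {n : ℕ} (Ω : Set (En n))
    (G : En n → En n → Matrix (Fin n) (Fin n) ℝ → ℝ) (f : En n → ℝ) (u : En n → ℝ) : Prop :=
  (∀ ψ : En n → ℝ, ContDiff ℝ 2 ψ → ∀ x₀ ∈ Ω,
      IsLocalMax (fun x => u x - ψ x) x₀ →
        f x₀ ≤ G x₀ (gradient ψ x₀) (hessMat ψ x₀)) ∧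
  (∀ ψ : En n → ℝ, ContDiff ℝ 2 ψ → ∀ x₀ ∈ Ω,
      IsLocalMin (fun x => u x - ψ x) x₀ →
        G x₀ (gradient ψ x₀) (hessMat ψ x₀) ≤ f x₀)

/-- Interior `C^{1,α₀}` estimate, with constant `C₀`, for viscosity solutions of
constant-coefficient homogeneous `(λ,Λ)`-elliptic equations `G(D²h) = 0` in `B_{3/4}`
that vanish to first order at the origin. -/
def InteriorC1AlphaEstimate (n : ℕ) (lam Lam α₀ C₀ : ℝ) : Prop :=
  ∀ G : Matrix (Fin n) (Fin n) ℝ → ℝ, IsUnifEllipticConst lam Lam G →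
    ∀ h : En n → ℝ, ContinuousOn h (ball (0 : En n) (3/4)) →
      IsViscositySolutionOn (ball (0 : En n) (3/4)) (fun _ _ M => G M) (fun _ => 0) h →
      (∀ x ∈ ball (0 : En n) (3/4), |h x| ≤ 1) →
      h 0 = 0 → gradient h 0 = 0 →
      ∀ r : ℝ, 0 < r → r ≤ 1/2 → ∀ x ∈ ball (0 : En n) r, |h x| ≤ C₀ * r ^ (1 + α₀)

/-! ### Quadratic forms and Pucci operators -/

/-- The quadratic form `h ↦ hᵀ M h` of a matrix. -/
def qf {n : ℕ} (M : Matrix (Fin n) (Fin n) ℝ) (h : En n) : ℝ :=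
  h.ofLp ⬝ᵥ (M.mulVec h.ofLp)

/-- The vector `M h` as an element of Euclidean space. -/
def mv {n : ℕ} (M : Matrix (Fin n) (Fin n) ℝ) (h : En n) : En n :=
  WithLp.toLp 2 (M.mulVec h.ofLp)

lemma inner_eq_dot {n : ℕ} (x y : En n) : ⟪x, y⟫ = x.ofLp ⬝ᵥ y.ofLp := by
  simp [EuclideanSpace.inner_eq_star_dotProduct, dotProduct_comm]

lemma qf_eq_inner {n : ℕ} (M : Matrix (Fin n) (Fin n) ℝ) (h : En n) :
    qf M h = ⟪mv M h, h⟫ := by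
  rw [inner_eq_dot, dotProduct_comm]; rfl

lemma qf_add {n : ℕ} (M N : Matrix (Fin n) (Fin n) ℝ) (h : En n) :
    qf (M + N) h = qf M h + qf N h := by
  simp [qf, Matrix.add_mulVec, dotProduct_add]

lemma qf_sub {n : ℕ} (M N : Matrix (Fin n) (Fin n) ℝ) (h : En n) :
    qf (M - N) h = qf M h - qf N h := by
  simp [qf, Matrix.sub_mulVec, dotProduct_sub]

lemma qf_neg {n : ℕ} (M : Matrix (Fin n) (Fin n) ℝ) (h : En n) :
    qf (-M) h = - qf M h := by
  simp [qf, Matrix.neg_mulVec, dotProduct_neg]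

lemma qf_smul {n : ℕ} (c : ℝ) (M : Matrix (Fin n) (Fin n) ℝ) (h : En n) :
    qf (c • M) h = c * qf M h := by
  simp [qf, Matrix.smul_mulVec, dotProduct_smul]

lemma qf_one {n : ℕ} (h : En n) : qf 1 h = ‖h‖ ^ 2 := by
  rw [← real_inner_self_eq_norm_sq, inner_eq_dot]; simp [qf]

lemma qf_smul_vec {n : ℕ} (c : ℝ) (M : Matrix (Fin n) (Fin n) ℝ) (h : En n) :
    qf M (c • h) = c ^ 2 * qf M h := by
  simp [qf, Matrix.mulVec_smul, dotProduct_smul, smul_dotProduct]; ring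

lemma mv_inner_symm {n : ℕ} {M : Matrix (Fin n) (Fin n) ℝ} (hM : M.IsSymm) (h k : En n) :
    ⟪mv M h, k⟫ = ⟪mv M k, h⟫ := by
  rw [inner_eq_dot, inner_eq_dot]
  change (M.mulVec h.ofLp) ⬝ᵥ k.ofLp = (M.mulVec k.ofLp) ⬝ᵥ h.ofLp
  rw [dotProduct_comm, Matrix.dotProduct_mulVec, ← Matrix.mulVec_transpose, hM.eq]

lemma mv_add {n : ℕ} (M : Matrix (Fin n) (Fin n) ℝ) (h k : En n) :
    mv M (h + k) = mv M h + mv M k := by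
  ext i; simp [mv, Matrix.mulVec_add]

lemma qf_add_vec {n : ℕ} {M : Matrix (Fin n) (Fin n) ℝ} (hM : M.IsSymm) (h k : En n) :
    qf M (h + k) = qf M h + 2 * ⟪mv M h, k⟫ + qf M k := by
  simp only [qf_eq_inner, mv_add, inner_add_left, inner_add_right]
  rw [mv_inner_symm hM k h]; ring

lemma posSemidef_of_qf {n : ℕ} {M : Matrix (Fin n) (Fin n) ℝ} (hM : M.IsSymm)
    (h : ∀ x : En n, 0 ≤ qf M x) : M.PosSemidef := by
  refine Matrix.PosSemidef.of_dotProduct_mulVec_nonneg ?_ fun x => ?_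
  · rw [Matrix.IsHermitian, Matrix.conjTranspose_eq_transpose_of_trivial]; exact hM
  · simpa [qf] using h (WithLp.toLp 2 x)

lemma qf_nonneg {n : ℕ} {M : Matrix (Fin n) (Fin n) ℝ} (hM : M.PosSemidef) (x : En n) :
    0 ≤ qf M x := by
  simpa [qf] using hM.dotProduct_mulVec_nonneg x.ofLp

open scoped MatrixOrder Matrix.Norms.L2Operator in
lemma trace_mul_nonneg_of_psd {n : ℕ} {A B : Matrix (Fin n) (Fin n) ℝ}
    (hA : A.PosSemidef) (hB : B.PosSemidef) : 0 ≤ (A * B).trace := by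
  obtain ⟨C, rfl⟩ := CStarAlgebra.nonneg_iff_eq_star_mul_self.mp hA.nonneg
  rw [Matrix.star_eq_conjTranspose, Matrix.mul_assoc, Matrix.trace_mul_comm]
  exact (hB.mul_mul_conjTranspose_same C).trace_nonneg

/-- For a positive semidefinite matrix the trace dominates every value of the quadratic form
on the unit sphere. -/
lemma qf_le_trace {n : ℕ} {A : Matrix (Fin n) (Fin n) ℝ} (hA : A.PosSemidef) {e : En n}
    (he : ‖e‖ = 1) : qf A e ≤ A.trace := by
  have hE : ((1 : Matrix (Fin n) (Fin n) ℝ) - Matrix.vecMulVec e.ofLp e.ofLp).PosSemidef := by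
    refine posSemidef_of_qf ?_ fun x => ?_
    · rw [Matrix.IsSymm, Matrix.transpose_sub, Matrix.transpose_one, Matrix.transpose_vecMulVec]
    · have h1 : qf (Matrix.vecMulVec e.ofLp e.ofLp) x = ⟪e, x⟫ ^ 2 := by
        rw [inner_eq_dot, qf, Matrix.vecMulVec_mulVec]
        simp [dotProduct_comm x.ofLp e.ofLp, sq]
      rw [qf_sub, qf_one, h1]
      have := abs_real_inner_le_norm e x
      rw [he, one_mul] at this
      nlinarith [sq_abs ⟪e, x⟫, abs_nonneg ⟪e, x⟫]
  have := trace_mul_nonneg_of_psd hA hE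
  rw [Matrix.mul_sub, Matrix.mul_one, Matrix.trace_sub, Matrix.mul_vecMulVec,
    Matrix.trace_vecMulVec, dotProduct_comm] at this
  simp only [qf]; linarith

lemma single_norm {n : ℕ} (i : Fin n) : ‖(EuclideanSpace.single i (1:ℝ) : En n)‖ = 1 := by simp

lemma qf_single {n : ℕ} (A : Matrix (Fin n) (Fin n) ℝ) (i : Fin n) :
    qf A (EuclideanSpace.single i (1:ℝ)) = A i i := by
  simp [qf]

/-- Entries of a positive semidefinite matrix are bounded by its trace. -/
lemma entry_le_trace {n : ℕ} {A : Matrix (Fin n) (Fin n) ℝ} (hA : A.PosSemidef) (i j : Fin n) :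
    |A i j| ≤ A.trace := by
  have hs : A.IsSymm := by
    have := hA.1
    rwa [Matrix.IsHermitian, Matrix.conjTranspose_eq_transpose_of_trivial] at this
  have hi := qf_le_trace hA (single_norm i)
  have hj := qf_le_trace hA (single_norm j)
  have hp := qf_nonneg hA (EuclideanSpace.single i (1:ℝ) + EuclideanSpace.single j (1:ℝ))
  have hm := qf_nonneg hA (EuclideanSpace.single i (1:ℝ) + (-1:ℝ) • EuclideanSpace.single j (1:ℝ))
  have hin : ⟪mv A (EuclideanSpace.single i (1:ℝ)), EuclideanSpace.single j (1:ℝ)⟫ = A i j := by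
    rw [inner_eq_dot]; simp [mv]; rw [← hs.apply]
  rw [qf_add_vec hs, hin, qf_single, qf_single] at hp
  rw [qf_add_vec hs, qf_smul_vec, inner_smul_right, hin, qf_single, qf_single] at hm
  rw [qf_single] at hi hj
  rw [abs_le]; constructor <;> linarith

lemma pucci_set_nonempty {n : ℕ} {lam Lam : ℝ} (h : lam ≤ Lam)
    (M : Matrix (Fin n) (Fin n) ℝ) :
    { t | ∃ A : Matrix (Fin n) (Fin n) ℝ, A.IsSymm ∧
      (A - lam • (1 : Matrix (Fin n) (Fin n) ℝ)).PosSemidef ∧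
      (Lam • (1 : Matrix (Fin n) (Fin n) ℝ) - A).PosSemidef ∧ t = (A * M).trace }.Nonempty := by
  refine ⟨_, lam • 1, ?_, ?_, ?_, rfl⟩
  · rw [Matrix.IsSymm, Matrix.transpose_smul, Matrix.transpose_one]
  · rw [sub_self]; exact Matrix.PosSemidef.zero
  · rw [← sub_smul]; exact Matrix.PosSemidef.one.smul (sub_nonneg.2 h)

lemma pucciMinus_nonneg {n : ℕ} {lam Lam : ℝ} (h0 : 0 < lam) (h : lam ≤ Lam)
    {M : Matrix (Fin n) (Fin n) ℝ} (hM : M.PosSemidef) : 0 ≤ pucciMinus lam Lam M := by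
  refine le_csInf (pucci_set_nonempty h M) ?_
  rintro t ⟨A, -, h1, -, rfl⟩
  refine trace_mul_nonneg_of_psd ?_ hM
  have := h1.add (Matrix.PosSemidef.one.smul h0.le)
  rwa [sub_add_cancel] at this

/-- Upper bound for the maximal Pucci operator on a matrix `M ≤ m I`: the positive part costs at
most `n Λ m`, and the amount by which `M` stays below `m I` is gained with factor `λ`. -/
lemma pucciPlus_le {n : ℕ} {lam Lam m : ℝ} (h : lam ≤ Lam) (hm : 0 ≤ m)
    {M : Matrix (Fin n) (Fin n) ℝ} (hM : (m • (1 : Matrix (Fin n) (Fin n) ℝ) - M).PosSemidef) :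
    pucciPlus lam Lam M ≤ n * Lam * m - lam * (m • (1 : Matrix (Fin n) (Fin n) ℝ) - M).trace := by
  rw [pucciPlus, neg_le]
  refine le_csInf (pucci_set_nonempty h (-M)) ?_
  rintro t ⟨A, -, h1, h2, rfl⟩
  have e1 := trace_mul_nonneg_of_psd h1 hM
  have e2 := h2.trace_nonneg
  rw [Matrix.sub_mul, Matrix.trace_sub, Matrix.smul_mul, Matrix.one_mul, Matrix.trace_smul,
    Matrix.mul_sub, Matrix.trace_sub, Matrix.mul_smul, Matrix.mul_one, Matrix.trace_smul] at e1
  rw [Matrix.trace_sub, Matrix.trace_smul, Matrix.trace_one, Fintype.card_fin] at e2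
  rw [Matrix.mul_neg, Matrix.trace_neg]
  simp only [smul_eq_mul] at e1 e2
  nlinarith [mul_nonneg hm e2]

lemma pucciMinus_smul {n : ℕ} (lam Lam : ℝ) {c : ℝ} (hc : 0 ≤ c)
    (M : Matrix (Fin n) (Fin n) ℝ) : pucciMinus lam Lam (c • M) = c * pucciMinus lam Lam M := by
  rw [pucciMinus, pucciMinus, ← smul_eq_mul, ← Real.sInf_smul_of_nonneg hc]
  congr 1
  ext t
  simp only [mem_ofPred_eq, Set.mem_smul_set, Matrix.mul_smul, Matrix.trace_smul]
  constructor
  · rintro ⟨A, a, b, d, rfl⟩; exact ⟨_, ⟨A, a, b, d, rfl⟩, rfl⟩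
  · rintro ⟨_, ⟨A, a, b, d, rfl⟩, rfl⟩; exact ⟨A, a, b, d, rfl⟩

lemma pucciPlus_smul {n : ℕ} (lam Lam : ℝ) {c : ℝ} (hc : 0 ≤ c)
    (M : Matrix (Fin n) (Fin n) ℝ) : pucciPlus lam Lam (c • M) = c * pucciPlus lam Lam M := by
  rw [pucciPlus, pucciPlus, ← smul_neg, pucciMinus_smul lam Lam hc]; ring

/-- A non-positive symmetric direction: a symmetric matrix that is not positive semidefinite has a
unit eigenvector with negative eigenvalue. -/
lemma exists_neg_eigen {n : ℕ} {M : Matrix (Fin n) (Fin n) ℝ} (hM : M.IsSymm)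
    (h : ¬ M.PosSemidef) : ∃ (e : En n) (μ : ℝ), ‖e‖ = 1 ∧ 0 < μ ∧ mv M e = (-μ) • e := by
  have hH : M.IsHermitian := by
    rw [Matrix.IsHermitian, Matrix.conjTranspose_eq_transpose_of_trivial]; exact hM
  rw [hH.posSemidef_iff_eigenvalues_nonneg] at h
  simp only [Pi.le_def, not_forall, not_le, Pi.zero_apply] at h
  obtain ⟨i, hi⟩ := h
  refine ⟨hH.eigenvectorBasis i, -hH.eigenvalues i, hH.eigenvectorBasis.orthonormal.1 i,
    by linarith, ?_⟩
  have := hH.mulVec_eigenvectorBasis i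
  simp only [mv, neg_neg]
  rw [this]; ext j; simp

/-! ### Paraboloids as test functions -/

open Filter Topology in
/-- Second-order Taylor expansion at a point where the derivative is merely differentiable;
no symmetry of the second derivative is needed. -/
lemma taylor2 {E : Type*} [NormedAddCommGroup E] [NormedSpace ℝ E] {V : E → ℝ}
    {g : E → E →L[ℝ] ℝ} {A : E →L[ℝ] E →L[ℝ] ℝ} {x : E}
    (hV : ∀ᶠ x' in 𝓝 x, HasFDerivAt V (g x') x') (hg : HasFDerivAt g A x) {ε : ℝ} (hε : 0 < ε) :
    ∀ᶠ h in 𝓝 (0 : E), |V (x + h) - V x - g x h - A h h / 2| ≤ ε * ‖h‖ ^ 2 := by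
  have h1 : ∀ᶠ h in 𝓝 (0 : E), ‖g (x + h) - g x - A h‖ ≤ ε * ‖h‖ := by
    have := hg
    rw [hasFDerivAt_iff_isLittleO_nhds_zero] at this
    exact this.def hε
  have h2 : ∀ᶠ h in 𝓝 (0 : E), HasFDerivAt V (g (x + h)) (x + h) := by
    have : Tendsto (fun h : E => x + h) (𝓝 0) (𝓝 x) := by
      have : Continuous fun h : E => x + h := by fun_prop
      simpa using this.tendsto 0
    exact this.eventually hV
  obtain ⟨δ, hδ, hb⟩ := Metric.eventually_nhds_iff_ball.1 (h1.and h2)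
  filter_upwards [Metric.ball_mem_nhds (0 : E) hδ] with h hh
  have hmem : ∀ t ∈ Icc (0:ℝ) 1, t • h ∈ ball (0 : E) δ := by
    intro t ht
    rw [mem_ball_zero_iff] at hh ⊢
    rw [norm_smul, Real.norm_of_nonneg ht.1]
    exact lt_of_le_of_lt (mul_le_of_le_one_left (norm_nonneg _) ht.2) hh
  have key := norm_image_sub_le_of_norm_deriv_le_segment_01'
    (f := fun t : ℝ => V (x + t • h) - t * g x h - t ^ 2 * (A h h / 2))
    (f' := fun t : ℝ => g (x + t • h) h - g x h - 2 * t * (A h h / 2)) (C := ε * ‖h‖ ^ 2) ?_ ?_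
  · simp only [one_smul, zero_smul, add_zero, one_mul, zero_mul, one_pow, sub_zero, ne_eq,
      OfNat.ofNat_ne_zero, not_false_eq_true, zero_pow, Real.norm_eq_abs] at key
    convert key using 2; ring
  · intro t ht
    apply HasDerivAt.hasDerivWithinAt
    have e1 : HasDerivAt (fun t : ℝ => V (x + t • h)) (g (x + t • h) h) t := by
      have e0 : HasDerivAt (fun t : ℝ => x + t • h) h t := by
        simpa using ((hasDerivAt_id t).smul_const h).const_add x
      exact ((hb _ (hmem t ht)).2.comp_hasDerivAt t e0)
    have e2 : HasDerivAt (fun t : ℝ => t * g x h) (g x h) t := by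
      simpa using (hasDerivAt_id t).mul_const (g x h)
    have e3 : HasDerivAt (fun t : ℝ => t ^ 2 * (A h h / 2)) (2 * t * (A h h / 2)) t := by
      simpa using (hasDerivAt_pow 2 t).mul_const (A h h / 2)
    exact (e1.sub e2).sub e3
  · intro t ht
    have ht' : t ∈ Icc (0:ℝ) 1 := ⟨ht.1, ht.2.le⟩
    have e := (hb _ (hmem t ht')).1
    have : g (x + t • h) h - g x h - 2 * t * (A h h / 2) = (g (x + t • h) - g x - A (t • h)) h := by
      simp; ring
    rw [this]
    refine (ContinuousLinearMap.le_opNorm _ _).trans ?_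
    rw [norm_smul, Real.norm_of_nonneg ht.1] at e
    calc _ ≤ ε * (t * ‖h‖) * ‖h‖ := by gcongr
      _ ≤ ε * (1 * ‖h‖) * ‖h‖ := by gcongr; exact ht.2.le
      _ = _ := by ring

/-- The bilinear form `(h, k) ↦ ⟪M h, k⟫` as a continuous bilinear map. -/
def bil {n : ℕ} (M : Matrix (Fin n) (Fin n) ℝ) : En n →L[ℝ] En n →L[ℝ] ℝ :=
  (innerSL ℝ).comp (LinearMap.toContinuousLinearMap
    { toFun := mv M
      map_add' := mv_add M
      map_smul' := fun c h => by ext i; simp [mv, Matrix.mulVec_smul] })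

lemma bil_apply {n : ℕ} (M : Matrix (Fin n) (Fin n) ℝ) (h k : En n) :
    bil M h k = ⟪mv M h, k⟫ := rfl

/-- The symmetric matrix representing the quadratic form of a bilinear map. -/
def matOf {n : ℕ} (A : En n →L[ℝ] En n →L[ℝ] ℝ) : Matrix (Fin n) (Fin n) ℝ :=
  Matrix.of fun i j => (A (EuclideanSpace.single i 1) (EuclideanSpace.single j 1)
    + A (EuclideanSpace.single j 1) (EuclideanSpace.single i 1)) / 2

lemma vec_eq_sum {n : ℕ} (h : En n) :
    h = ∑ i, h.ofLp i • (EuclideanSpace.single i (1:ℝ) : En n) := by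
  ext j; simp [Finset.sum_apply, Pi.single_apply]

lemma bilin_expand {n : ℕ} (A : En n →L[ℝ] En n →L[ℝ] ℝ) (h : En n) :
    A h h = ∑ i, ∑ j, h.ofLp i * h.ofLp j *
      A (EuclideanSpace.single i 1) (EuclideanSpace.single j 1) := by
  conv_lhs => rw [vec_eq_sum h]
  simp only [map_sum, map_smul, _root_.sum_apply, _root_.smul_apply,
    smul_eq_mul, Finset.mul_sum]
  rw [Finset.sum_comm]
  exact Finset.sum_congr rfl fun i _ => Finset.sum_congr rfl fun j _ => by ring

lemma qf_expand {n : ℕ} (M : Matrix (Fin n) (Fin n) ℝ) (h : En n) :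
    qf M h = ∑ i, ∑ j, h.ofLp i * h.ofLp j * M i j := by
  simp only [qf, dotProduct, Matrix.mulVec, Finset.mul_sum]
  exact Finset.sum_congr rfl fun i _ => Finset.sum_congr rfl fun j _ => by ring

lemma matOf_symm {n : ℕ} (A : En n →L[ℝ] En n →L[ℝ] ℝ) : (matOf A).IsSymm := by
  ext i j; simp [matOf, add_comm]

lemma qf_matOf {n : ℕ} (A : En n →L[ℝ] En n →L[ℝ] ℝ) (h : En n) : qf (matOf A) h = A h h := by
  rw [qf_expand, bilin_expand]
  have e : ∀ i j, h.ofLp i * h.ofLp j * matOf A i j =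
      (h.ofLp i * h.ofLp j * A (EuclideanSpace.single i 1) (EuclideanSpace.single j 1)) / 2 +
      (h.ofLp j * h.ofLp i * A (EuclideanSpace.single j 1) (EuclideanSpace.single i 1)) / 2 := by
    intro i j; simp [matOf]; ring
  simp only [e, Finset.sum_add_distrib, ← Finset.sum_div]
  rw [Finset.sum_comm (f := fun i j => h.ofLp j * h.ofLp i *
    A (EuclideanSpace.single j 1) (EuclideanSpace.single i 1))]
  ring

lemma hasFDerivAt_sub_right {n : ℕ} (x₀ x : En n) :
    HasFDerivAt (fun x : En n => x - x₀) (ContinuousLinearMap.id ℝ (En n)) x :=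
  (hasFDerivAt_id x).sub_const x₀

lemma quad_hasFDerivAt {n : ℕ} (x₀ p : En n) {M : Matrix (Fin n) (Fin n) ℝ} (hM : M.IsSymm)
    (c : ℝ) (x : En n) : HasFDerivAt (fun x => c + ⟪p, x - x₀⟫ + qf M (x - x₀) / 2)
      (innerSL ℝ p + bil M (x - x₀)) x := by
  have hs := hasFDerivAt_sub_right x₀ x
  have h1 : HasFDerivAt (fun x : En n => innerSL ℝ p (x - x₀))
      ((innerSL ℝ p).comp (ContinuousLinearMap.id ℝ (En n))) x :=
    HasFDerivAt.comp x (f := fun x : En n => x - x₀) (innerSL ℝ p).hasFDerivAt hs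
  have h2 := (bil M).hasFDerivAt_of_bilinear hs hs
  have h3 := (h1.const_add c).add (h2.const_mul (1/2))
  have e : (fun x => c + ⟪p, x - x₀⟫ + qf M (x - x₀) / 2) =
      fun x => (c + innerSL ℝ p (x - x₀)) + 1/2 * bil M (x - x₀) (x - x₀) := by
    ext y; rw [qf_eq_inner, bil_apply, innerSL_apply_apply]; ring
  rw [e]
  refine HasFDerivAt.congr_fderiv h3 ?_
  ext k; simp [bil_apply, mv_inner_symm hM k x, mv_inner_symm hM k x₀]; ring

lemma quad_contDiff {n : ℕ} (x₀ p : En n) {M : Matrix (Fin n) (Fin n) ℝ}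
    (c : ℝ) : ContDiff ℝ 2 (fun x => c + ⟪p, x - x₀⟫ + qf M (x - x₀) / 2) := by
  have e : (fun x => c + ⟪p, x - x₀⟫ + qf M (x - x₀) / 2) =
      fun x => c + innerSL ℝ p (x - x₀) + bil M (x - x₀) (x - x₀) / 2 := by
    ext x; rw [qf_eq_inner, bil_apply, innerSL_apply_apply]
  rw [e]
  fun_prop

lemma quad_gradient {n : ℕ} (x₀ p : En n) {M : Matrix (Fin n) (Fin n) ℝ} (hM : M.IsSymm)
    (c : ℝ) : gradient (fun x => c + ⟪p, x - x₀⟫ + qf M (x - x₀) / 2) x₀ = p := by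
  refine HasGradientAt.gradient ?_
  rw [hasGradientAt_iff_hasFDerivAt]
  refine HasFDerivAt.congr_fderiv (quad_hasFDerivAt x₀ p hM c x₀) ?_
  ext k; simp

lemma quad_hess {n : ℕ} (x₀ p : En n) {M : Matrix (Fin n) (Fin n) ℝ} (hM : M.IsSymm)
    (c : ℝ) : hessMat (fun x => c + ⟪p, x - x₀⟫ + qf M (x - x₀) / 2) x₀ = M := by
  have e1 : fderiv ℝ (fun x => c + ⟪p, x - x₀⟫ + qf M (x - x₀) / 2) =
      fun x => innerSL ℝ p + bil M (x - x₀) := by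
    ext1 x; exact (quad_hasFDerivAt x₀ p hM c x).fderiv
  have e2 : HasFDerivAt (fun x => innerSL ℝ p + bil M (x - x₀)) (bil M) x₀ := by
    have h0 : HasFDerivAt (fun x : En n => bil M (x - x₀))
      ((bil M).comp (ContinuousLinearMap.id ℝ (En n))) x₀ :=
      HasFDerivAt.comp x₀ (f := fun x : En n => x - x₀) (bil M).hasFDerivAt
        (hasFDerivAt_sub_right x₀ x₀)
    refine HasFDerivAt.congr_fderiv (h0.const_add (innerSL ℝ p)) ?_
    ext; rfl
  ext i j
  simp only [hessMat, Matrix.of_apply, iteratedFDeriv_two_apply, e1, e2.fderiv]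
  simp only [bil_apply, Matrix.cons_val_zero, Matrix.cons_val_one]
  rw [inner_eq_dot]; simp [mv]; rw [← hM.apply]

lemma hess_symm {n : ℕ} {ψ : En n → ℝ} (hψ : ContDiff ℝ 2 ψ) (x₀ : En n) :
    (hessMat ψ x₀).IsSymm := by
  have := hψ.contDiffAt.isSymmSndFDerivAt (x := x₀) (by simp)
  ext i j
  simp only [hessMat, Matrix.transpose_apply, Matrix.of_apply, iteratedFDeriv_two_apply]
  simpa using this _ _

open Filter Topology in
lemma c2_expand {n : ℕ} {ψ : En n → ℝ} (hψ : ContDiff ℝ 2 ψ) (x₀ : En n) {ε : ℝ} (hε : 0 < ε) :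
    ∀ᶠ x in 𝓝 x₀, |ψ x - ψ x₀ - ⟪gradient ψ x₀, x - x₀⟫ - qf (hessMat ψ x₀) (x - x₀) / 2|
      ≤ ε * ‖x - x₀‖ ^ 2 := by
  have hd : Differentiable ℝ ψ := hψ.differentiable (by norm_num)
  have hd2 : Differentiable ℝ (fderiv ℝ ψ) :=
    (hψ.fderiv_right (m := 1) (by norm_num)).differentiable (by norm_num)
  have h := taylor2 (x := x₀) (Eventually.of_forall fun x => (hd x).hasFDerivAt)
    (hd2 x₀).hasFDerivAt hε
  have ht : Tendsto (fun x : En n => x - x₀) (𝓝 x₀) (𝓝 0) := by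
    have : Continuous fun x : En n => x - x₀ := by fun_prop
    simpa using this.tendsto x₀
  filter_upwards [ht.eventually h] with x hx
  have e1 : fderiv ℝ ψ x₀ (x - x₀) = ⟪gradient ψ x₀, x - x₀⟫ := by
    rw [gradient, InnerProductSpace.toDual_symm_apply]
  have e2 : fderiv ℝ (fderiv ℝ ψ) x₀ (x - x₀) (x - x₀) = qf (hessMat ψ x₀) (x - x₀) := by
    rw [bilin_expand, qf_expand]
    simp [hessMat, iteratedFDeriv_two_apply]
  rwa [e1, e2, add_sub_cancel] at hx

open Filter Topology in
/-- A subsolution may be tested with a paraboloid touching it from above. -/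
lemma visc_above {n : ℕ} {Ω : Set (En n)} {G : En n → En n → Matrix (Fin n) (Fin n) ℝ → ℝ}
    {f u : En n → ℝ} (hu : IsViscositySolutionOn Ω G f u) {x₀ p : En n} (hx : x₀ ∈ Ω)
    {M : Matrix (Fin n) (Fin n) ℝ} (hM : M.IsSymm)
    (ht : ∀ᶠ x in 𝓝 x₀, u x ≤ u x₀ + ⟪p, x - x₀⟫ + qf M (x - x₀) / 2) :
    f x₀ ≤ G x₀ p M := by
  have := hu.1 _ (quad_contDiff x₀ p (M := M) (u x₀)) x₀ hx ?_
  · rwa [quad_gradient x₀ p hM, quad_hess x₀ p hM] at this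
  · filter_upwards [ht] with x hx
    simp [qf]; simp [qf] at hx; linarith

open Filter Topology in
/-- A supersolution may be tested with a paraboloid touching it from below. -/
lemma visc_below {n : ℕ} {Ω : Set (En n)} {G : En n → En n → Matrix (Fin n) (Fin n) ℝ → ℝ}
    {f u : En n → ℝ} (hu : IsViscositySolutionOn Ω G f u) {x₀ p : En n} (hx : x₀ ∈ Ω)
    {M : Matrix (Fin n) (Fin n) ℝ} (hM : M.IsSymm)
    (ht : ∀ᶠ x in 𝓝 x₀, u x₀ + ⟪p, x - x₀⟫ + qf M (x - x₀) / 2 ≤ u x) :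
    G x₀ p M ≤ f x₀ := by
  have := hu.2 _ (quad_contDiff x₀ p (M := M) (u x₀)) x₀ hx ?_
  · rwa [quad_gradient x₀ p hM, quad_hess x₀ p hM] at this
  · filter_upwards [ht] with x hx
    simp [qf]; simp [qf] at hx; linarith

/-! ### Lasry–Lions regularization -/

lemma sq_mid {n : ℕ} (a b c : En n) : ‖a - (1/2 : ℝ) • (b + c)‖ ^ 2 =
    ‖a - b‖ ^ 2 / 2 + ‖a - c‖ ^ 2 / 2 - ‖b - c‖ ^ 2 / 4 := by
  simp only [← real_inner_self_eq_norm_sq, inner_sub_left, inner_sub_right, inner_add_left,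
    inner_add_right, real_inner_smul_left, real_inner_smul_right,
    real_inner_comm a b, real_inner_comm a c, real_inner_comm b c]
  ring

lemma sq_cross {n : ℕ} (x x' z z' : En n) :
    ‖x - z'‖ ^ 2 + ‖x' - z‖ ^ 2 - ‖x - z‖ ^ 2 - ‖x' - z'‖ ^ 2 = 2 * ⟪x - x', z - z'⟫ := by
  simp only [← real_inner_self_eq_norm_sq, inner_sub_left, inner_sub_right,
    real_inner_comm x z, real_inner_comm x z', real_inner_comm x' z, real_inner_comm x' z']
  ring

lemma sq_shift {n : ℕ} (x x' z : En n) :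
    ‖x' - z‖ ^ 2 = ‖x - z‖ ^ 2 + 2 * ⟪x - z, x' - x⟫ + ‖x' - x‖ ^ 2 := by
  have : x' - z = (x - z) + (x' - x) := by abel
  rw [this, norm_add_sq_real]

lemma sq_tri {n : ℕ} (x y z : En n) : ‖x - z‖ ^ 2 ≤ 2 * ‖y - x‖ ^ 2 + 2 * ‖y - z‖ ^ 2 := by
  have h : ‖x - z‖ ≤ ‖y - x‖ + ‖y - z‖ := by
    have := norm_sub_le_norm_sub_add_norm_sub x y z
    rwa [norm_sub_rev x y] at this
  nlinarith [norm_nonneg (x - z), norm_nonneg (y - x), norm_nonneg (y - z),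
    sq_nonneg (‖y - x‖ - ‖y - z‖)]

open Filter Topology in
/-- `V` is a `C^{1,1}` regularization from above of `v` on `Kc` at scale `σ`, with gradient field
`gV`. The field `touch` says that wherever `V` is bent less than `2/σ`, its shape near `x` dominates
the shape of `v` near some point `ξ` at distance `O(√σ)`. -/
structure IsReg {n : ℕ} (Kc : Set (En n)) (v : En n → ℝ) (σ : ℝ) (V : En n → ℝ)
    (gV : En n → En n) : Prop where
  lip : ∃ C : NNReal, LipschitzWith C gV
  grad : ∃ C : ℝ, 0 ≤ C ∧ ∀ x x', |V x' - V x - ⟪gV x, x' - x⟫| ≤ C * ‖x' - x‖ ^ 2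
  ge : ∀ ξ ∈ Kc, v ξ ≤ V ξ
  near : ∀ x ∈ Kc, ∃ ξ ∈ Kc, ‖ξ - x‖ ^ 2 ≤ 4 * σ ∧ V x ≤ v ξ
  touch : ∀ x ∈ Kc, ∀ τ < 2 / σ,
    (∀ᶠ h in 𝓝 (0 : En n), V (x + h) ≤ V x + ⟪gV x, h⟫ + τ / 2 * ‖h‖ ^ 2) →
    ∃ ξ ∈ Kc, ‖ξ - x‖ ^ 2 ≤ 2 * σ ∧ ∀ h, ξ + h ∈ Kc → v (ξ + h) - v ξ ≤ V (x + h) - V x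

open Filter Topology in
/-- Lasry–Lions regularization: sup-convolution at parameter `σ` followed by inf-convolution at
parameter `σ / 2`. -/
lemma exists_isReg {n : ℕ} {Kc : Set (En n)} (hK : IsCompact Kc) (hne : Kc.Nonempty)
    {v : En n → ℝ} (hv : ContinuousOn v Kc) (hb : ∀ x ∈ Kc, |v x| ≤ 1) {σ : ℝ} (hσ : 0 < σ) :
    ∃ V gV, IsReg Kc v σ V gV := by
  have hm : ∀ ζ : En n, ∃ m ∈ Kc, ∀ ξ ∈ Kc,
      v ξ - ‖ζ - ξ‖ ^ 2 / (2 * σ) ≤ v m - ‖ζ - m‖ ^ 2 / (2 * σ) := by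
    intro ζ
    have hc : ContinuousOn (fun ξ => v ξ - ‖ζ - ξ‖ ^ 2 / (2 * σ)) Kc :=
      hv.sub (by fun_prop)
    obtain ⟨m, hm, h⟩ := hK.exists_isMaxOn hne hc
    exact ⟨m, hm, fun ξ hξ => h hξ⟩
  choose m hmK hmax using hm
  set S : En n → ℝ := fun ζ => v (m ζ) - ‖ζ - m ζ‖ ^ 2 / (2 * σ) with hS
  have hSge : ∀ ζ, ∀ ξ ∈ Kc, v ξ - ‖ζ - ξ‖ ^ 2 / (2 * σ) ≤ S ζ := hmax
  have hSle : ∀ ζ, S ζ ≤ 1 := fun ζ => by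
    have := (abs_le.1 (hb _ (hmK ζ))).2
    have : 0 ≤ ‖ζ - m ζ‖ ^ 2 / (2 * σ) := by positivity
    simp only [hS]; linarith
  have hSlsc : LowerSemicontinuous S := by
    intro ζ y hy
    have hc : ContinuousAt (fun ζ' => v (m ζ) - ‖ζ' - m ζ‖ ^ 2 / (2 * σ)) ζ := by fun_prop
    filter_upwards [hc.eventually_const_lt (u := y) hy] with ζ' h
    exact lt_of_lt_of_le h (hSge ζ' _ (hmK ζ))
  obtain ⟨ξ0, hξ0⟩ := hne
  have hmin : ∀ x : En n, ∃ ζ, ∀ ζ', S ζ + ‖x - ζ‖ ^ 2 / σ ≤ S ζ' + ‖x - ζ'‖ ^ 2 / σ := by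
    intro x
    set d := ‖x - ξ0‖
    set R := 4 * σ * (2 + 3 * d ^ 2 / (2 * σ)) + 1 with hR
    have hR1 : 1 ≤ R := by
      have : 0 ≤ 4 * σ * (2 + 3 * d ^ 2 / (2 * σ)) := by positivity
      linarith
    have hlsc : LowerSemicontinuousOn (fun ζ => S ζ + ‖x - ζ‖ ^ 2 / σ) (closedBall x R) := by
      have hc : Continuous fun ζ : En n => ‖x - ζ‖ ^ 2 / σ := by fun_prop
      exact (hSlsc.add hc.lowerSemicontinuous).lowerSemicontinuousOn _
    obtain ⟨ζ, hζ, hζm⟩ := hlsc.exists_isMinOn ⟨x, mem_closedBall_self (by linarith)⟩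
      (isCompact_closedBall x R)
    refine ⟨ζ, fun ζ' => ?_⟩
    by_cases hz : ζ' ∈ closedBall x R
    · exact hζm hz
    · have h1 : S ζ + ‖x - ζ‖ ^ 2 / σ ≤ S x + ‖x - x‖ ^ 2 / σ :=
        hζm (mem_closedBall_self (by linarith))
      have h2 := hSle x
      have h3 := hSge ζ' ξ0 hξ0
      have h4 := (abs_le.1 (hb _ hξ0)).1
      have h5 : R < ‖x - ζ'‖ := by
        rw [mem_closedBall, not_le, dist_comm, dist_eq_norm] at hz; exact hz
      set a := ‖x - ζ'‖
      have h6 : ‖ζ' - ξ0‖ ^ 2 ≤ 3 / 2 * a ^ 2 + 3 * d ^ 2 := by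
        have : ‖ζ' - ξ0‖ ≤ a + d := by
          have := norm_sub_le_norm_sub_add_norm_sub ζ' x ξ0
          rwa [norm_sub_rev ζ' x] at this
        have h0 : 0 ≤ ‖ζ' - ξ0‖ := norm_nonneg _
        nlinarith [sq_nonneg (a - 2 * d)]
      have h7 : R < a ^ 2 := by nlinarith
      simp only [sub_self, norm_zero] at h1
      have h8 : ‖ζ' - ξ0‖ ^ 2 / (2 * σ) ≤ (3 / 2 * a ^ 2 + 3 * d ^ 2) / (2 * σ) := by gcongr
      have h9 : 2 + 3 * d ^ 2 / (2 * σ) ≤ a ^ 2 / (4 * σ) := by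
        rw [le_div_iff₀ (by positivity)]; linarith
      have h10 : (3 / 2 * a ^ 2 + 3 * d ^ 2) / (2 * σ) =
        a ^ 2 / σ - a ^ 2 / (4 * σ) + 3 * d ^ 2 / (2 * σ) := by field_simp; ring
      have : (0:ℝ) ^ 2 / σ = 0 := by simp
      linarith
  choose z hz using hmin
  -- strong convexity of the inf-convolution functional
  have hstr : ∀ x ζ', S (z x) + ‖x - z x‖ ^ 2 / σ + ‖z x - ζ'‖ ^ 2 / (4 * σ) ≤
      S ζ' + ‖x - ζ'‖ ^ 2 / σ := by
    intro x ζ'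
    set c := (1/2 : ℝ) • (z x + ζ') with hc
    have h1 := hz x c
    have h2 := hSge (z x) _ (hmK c)
    have h3 := hSge ζ' _ (hmK c)
    have h4 : S c = v (m c) - ‖c - m c‖ ^ 2 / (2 * σ) := rfl
    have h5 := sq_mid (m c) (z x) ζ'
    have h6 := sq_mid x (z x) ζ'
    rw [← hc] at h5 h6
    rw [norm_sub_rev (m c) c, norm_sub_rev (m c) (z x), norm_sub_rev (m c) ζ'] at h5
    rw [h4, h5, h6] at h1
    have e1 : (‖z x - m c‖ ^ 2 / 2 + ‖ζ' - m c‖ ^ 2 / 2 - ‖z x - ζ'‖ ^ 2 / 4) / (2 * σ) =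
      ‖z x - m c‖ ^ 2 / (2 * σ) / 2 + ‖ζ' - m c‖ ^ 2 / (2 * σ) / 2
        - ‖z x - ζ'‖ ^ 2 / (4 * σ) / 2 := by field_simp
    have e2 : (‖x - z x‖ ^ 2 / 2 + ‖x - ζ'‖ ^ 2 / 2 - ‖z x - ζ'‖ ^ 2 / 4) / σ =
      ‖x - z x‖ ^ 2 / σ / 2 + ‖x - ζ'‖ ^ 2 / σ / 2 - ‖z x - ζ'‖ ^ 2 / (4 * σ) := by
      field_simp
    rw [e1, e2] at h1
    linarith
  have hlipz : ∀ x x', ‖z x - z x'‖ ≤ 4 * ‖x - x'‖ := by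
    intro x x'
    have h1 := hstr x (z x')
    have h2 := hstr x' (z x)
    rw [norm_sub_rev (z x') (z x)] at h2
    have h3 := sq_cross x x' (z x) (z x')
    have h4 := real_inner_le_norm (x - x') (z x - z x')
    have h5 : ‖z x - z x'‖ ^ 2 / (4 * σ) * 2 ≤ (2 * ⟪x - x', z x - z x'⟫) / σ := by
      rw [← h3, sub_div, sub_div, add_div]; linarith
    have h6 : ‖z x - z x'‖ ^ 2 ≤ 4 * ⟪x - x', z x - z x'⟫ := by
      rw [le_div_iff₀ hσ] at h5
      have : ‖z x - z x'‖ ^ 2 / (4 * σ) * 2 * σ = ‖z x - z x'‖ ^ 2 / 2 := by field_simp; ring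
      linarith
    by_contra hcon
    push Not at hcon
    nlinarith [norm_nonneg (x - x'), norm_nonneg (z x - z x')]
  set V : En n → ℝ := fun x => S (z x) + ‖x - z x‖ ^ 2 / σ with hV
  set gV : En n → En n := fun x => (2 / σ) • (x - z x) with hgV
  have hVle : ∀ x ζ, V x ≤ S ζ + ‖x - ζ‖ ^ 2 / σ := hz
  have hP : ∀ x x', S (z x) + ‖x' - z x‖ ^ 2 / σ =
      V x + ⟪gV x, x' - x⟫ + ‖x' - x‖ ^ 2 / σ := by
    intro x x'
    rw [sq_shift x x' (z x)]
    simp only [hV, hgV, real_inner_smul_left]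
    field_simp
    ring
  have hup : ∀ x x', V x' ≤ V x + ⟪gV x, x' - x⟫ + ‖x' - x‖ ^ 2 / σ := fun x x' => by
    rw [← hP]; exact hVle x' (z x)
  have hglip : ∀ x x', ‖gV x - gV x'‖ ≤ 10 / σ * ‖x - x'‖ := by
    intro x x'
    have e : gV x - gV x' = (2 / σ) • ((x - x') - (z x - z x')) := by
      simp only [hgV, ← smul_sub]; congr 1; abel
    rw [e, norm_smul, Real.norm_of_nonneg (by positivity)]
    have h1 := norm_sub_le (x - x') (z x - z x')
    have h2 := hlipz x x'
    calc _ ≤ 2 / σ * (5 * ‖x - x'‖) := by gcongr; linarith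
      _ = _ := by ring
  have hge : ∀ x', ∀ ξ ∈ Kc, v ξ - ‖x' - ξ‖ ^ 2 / σ ≤ V x' := by
    intro x' ξ hξ
    have h1 := hSge (z x') ξ hξ
    have h2 := sq_tri (z x') x' ξ
    have h3 : ‖z x' - ξ‖ ^ 2 / (2 * σ) ≤ (2 * ‖x' - z x'‖ ^ 2 + 2 * ‖x' - ξ‖ ^ 2) / (2 * σ) := by
      gcongr
    have h4 : (2 * ‖x' - z x'‖ ^ 2 + 2 * ‖x' - ξ‖ ^ 2) / (2 * σ) =
      ‖x' - z x'‖ ^ 2 / σ + ‖x' - ξ‖ ^ 2 / σ := by field_simp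
    simp only [hV]; linarith
  refine ⟨V, gV, ⟨⟨⟨10 / σ, by positivity⟩, ?_⟩, ⟨11 / σ, by positivity, ?_⟩, ?_, ?_, ?_⟩⟩
  · exact LipschitzWith.of_dist_le_mul fun x y => by
      rw [dist_eq_norm, dist_eq_norm]; exact hglip x y
  · intro x x'
    have h1 := hup x x'
    have h2 := hup x' x
    have h3 : ⟪gV x', x - x'⟫ = - ⟪gV x, x' - x⟫ - ⟪gV x' - gV x, x' - x⟫ := by
      rw [← neg_sub x' x, inner_neg_right, inner_sub_left]; ring
    have h4 : |⟪gV x' - gV x, x' - x⟫| ≤ 10 / σ * ‖x' - x‖ ^ 2 := by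
      refine (abs_real_inner_le_norm _ _).trans ?_
      have := hglip x' x
      nlinarith [norm_nonneg (x' - x)]
    have h5 := (abs_le.1 h4).1
    rw [norm_sub_rev x x'] at h2
    have h6 : 11 / σ * ‖x' - x‖ ^ 2 = 10 / σ * ‖x' - x‖ ^ 2 + ‖x' - x‖ ^ 2 / σ := by ring
    have h7 : 0 ≤ 10 / σ * ‖x' - x‖ ^ 2 := by positivity
    rw [abs_le]; constructor <;> linarith
  · intro ξ hξ
    simpa using hge ξ ξ hξ
  · intro x hx
    have h1 := hVle x x
    have h2 := hSge x x hx
    have h3 : S x = v (m x) - ‖x - m x‖ ^ 2 / (2 * σ) := rfl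
    simp only [sub_self, norm_zero] at h1 h2
    have h4 := abs_le.1 (hb _ (hmK x))
    have h5 := abs_le.1 (hb _ hx)
    have e0 : (0:ℝ) ^ 2 / σ = 0 := by simp
    have e1 : (0:ℝ) ^ 2 / (2 * σ) = 0 := by simp
    have h6 : 0 ≤ ‖x - m x‖ ^ 2 / (2 * σ) := by positivity
    refine ⟨m x, hmK x, ?_, by linarith⟩
    have h7 : ‖x - m x‖ ^ 2 / (2 * σ) ≤ 2 := by linarith
    rw [div_le_iff₀ (by positivity)] at h7
    rw [norm_sub_rev]; linarith
  · intro x hx τ hτ hev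
    set ξ := m (z x) with hξ
    set x1 := (1/2 : ℝ) • (z x + ξ) with hx1
    -- `V` and its upper paraboloid agree at the midpoint `x1` of `z x` and `ξ`
    have hSz : S (z x) = v ξ - ‖z x - ξ‖ ^ 2 / (2 * σ) := rfl
    have n1 : ‖x1 - z x‖ ^ 2 = ‖z x - ξ‖ ^ 2 / 4 := by
      have := sq_mid (z x) (z x) ξ
      rw [← hx1, norm_sub_rev] at this
      simp at this; rw [this]; ring
    have n2 : ‖x1 - ξ‖ ^ 2 = ‖z x - ξ‖ ^ 2 / 4 := by
      have := sq_mid ξ (z x) ξ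
      rw [← hx1, norm_sub_rev, norm_sub_rev ξ (z x)] at this
      simp at this; rw [this]; ring
    have hPx1 : S (z x) + ‖x1 - z x‖ ^ 2 / σ = v ξ - ‖x1 - ξ‖ ^ 2 / σ := by
      rw [hSz, n1, n2]; field_simp; ring
    have hVx1 : S (z x) + ‖x1 - z x‖ ^ 2 / σ ≤ V x1 := by
      rw [hPx1]; exact hge x1 ξ (hmK _)
    set d := x1 - x with hd
    have hseg : ∀ t ∈ Icc (0:ℝ) 1, S (z x) + ‖x + t • d - z x‖ ^ 2 / σ ≤ V (x + t • d) := by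
      intro t ht
      set y := z (x + t • d) with hy
      have a1 := hVle x y
      have a2 := hVle x1 y
      have key : ‖x + t • d - y‖ ^ 2 - ‖x + t • d - z x‖ ^ 2 =
          (1 - t) * (‖x - y‖ ^ 2 - ‖x - z x‖ ^ 2) + t * (‖x1 - y‖ ^ 2 - ‖x1 - z x‖ ^ 2) := by
        have c1 : ‖x + t • d - y‖ ^ 2 = ‖x - y‖ ^ 2 + 2 * ⟪x - y, t • d⟫ + ‖t • d‖ ^ 2 := by
          have := sq_shift x (x + t • d) y; simpa using this
        have c2 : ‖x + t • d - z x‖ ^ 2 = ‖x - z x‖ ^ 2 + 2 * ⟪x - z x, t • d⟫ + ‖t • d‖ ^ 2 := by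
          have := sq_shift x (x + t • d) (z x); simpa using this
        have c3 := sq_shift x x1 y
        have c4 := sq_shift x x1 (z x)
        rw [c1, c2, c3, c4, real_inner_smul_right, real_inner_smul_right]
        ring
      have b1 : 0 ≤ S y - S (z x) + (‖x - y‖ ^ 2 - ‖x - z x‖ ^ 2) / σ := by
        have : V x = S (z x) + ‖x - z x‖ ^ 2 / σ := rfl
        rw [sub_div]; linarith
      have b2 : 0 ≤ S y - S (z x) + (‖x1 - y‖ ^ 2 - ‖x1 - z x‖ ^ 2) / σ := by
        rw [sub_div]; linarith
      have b3 : 0 ≤ S y - S (z x) + (‖x + t • d - y‖ ^ 2 - ‖x + t • d - z x‖ ^ 2) / σ := by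
        rw [key]
        have := add_nonneg (mul_nonneg (sub_nonneg.2 ht.2) b1) (mul_nonneg ht.1 b2)
        refine this.trans_eq ?_
        field_simp; ring
      have : V (x + t • d) = S y + ‖x + t • d - y‖ ^ 2 / σ := rfl
      rw [this]
      rw [sub_div] at b3; linarith
    have hd0 : d = 0 := by
      by_contra hne
      have hdpos : 0 < ‖d‖ ^ 2 := by positivity
      have htend : Tendsto (fun t : ℝ => t • d) (𝓝[>] 0) (𝓝 0) := by
        have : Continuous fun t : ℝ => t • d := by fun_prop
        have := this.tendsto 0
        rw [zero_smul] at this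
        exact this.mono_left nhdsWithin_le_nhds
      have hI : Ioc (0:ℝ) 1 ∈ 𝓝[>] (0:ℝ) := Ioc_mem_nhdsGT one_pos
      obtain ⟨t, ht1, ht2⟩ := ((htend.eventually hev).and hI).exists
      have h1 := hseg t ⟨ht2.1.le, ht2.2⟩
      rw [hP] at h1
      simp only [add_sub_cancel_left] at h1
      have h2 : ‖t • d‖ ^ 2 / σ ≤ τ / 2 * ‖t • d‖ ^ 2 := by linarith
      have h3 : 0 < ‖t • d‖ ^ 2 := by
        have : t • d ≠ 0 := smul_ne_zero ht2.1.ne' hne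
        positivity
      have h4 : 1 / σ ≤ τ / 2 := by
        rw [div_eq_mul_one_div, mul_comm] at h2
        exact le_of_mul_le_mul_right h2 h3
      have : 2 / σ = 2 * (1 / σ) := by ring
      linarith
    have hxx : x1 = x := sub_eq_zero.1 hd0
    have hVx : V x = v ξ - ‖x - ξ‖ ^ 2 / σ := by
      rw [← hxx, ← hPx1, hxx]
    refine ⟨ξ, hmK _, ?_, ?_⟩
    · have h1 := hge x x hx
      simp only [sub_self, norm_zero] at h1
      have h4 := abs_le.1 (hb _ (hmK (z x)))
      have h5 := abs_le.1 (hb _ hx)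
      have e0 : (0:ℝ) ^ 2 / σ = 0 := by simp
      have h7 : ‖x - ξ‖ ^ 2 / σ ≤ 2 := by linarith
      rw [div_le_iff₀ hσ] at h7
      rwa [norm_sub_rev]
    · intro h hh
      have := hge (x + h) (ξ + h) hh
      rw [add_sub_add_right_eq_sub] at this
      linarith

/-! ### The Jensen lemma and the penalization -/

/-- The Euclidean pairing on `ℝⁿ × ℝⁿ`. -/
def pr {n : ℕ} (p h : En n × En n) : ℝ := ⟪p.1, h.1⟫ + ⟪p.2, h.2⟫

lemma pr_add {n : ℕ} (p h k : En n × En n) : pr p (h + k) = pr p h + pr p k := by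
  simp [pr, inner_add_right]; ring

lemma pr_sub {n : ℕ} (p h k : En n × En n) : pr p (h - k) = pr p h - pr p k := by
  simp [pr, inner_sub_right]; ring

lemma pr_abs_le {n : ℕ} (p h : En n × En n) : |pr p h| ≤ 2 * ‖p‖ * ‖h‖ := by
  have h1 := abs_real_inner_le_norm p.1 h.1
  have h2 := abs_real_inner_le_norm p.2 h.2
  have h3 : ‖p.1‖ * ‖h.1‖ ≤ ‖p‖ * ‖h‖ := by gcongr; exacts [norm_fst_le p, norm_fst_le h]
  have h4 : ‖p.2‖ * ‖h.2‖ ≤ ‖p‖ * ‖h‖ := by gcongr; exacts [norm_snd_le p, norm_snd_le h]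
  have := abs_add_le ⟪p.1, h.1⟫ ⟪p.2, h.2⟫
  unfold pr; linarith

lemma pr_continuous {n : ℕ} (p : En n × En n) : Continuous (pr p) := by
  unfold pr; fun_prop

/-- A vector whose pairing with every `h` of norm at most `t` is at most `a * t` has norm at
most `a`. -/
lemma norm_le_of_pr {n : ℕ} {q : En n × En n} {a t : ℝ} (ht : 0 < t) (ha : 0 ≤ a)
    (h : ∀ h, ‖h‖ ≤ t → pr q h ≤ a * t) : ‖q‖ ≤ a := by
  have one : ∀ w : En n, (∀ k : En n, ‖k‖ ≤ t → ⟪w, k⟫ ≤ a * t) → ‖w‖ ≤ a := by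
    intro w hw
    by_cases h0 : w = 0
    · simpa [h0] using ha
    have hpos : 0 < ‖w‖ := norm_pos_iff.2 h0
    have := hw ((t / ‖w‖) • w) (by
      rw [norm_smul, Real.norm_of_nonneg (by positivity)]; field_simp; exact le_rfl)
    rw [real_inner_smul_right, real_inner_self_eq_norm_sq] at this
    have e : t / ‖w‖ * ‖w‖ ^ 2 = ‖w‖ * t := by field_simp
    rw [e] at this
    exact le_of_mul_le_mul_right this ht
  rw [Prod.norm_def]
  refine max_le (one _ fun k hk => ?_) (one _ fun k hk => ?_)
  · simpa [pr] using h (k, 0) (by simpa using hk)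
  · simpa [pr] using h (0, k) (by simpa using hk)

open Filter Topology MeasureTheory in
/-- Jensen's lemma for semiconvex functions: the set of points of contact from above with
affine functions of slope less than `r` cannot be contained in a null set, because the slope is a
Lipschitz function of the contact point and all slopes in a ball occur. -/
lemma jensen {n : ℕ} {Q : Set (En n × En n)} (hQ : IsCompact Q) (hne : Q.Nonempty)
    {Ψ : En n × En n → ℝ} (hΨ : ContinuousOn Ψ Q) {r ρ C : ℝ} (hr : 0 < r) (hρ : 0 < ρ)
    (hC : 0 ≤ C)
    (hct : ∀ p z, ‖p‖ < r → z ∈ Q → (∀ w ∈ Q, Ψ w - pr p w ≤ Ψ z - pr p z) →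
      closedBall z ρ ⊆ Q ∧ ∀ h, Ψ z + pr p h - C * ‖h‖ ^ 2 ≤ Ψ (z + h))
    {N : Set (En n × En n)}
    (hN : (μH[(Module.finrank ℝ (En n × En n) : ℝ)] : Measure (En n × En n)) N = 0) :
    ∃ p z, ‖p‖ < r ∧ z ∈ Q ∧ z ∉ N ∧ ∀ w ∈ Q, Ψ w - pr p w ≤ Ψ z - pr p z := by
  by_contra hcon
  push Not at hcon
  set Z : Set (En n × En n) := {z | z ∈ Q ∧ ∃ p, ‖p‖ < r ∧
    ∀ w ∈ Q, Ψ w - pr p w ≤ Ψ z - pr p z} with hZ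
  have hZN : Z ⊆ N := by
    rintro z ⟨hz, p, hp, hm⟩
    by_contra hzN
    obtain ⟨w, hw, hlt⟩ := hcon p z hp hz hzN
    exact absurd (hm w hw) (not_le.2 hlt)
  have hex : ∀ z, ∃ p, z ∈ Z → ‖p‖ < r ∧ ∀ w ∈ Q, Ψ w - pr p w ≤ Ψ z - pr p z := by
    intro z
    by_cases hz : z ∈ Z
    · obtain ⟨p, hp⟩ := hz.2; exact ⟨p, fun _ => hp⟩
    · exact ⟨0, fun h => absurd h hz⟩
  choose P hP using hex
  -- any two contact slopes are comparable to the distance of the contact points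
  have hl : ∀ z z' p p', z ∈ Q → z' ∈ Q → ‖p‖ < r → ‖p'‖ < r →
      (∀ w ∈ Q, Ψ w - pr p w ≤ Ψ z - pr p z) → (∀ w ∈ Q, Ψ w - pr p' w ≤ Ψ z' - pr p' z') →
      z ≠ z' → ‖p' - p‖ ≤ (2 * C + 2 * r / ρ) * ‖z' - z‖ := by
    intro z z' p p' hz hz' hp hp' hm hm' hzz
    have hd : 0 < ‖z' - z‖ := norm_pos_iff.2 (sub_ne_zero.2 hzz.symm)
    have hr2 : 0 ≤ 2 * r / ρ := by positivity
    by_cases hle : ‖z' - z‖ ≤ ρ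
    · have : ‖p' - p‖ ≤ 2 * C * ‖z' - z‖ := by
        refine norm_le_of_pr hd (by positivity) fun h hh => ?_
        obtain ⟨hb, hlow⟩ := hct p' z' hp' hz' hm'
        obtain ⟨-, hlow2⟩ := hct p z hp hz hm
        have a1 := hlow h
        have a2 := hm (z' + h) (hb (by simp [mem_closedBall]; linarith))
        have a3 := hlow2 (z' - z)
        rw [add_sub_cancel] at a3
        rw [pr_add] at a2
        rw [pr_sub] at a3
        have a4 : pr (p' - p) h = pr p' h - pr p h := by
          simp [pr, inner_sub_left]; ring
        have a5 : C * ‖h‖ ^ 2 ≤ C * ‖z' - z‖ ^ 2 := by gcongr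
        rw [a4]; nlinarith
      nlinarith
    · push Not at hle
      have h1 : ‖p' - p‖ ≤ 2 * r := (norm_sub_le _ _).trans (by linarith)
      have h2 : 2 * r ≤ 2 * r / ρ * ‖z' - z‖ := by
        rw [div_mul_eq_mul_div, le_div_iff₀ hρ]; gcongr
      nlinarith
  have hLip : LipschitzOnWith (⟨2 * C + 2 * r / ρ, by positivity⟩ : NNReal) P Z := by
    refine LipschitzOnWith.of_dist_le_mul fun z hz z' hz' => ?_
    by_cases h : z = z'
    · subst h; simp
    · rw [dist_comm, dist_comm z z', dist_eq_norm, dist_eq_norm]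
      exact hl z z' _ _ hz.1 hz'.1 (hP z hz).1 (hP z' hz').1 (hP z hz).2 (hP z' hz').2 h
  have himg : ball (0 : En n × En n) r ⊆ P '' Z := by
    intro p hp
    rw [mem_ball_zero_iff] at hp
    obtain ⟨z, hz, hm⟩ := hQ.exists_isMaxOn hne
      (f := fun w => Ψ w - pr p w) (hΨ.sub (pr_continuous p).continuousOn)
    have hzZ : z ∈ Z := ⟨hz, p, hp, fun w hw => hm hw⟩
    refine ⟨z, hzZ, ?_⟩
    have h1 := hP z hzZ
    -- the slope at a contact point is unique
    obtain ⟨hb, hlow⟩ := hct p z hp hz fun w hw => hm hw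
    have h0 : ∀ t, 0 < t → t ≤ ρ → ‖p - P z‖ ≤ C * t := by
      intro t ht htρ
      refine norm_le_of_pr ht (by positivity) fun h hh => ?_
      have a1 := hlow h
      have a2 := h1.2 (z + h) (hb (by simp [mem_closedBall]; linarith))
      rw [pr_add] at a2
      have a4 : pr (p - P z) h = pr p h - pr (P z) h := by
        simp [pr, inner_sub_left]; ring
      have a5 : C * ‖h‖ ^ 2 ≤ C * t ^ 2 := by gcongr
      rw [a4]; nlinarith
    have h2 : ‖p - P z‖ ≤ 0 := by
      refine le_of_forall_pos_le_add fun ε hε => ?_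
      have h3 := h0 (min ρ (ε / (C + 1))) (by positivity) (min_le_left _ _)
      have h4 : C * min ρ (ε / (C + 1)) ≤ (C + 1) * (ε / (C + 1)) := by
        gcongr
        · linarith
        · exact min_le_right _ _
      have h5 : (C + 1) * (ε / (C + 1)) = ε := by field_simp
      linarith
    exact (sub_eq_zero.1 (norm_le_zero_iff.1 h2)).symm
  have hm := hLip.hausdorffMeasure_image_le
    (d := (Module.finrank ℝ (En n × En n) : ℝ)) (by positivity)
  rw [measure_mono_null hZN hN, mul_zero] at hm
  have hpos := Metric.measure_ball_pos
    (μH[(Module.finrank ℝ (En n × En n) : ℝ)] : Measure (En n × En n)) 0 hr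
  exact absurd (hpos.trans_le ((measure_mono himg).trans hm)) (lt_irrefl _)

/-- The modulus `s - s^(1+κ)/4` of the doubling argument. -/
def om (κ s : ℝ) : ℝ := s - s ^ (1 + κ) / 4

/-- The derivative of `om κ`. -/
def om' (κ s : ℝ) : ℝ := 1 - (1 + κ) / 4 * s ^ κ

lemma om'_bounds {κ s : ℝ} (hκ : κ ∈ Ioo (0:ℝ) 1) (hs : 0 ≤ s) (hs1 : s ≤ 1) :
    1 / 2 ≤ om' κ s ∧ om' κ s ≤ 1 := by
  have h1 : s ^ κ ≤ 1 := Real.rpow_le_one hs hs1 hκ.1.le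
  have h0 : 0 ≤ s ^ κ := Real.rpow_nonneg hs κ
  unfold om'
  have := hκ.1; have := hκ.2
  constructor <;> nlinarith

lemma om_nonneg {κ s : ℝ} (hκ : κ ∈ Ioo (0:ℝ) 1) (hs : 0 ≤ s) (hs1 : s ≤ 1) : 0 ≤ om κ s := by
  have : s ^ (1 + κ) ≤ s ^ (1:ℝ) := Real.rpow_le_rpow_of_exponent_ge' hs hs1 (by norm_num)
    (by linarith [hκ.1])
  rw [Real.rpow_one] at this
  unfold om; linarith

lemma om_le {κ s : ℝ} (hs : 0 ≤ s) : om κ s ≤ s := by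
  have := Real.rpow_nonneg hs (1 + κ)
  unfold om; linarith

/-- Concavity of `om κ`: it lies below its tangents. -/
lemma om_tangent {κ s t : ℝ} (hκ : κ ∈ Ioo (0:ℝ) 1) (hs : 0 < s) (ht : 0 ≤ t) :
    om κ t ≤ om κ s + om' κ s * (t - s) := by
  have h := one_add_mul_self_le_rpow_one_add (s := t / s - 1) (p := 1 + κ)
    (by have : 0 ≤ t / s := by positivity
        linarith) (by linarith [hκ.1])
  have e : (1 + (t / s - 1)) = t / s := by ring
  rw [e, Real.div_rpow ht hs.le, le_div_iff₀ (Real.rpow_pos_of_pos hs _)] at h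
  have e2 : s ^ (1 + κ) = s * s ^ κ := by rw [Real.rpow_add hs, Real.rpow_one]
  have e3 : (1 + (1 + κ) * (t / s - 1)) * s ^ (1 + κ) =
      s ^ (1 + κ) + (1 + κ) * s ^ κ * (t - s) := by
    rw [e2]; field_simp
  rw [e3] at h
  unfold om om'
  nlinarith

open Filter Topology in
/-- Second-order expansion of `om κ` from above. The quadratic coefficient is negative, which is
what makes the doubling argument work. -/
lemma om_taylor {κ s ε : ℝ} (hs : 0 < s) (hε : 0 < ε) :
    ∀ᶠ τ in 𝓝 (0:ℝ), om κ (s + τ) ≤ om κ s + om' κ s * τ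
      - κ * (1 + κ) / 4 * s ^ (κ - 1) * τ ^ 2 / 2 + ε * τ ^ 2 := by
  have hd : ∀ x : ℝ, 0 < x → HasDerivAt (om κ) (om' κ x) x := by
    intro x hx
    have := (hasDerivAt_id x).sub
      ((Real.hasDerivAt_rpow_const (p := 1 + κ) (Or.inl hx.ne')).div_const 4)
    have e : (1 + κ - 1) = κ := by ring
    rw [e] at this
    refine this.congr_deriv ?_
    unfold om'; ring
  have hd' : HasDerivAt (om' κ) (-(κ * (1 + κ) / 4 * s ^ (κ - 1))) s := by
    have := ((Real.hasDerivAt_rpow_const (p := κ) (Or.inl hs.ne')).const_mul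
      ((1 + κ) / 4)).const_sub 1
    refine this.congr_deriv ?_
    ring
  have h := taylor2 (V := om κ) (g := fun x => om' κ x • ContinuousLinearMap.id ℝ ℝ)
    (A := (ContinuousLinearMap.id ℝ ℝ).smulRight
      ((-(κ * (1 + κ) / 4 * s ^ (κ - 1))) • ContinuousLinearMap.id ℝ ℝ)) (x := s) ?_ ?_ hε
  · filter_upwards [h] with τ hτ
    have := (abs_le.1 hτ).2
    simp at this
    nlinarith
  · filter_upwards [lt_mem_nhds hs] with x hx
    refine (hd x hx).hasFDerivAt.congr_fderiv ?_
    ext; simp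
  · have := hd'.smul_const (ContinuousLinearMap.id ℝ ℝ)
    refine this.hasFDerivAt.congr_fderiv ?_
    ext; simp

/-- The penalization `L ω(|x - y|) + K|x - z₀|² + K|y - z₀|²`. -/
def phi {n : ℕ} (κ L K : ℝ) (z0 x y : En n) : ℝ :=
  L * om κ ‖x - y‖ + K * ‖x - z0‖ ^ 2 + K * ‖y - z0‖ ^ 2

lemma sq_add {n : ℕ} (x h z : En n) :
    ‖x + h - z‖ ^ 2 = ‖x - z‖ ^ 2 + 2 * ⟪x - z, h⟫ + ‖h‖ ^ 2 := by
  have : x + h - z = (x - z) + h := by abel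
  rw [this, norm_add_sq_real]

/-- Second-order upper bound for the penalization in all directions; the quadratic term in
`h₁ - h₂` vanishes on the diagonal `h₁ = h₂`. -/
lemma phi_upper {n : ℕ} {κ L K : ℝ} (hκ : κ ∈ Ioo (0:ℝ) 1) (hL : 0 ≤ L) {z0 x y : En n}
    (hs : 0 < ‖x - y‖) (hs1 : ‖x - y‖ ≤ 1) (h₁ h₂ : En n) :
    phi κ L K z0 (x + h₁) (y + h₂) ≤ phi κ L K z0 x y
      + ⟪(L * om' κ ‖x - y‖ / ‖x - y‖) • (x - y) + (2 * K) • (x - z0), h₁⟫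
      + ⟪-(L * om' κ ‖x - y‖ / ‖x - y‖) • (x - y) + (2 * K) • (y - z0), h₂⟫
      + L / (2 * ‖x - y‖) * ‖h₁ - h₂‖ ^ 2 + K * ‖h₁‖ ^ 2 + K * ‖h₂‖ ^ 2 := by
  set s := ‖x - y‖ with hsdef
  have hb := om'_bounds hκ hs.le hs1
  have e0 : x + h₁ - (y + h₂) = (x - y) + (h₁ - h₂) := by abel
  set w := ‖x - y + (h₁ - h₂)‖ with hw
  have h1 := om_tangent (t := w) hκ hs (norm_nonneg _)
  have h2 : w ^ 2 = s ^ 2 + 2 * ⟪x - y, h₁ - h₂⟫ + ‖h₁ - h₂‖ ^ 2 := norm_add_sq_real _ _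
  have h3 : w - s ≤ ⟪x - y, h₁ - h₂⟫ / s + ‖h₁ - h₂‖ ^ 2 / (2 * s) := by
    have : w * (2 * s) ≤ w ^ 2 + s ^ 2 := by nlinarith [sq_nonneg (w - s)]
    have e : ⟪x - y, h₁ - h₂⟫ / s + ‖h₁ - h₂‖ ^ 2 / (2 * s) =
      (2 * ⟪x - y, h₁ - h₂⟫ + ‖h₁ - h₂‖ ^ 2) / (2 * s) := by field_simp
    rw [e, le_div_iff₀ (by positivity)]
    nlinarith
  have h4 : om' κ s * (w - s) ≤ om' κ s * (⟪x - y, h₁ - h₂⟫ / s) + ‖h₁ - h₂‖ ^ 2 / (2 * s) := by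
    have a : om' κ s * (w - s) ≤
        om' κ s * (⟪x - y, h₁ - h₂⟫ / s + ‖h₁ - h₂‖ ^ 2 / (2 * s)) :=
      mul_le_mul_of_nonneg_left h3 (by linarith)
    have b : om' κ s * (‖h₁ - h₂‖ ^ 2 / (2 * s)) ≤ 1 * (‖h₁ - h₂‖ ^ 2 / (2 * s)) := by
      gcongr; exact hb.2
    rw [mul_add] at a; linarith
  have h5 : L * om κ w ≤ L * (om κ s + om' κ s * (⟪x - y, h₁ - h₂⟫ / s)
      + ‖h₁ - h₂‖ ^ 2 / (2 * s)) := by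
    gcongr; linarith
  unfold phi
  rw [e0, ← hw, sq_add, sq_add]
  simp only [inner_add_left, real_inner_smul_left, inner_sub_right] at h5 ⊢
  refine le_trans (add_le_add_left (add_le_add_left h5 _) _) (le_of_eq ?_)
  ring

open Filter Topology in
/-- Along the direction `(x - y, y - x)` the strict concavity of `om κ` gives a quadratic bound
with a large negative coefficient. -/
lemma phi_upper_dir {n : ℕ} {κ L K : ℝ} (hL : 0 ≤ L) {z0 x y : En n}
    (hs : 0 < ‖x - y‖) {ε : ℝ} (hε : 0 < ε) :
    ∀ᶠ t in 𝓝 (0:ℝ), phi κ L K z0 (x + t • (‖x - y‖⁻¹ • (x - y)))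
      (y + t • (-(‖x - y‖⁻¹ • (x - y)))) ≤ phi κ L K z0 x y
      + ⟪(L * om' κ ‖x - y‖ / ‖x - y‖) • (x - y) + (2 * K) • (x - z0),
        t • (‖x - y‖⁻¹ • (x - y))⟫
      + ⟪-(L * om' κ ‖x - y‖ / ‖x - y‖) • (x - y) + (2 * K) • (y - z0),
        t • (-(‖x - y‖⁻¹ • (x - y)))⟫
      + (2 * K - L * (κ * (1 + κ) / 2 * ‖x - y‖ ^ (κ - 1)) + ε) * t ^ 2 := by
  set s := ‖x - y‖ with hsdef
  set e := s⁻¹ • (x - y) with he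
  have hxy : x - y = s • e := by rw [he, smul_smul, mul_inv_cancel₀ hs.ne', one_smul]
  have hne : ‖e‖ = 1 := by
    rw [he, norm_smul, norm_inv, Real.norm_of_nonneg hs.le, ← hsdef, inv_mul_cancel₀ hs.ne']
  have hee : ⟪e, e⟫ = 1 := by rw [real_inner_self_eq_norm_sq, hne]; norm_num
  have hxe : ⟪x - y, e⟫ = s := by rw [hxy, real_inner_smul_left, hee, mul_one]
  have ht : Tendsto (fun t : ℝ => 2 * t) (𝓝 0) (𝓝 0) := by
    have : Continuous fun t : ℝ => 2 * t := by fun_prop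
    simpa using this.tendsto 0
  have h1 := ht.eventually (om_taylor (κ := κ) hs (ε := ε / (4 * (L + 1))) (by positivity))
  have h2 : ∀ᶠ t in 𝓝 (0:ℝ), 0 < s + 2 * t := by
    filter_upwards [ht.eventually (lt_mem_nhds (a := -s) (by linarith))] with t ht; linarith
  filter_upwards [h1, h2] with t h1 h2
  have e0 : x + t • e - (y + t • (-e)) = (s + 2 * t) • e := by
    have : x + t • e - (y + t • (-e)) = (x - y) + (2 * t) • e := by module
    rw [this, add_smul, ← hxy]
  have e1 : ‖x + t • e - (y + t • (-e))‖ = s + 2 * t := by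
    rw [e0, norm_smul, hne, mul_one, Real.norm_of_nonneg h2.le]
  have h3 : L * om κ (s + 2 * t) ≤ L * (om κ s + om' κ s * (2 * t)
    - κ * (1 + κ) / 4 * s ^ (κ - 1) * (2 * t) ^ 2 / 2) + ε * t ^ 2 := by
    have a : L * om κ (s + 2 * t) ≤ _ := mul_le_mul_of_nonneg_left h1 hL
    have b : L * (ε / (4 * (L + 1)) * (2 * t) ^ 2) ≤ ε * t ^ 2 := by
      have : L * (ε / (4 * (L + 1)) * (2 * t) ^ 2) = (L / (L + 1)) * (ε * t ^ 2) := by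
        field_simp; ring
      rw [this]
      refine mul_le_of_le_one_left (by positivity) ?_
      rw [div_le_one (by positivity)]; linarith
    rw [mul_add] at a; linarith
  unfold phi
  rw [e1, sq_add, sq_add]
  have n1 : ‖t • e‖ ^ 2 = t ^ 2 := by rw [norm_smul, hne, mul_one, Real.norm_eq_abs, sq_abs]
  have n2 : ‖t • (-e)‖ ^ 2 = t ^ 2 := by
    rw [norm_smul, norm_neg, hne, mul_one, Real.norm_eq_abs, sq_abs]
  rw [n1, n2]
  have i1 : ⟪(L * om' κ s / s) • (x - y) + (2 * K) • (x - z0), t • e⟫ =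
      L * om' κ s * t + 2 * K * ⟪x - z0, t • e⟫ := by
    rw [inner_add_left, real_inner_smul_left, real_inner_smul_left, real_inner_smul_right, hxe]
    field_simp
  have i2 : ⟪-(L * om' κ s / s) • (x - y) + (2 * K) • (y - z0), t • (-e)⟫ =
      L * om' κ s * t + 2 * K * ⟪y - z0, t • (-e)⟫ := by
    rw [inner_add_left, real_inner_smul_left, real_inner_smul_left, real_inner_smul_right,
      inner_neg_right, hxe]
    field_simp
  rw [i1, i2]
  refine le_trans (add_le_add_left (add_le_add_left h3 _) _) (le_of_eq ?_)
  ring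

/-! ### Second-order conditions at contact points -/

open Filter Topology in
lemma IsReg.hasFDerivAt {n : ℕ} {Kc : Set (En n)} {v : En n → ℝ} {σ : ℝ} {V : En n → ℝ}
    {gV : En n → En n} (h : IsReg Kc v σ V gV) (x : En n) :
    HasFDerivAt V (innerSL ℝ (gV x)) x := by
  obtain ⟨C, hC, hq⟩ := h.grad
  rw [hasFDerivAt_iff_isLittleO, Asymptotics.isLittleO_iff]
  intro c hc
  filter_upwards [Metric.ball_mem_nhds x (show 0 < c / (C + 1) by positivity)] with x' hx'
  rw [mem_ball, dist_eq_norm, lt_div_iff₀ (by positivity)] at hx'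
  rw [Real.norm_eq_abs, innerSL_apply_apply]
  refine (hq x x').trans ?_
  nlinarith [norm_nonneg (x' - x)]

open Filter Topology in
/-- At a point where the gradient of the regularization is differentiable, the regularization has
a second-order expansion. Such points have full measure by Rademacher. -/
lemma IsReg.second_order {n : ℕ} {Kc : Set (En n)} {v : En n → ℝ} {σ : ℝ} {V : En n → ℝ}
    {gV : En n → En n} (h : IsReg Kc v σ V gV) {x : En n} (hd : DifferentiableAt ℝ gV x) :
    ∃ A : En n →L[ℝ] En n →L[ℝ] ℝ, ∀ ε > 0, ∀ᶠ h in 𝓝 (0 : En n),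
      |V (x + h) - V x - ⟪gV x, h⟫ - A h h / 2| ≤ ε * ‖h‖ ^ 2 := by
  refine ⟨(innerSL ℝ).comp (fderiv ℝ gV x), fun ε hε => ?_⟩
  have h2 : HasFDerivAt (fun x' => innerSL ℝ (gV x')) ((innerSL ℝ).comp (fderiv ℝ gV x)) x :=
    HasFDerivAt.comp x (f := gV) (innerSL ℝ).hasFDerivAt hd.hasFDerivAt
  exact taylor2 (g := fun x' => innerSL ℝ (gV x'))
    (Eventually.of_forall fun x' => h.hasFDerivAt x') h2 hε

/-- Comparison of quadratic coefficients up to `o(t²)`. -/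
lemma le_of_quad {a b : ℝ} (h : ∀ ε > 0, ∃ t > 0, t ^ 2 * a ≤ t ^ 2 * b + ε * t ^ 2) : a ≤ b := by
  refine le_of_forall_pos_le_add fun ε hε => ?_
  obtain ⟨t, ht, h⟩ := h ε hε
  have : t ^ 2 * a ≤ t ^ 2 * (b + ε) := by linarith
  exact le_of_mul_le_mul_left this (by positivity)

lemma om_continuous {κ : ℝ} (hκ : 0 < κ) : Continuous (om κ) := by
  have : Continuous fun s : ℝ => s ^ (1 + κ) := Real.continuous_rpow_const (by linarith)
  unfold om; fun_prop

lemma small_of_sq {a : ℝ} (h : 200 * a ^ 2 ≤ 2) : a ≤ 1 / 10 := by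
  nlinarith

open Filter Topology in
/-- Second-order conditions at a contact point of the doubled function. -/
lemma contact_second_order {n : ℕ} {κ L K : ℝ} (hκ : κ ∈ Ioo (0:ℝ) 1) (hL : 0 ≤ L)
    {V₁ V₂ : En n → ℝ} {g₁ g₂ : En n} {A B : En n →L[ℝ] En n →L[ℝ] ℝ} {z0 x y p₁ p₂ : En n}
    (hs : 0 < ‖x - y‖) (hs1 : ‖x - y‖ ≤ 1)
    (hA : ∀ ε > 0, ∀ᶠ h in 𝓝 (0 : En n),
      |V₁ (x + h) - V₁ x - ⟪g₁, h⟫ - A h h / 2| ≤ ε * ‖h‖ ^ 2)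
    (hB : ∀ ε > 0, ∀ᶠ h in 𝓝 (0 : En n),
      |V₂ (y + h) - V₂ y - ⟪g₂, h⟫ - B h h / 2| ≤ ε * ‖h‖ ^ 2)
    (hg₁ : g₁ = (L * om' κ ‖x - y‖ / ‖x - y‖) • (x - y) + (2 * K) • (x - z0) + p₁)
    (hg₂ : g₂ = -(L * om' κ ‖x - y‖ / ‖x - y‖) • (x - y) + (2 * K) • (y - z0) + p₂)
    (hmax : ∀ᶠ h in 𝓝 (0 : En n × En n), V₁ (x + h.1) + V₂ (y + h.2)
      - phi κ L K z0 (x + h.1) (y + h.2) - (⟪p₁, h.1⟫ + ⟪p₂, h.2⟫) ≤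
      V₁ x + V₂ y - phi κ L K z0 x y) :
    (∀ h, A h h ≤ (L / ‖x - y‖ + 2 * K) * ‖h‖ ^ 2) ∧
    (∀ h, B h h ≤ (L / ‖x - y‖ + 2 * K) * ‖h‖ ^ 2) ∧
    (∀ h, A h h + B h h ≤ 4 * K * ‖h‖ ^ 2) ∧
    A (‖x - y‖⁻¹ • (x - y)) (‖x - y‖⁻¹ • (x - y)) + B (‖x - y‖⁻¹ • (x - y)) (‖x - y‖⁻¹ • (x - y))
      ≤ 4 * K - L * (κ * (1 + κ) * ‖x - y‖ ^ (κ - 1)) := by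
  have htend : ∀ h : En n, Tendsto (fun t : ℝ => t • h) (𝓝[>] 0) (𝓝 0) := by
    intro h
    have : Continuous fun t : ℝ => t • h := by fun_prop
    have := this.tendsto 0
    rw [zero_smul] at this
    exact this.mono_left nhdsWithin_le_nhds
  -- second-order inequality along the direction `(h, k)`
  have dir : ∀ h k : En n, ∀ b : ℝ, (∀ ε > 0, ∀ᶠ t in 𝓝[>] (0:ℝ),
      phi κ L K z0 (x + t • h) (y + t • k) ≤ phi κ L K z0 x y
      + ⟪(L * om' κ ‖x - y‖ / ‖x - y‖) • (x - y) + (2 * K) • (x - z0), t • h⟫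
      + ⟪-(L * om' κ ‖x - y‖ / ‖x - y‖) • (x - y) + (2 * K) • (y - z0), t • k⟫
      + (b / 2 + ε) * t ^ 2) → A h h + B k k ≤ b := by
    intro h k b hphi
    refine le_of_quad fun ε hε => ?_
    set ε' := ε / (2 * (1 + ‖h‖ ^ 2 + ‖k‖ ^ 2)) with hε'
    have hε'0 : 0 < ε' := by positivity
    have hm : ∀ᶠ t in 𝓝[>] (0:ℝ), V₁ (x + t • h) + V₂ (y + t • k)
      - phi κ L K z0 (x + t • h) (y + t • k) - (⟪p₁, t • h⟫ + ⟪p₂, t • k⟫) ≤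
      V₁ x + V₂ y - phi κ L K z0 x y := by
      have : Tendsto (fun t : ℝ => (t • h, t • k)) (𝓝[>] 0) (𝓝 (0 : En n × En n)) :=
        (htend h).prodMk_nhds (htend k)
      exact this.eventually hmax
    have hpos : ∀ᶠ t in 𝓝[>] (0:ℝ), 0 < t := eventually_mem_nhdsWithin
    obtain ⟨t, ⟨⟨⟨⟨h1, h2⟩, h3⟩, h4⟩, h5⟩⟩ :=
      (((((htend h).eventually (hA ε' hε'0)).and ((htend k).eventually (hB ε' hε'0))).and
        (hphi ε' hε'0)).and hm).and hpos |>.exists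
    refine ⟨t, h5, ?_⟩
    have a1 := (abs_le.1 h1).1
    have a2 := (abs_le.1 h2).1
    rw [hg₁, inner_add_left] at a1
    rw [hg₂, inner_add_left] at a2
    have n1 : ‖t • h‖ ^ 2 = t ^ 2 * ‖h‖ ^ 2 := by rw [norm_smul, mul_pow, Real.norm_eq_abs, sq_abs]
    have n2 : ‖t • k‖ ^ 2 = t ^ 2 * ‖k‖ ^ 2 := by rw [norm_smul, mul_pow, Real.norm_eq_abs, sq_abs]
    have m1 : A (t • h) (t • h) = t ^ 2 * A h h := by simp; ring
    have m2 : B (t • k) (t • k) = t ^ 2 * B k k := by simp; ring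
    rw [m1, n1] at a1
    rw [m2, n2] at a2
    have e : ε * t ^ 2 = 2 * (ε' * (1 + ‖h‖ ^ 2 + ‖k‖ ^ 2) * t ^ 2) := by
      rw [hε']; field_simp
    rw [e]; nlinarith
  have dirq : ∀ h k : En n, A h h + B k k ≤
      L / ‖x - y‖ * ‖h - k‖ ^ 2 + 2 * K * ‖h‖ ^ 2 + 2 * K * ‖k‖ ^ 2 := by
    intro h k
    refine dir h k _ fun ε hε => Eventually.of_forall fun t => ?_
    refine (phi_upper (K := K) (z0 := z0) hκ hL hs hs1 (t • h) (t • k)).trans ?_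
    have n1 : ‖t • h‖ ^ 2 = t ^ 2 * ‖h‖ ^ 2 := by rw [norm_smul, mul_pow, Real.norm_eq_abs, sq_abs]
    have n2 : ‖t • k‖ ^ 2 = t ^ 2 * ‖k‖ ^ 2 := by rw [norm_smul, mul_pow, Real.norm_eq_abs, sq_abs]
    have n3 : ‖t • h - t • k‖ ^ 2 = t ^ 2 * ‖h - k‖ ^ 2 := by
      rw [← smul_sub, norm_smul, mul_pow, Real.norm_eq_abs, sq_abs]
    rw [n1, n2, n3]
    have : 0 ≤ ε * t ^ 2 := by positivity
    have e : L / (2 * ‖x - y‖) = L / ‖x - y‖ / 2 := by field_simp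
    rw [e]; nlinarith
  refine ⟨fun h => ?_, fun h => ?_, fun h => ?_, ?_⟩
  · have := dirq h 0; simp at this; linarith
  · have := dirq 0 h; simp at this; linarith
  · have := dirq h h; simp at this; linarith
  · have := dir (‖x - y‖⁻¹ • (x - y)) (-(‖x - y‖⁻¹ • (x - y)))
      (4 * K - L * (κ * (1 + κ) * ‖x - y‖ ^ (κ - 1))) fun ε hε => ?_
    · have e : ∀ w, B (-w) (-w) = B w w := fun w => by simp
      rwa [e] at this
    · filter_upwards [nhdsWithin_le_nhds (phi_upper_dir (κ := κ) (K := K) (z0 := z0) hL hs hε)]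
        with t ht
      refine ht.trans (le_of_eq ?_)
      ring

/-! ### Doubling of variables -/

open Filter Topology in
/-- First-order condition: an interior maximum fixes the slope. -/
lemma pr_eq_of_contact {n : ℕ} {q : En n × En n} {C : ℝ} (hC : 0 ≤ C)
    (h : ∀ᶠ h in 𝓝 (0 : En n × En n), pr q h ≤ C * ‖h‖ ^ 2) : q = 0 := by
  obtain ⟨ρ, hρ, hb⟩ := Metric.eventually_nhds_iff_ball.1 h
  have h0 : ∀ t, 0 < t → t < ρ → ‖q‖ ≤ C * t := by
    intro t ht htρ
    refine norm_le_of_pr ht (by positivity) fun h hh => ?_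
    refine (hb h (by simpa using hh.trans_lt htρ)).trans ?_
    have : C * ‖h‖ ^ 2 ≤ C * t ^ 2 := by gcongr
    linarith
  have h2 : ‖q‖ ≤ 0 := by
    refine le_of_forall_pos_le_add fun ε hε => ?_
    have h3 := h0 (min (ρ / 2) (ε / (C + 1))) (by positivity)
      ((min_le_left _ _).trans_lt (by linarith))
    have h4 : C * min (ρ / 2) (ε / (C + 1)) ≤ (C + 1) * (ε / (C + 1)) := by
      gcongr
      · linarith
      · exact min_le_right _ _
    have h5 : (C + 1) * (ε / (C + 1)) = ε := by field_simp
    linarith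
  exact norm_le_zero_iff.1 h2

lemma qf_add_smul_one {n : ℕ} (M : Matrix (Fin n) (Fin n) ℝ) (c : ℝ) (h : En n) :
    qf (M + c • (1 : Matrix (Fin n) (Fin n) ℝ)) h = qf M h + c * ‖h‖ ^ 2 := by
  rw [qf_add, qf_smul, qf_one]

set_option maxHeartbeats 1600000 in
open Filter Topology MeasureTheory in
/-- Doubling of variables: if `v x̂ - v ŷ` exceeds the penalization somewhere, then `v` admits a
touching paraboloid from above and one from below at nearby points, whose slopes and Hessians are
controlled as in the theorem on sums. -/
lemma doubling {n : ℕ} {κ L : ℝ} (hκ : κ ∈ Ioo (0:ℝ) 1) (hL : 1 ≤ L) {v : En n → ℝ}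
    (hv : ContinuousOn v (ball 0 1)) (hb : ∀ x ∈ ball (0 : En n) 1, |v x| ≤ 1) {z0 : En n}
    (hz0 : z0 ∈ ball (0 : En n) (3/4)) {xh yh : En n} (hxh : ‖xh - z0‖ ≤ 1/8)
    (hyh : ‖yh - z0‖ ≤ 1/8) (hex : phi κ L 200 z0 xh yh < v xh - v yh) :
    ∃ (x y ξ ξ' p q : En n) (X Y : Matrix (Fin n) (Fin n) ℝ),
      0 < ‖x - y‖ ∧ ‖x - y‖ ≤ 1/4 ∧ ‖x - z0‖ ≤ 1/8 ∧ ‖y - z0‖ ≤ 1/8 ∧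
      ξ ∈ ball (0 : En n) 1 ∧ ξ' ∈ ball (0 : En n) 1 ∧
      ‖ξ - x‖ ≤ ‖x - y‖ / 2 ∧ ‖ξ' - y‖ ≤ ‖x - y‖ / 2 ∧ X.IsSymm ∧ Y.IsSymm ∧
      (∀ᶠ w in 𝓝 ξ, v w ≤ v ξ + ⟪p, w - ξ⟫ + qf X (w - ξ) / 2) ∧
      (∀ᶠ w in 𝓝 ξ', v ξ' + ⟪q, w - ξ'⟫ + qf Y (w - ξ') / 2 ≤ v w) ∧
      ‖p - ((L * om' κ ‖x - y‖ / ‖x - y‖) • (x - y) + (400 : ℝ) • (x - z0))‖ ≤ 1 ∧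
      ‖q - ((L * om' κ ‖x - y‖ / ‖x - y‖) • (x - y) - (400 : ℝ) • (y - z0))‖ ≤ 1 ∧
      (∀ h, qf X h ≤ (L / ‖x - y‖ + 401) * ‖h‖ ^ 2) ∧
      (∀ h, qf (X - Y) h ≤ 801 * ‖h‖ ^ 2) ∧
      qf (X - Y) (‖x - y‖⁻¹ • (x - y)) ≤ 801 - L * (κ * (1 + κ) * ‖x - y‖ ^ (κ - 1)) := by
  set m := v xh - v yh - phi κ L 200 z0 xh yh with hm
  have hm0 : 0 < m := by linarith
  set Kc : Set (En n) := closedBall 0 (15/16) with hKc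
  have hKcB : Kc ⊆ ball 0 1 := closedBall_subset_ball (by norm_num)
  have hKcomp : IsCompact Kc := isCompact_closedBall _ _
  rw [mem_ball_zero_iff] at hz0
  have hmemK : ∀ x : En n, ‖x - z0‖ ≤ 1/8 → x ∈ Kc := by
    intro x hx
    rw [hKc, mem_closedBall_zero_iff]
    have := norm_le_norm_add_norm_sub' x z0
    linarith
  have hvK : ContinuousOn v Kc := hv.mono hKcB
  have hbK : ∀ x ∈ Kc, |v x| ≤ 1 := fun x hx => hb x (hKcB hx)
  -- modulus of continuity of `v` at the level `m / 2`
  obtain ⟨δ, hδ, hunif⟩ := Metric.uniformContinuousOn_iff.1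
    (hKcomp.uniformContinuousOn_of_continuous hvK) (m / 2) (by linarith)
  set s0 := δ / 2 with hs0
  have hs0pos : 0 < s0 := by positivity
  set σ := min (min (δ ^ 2 / 64) (1 / 10000)) (1 / (L / s0 + 401)) with hσ
  have hLs : 0 < L / s0 + 401 := by positivity
  have hσ0 : 0 < σ := by positivity
  have hσ1 : σ ≤ δ ^ 2 / 64 := (min_le_left _ _).trans (min_le_left _ _)
  have hσ2 : σ ≤ 1 / 10000 := (min_le_left _ _).trans (min_le_right _ _)
  have hσ3 : L / s0 + 401 < 2 / σ := by
    have h1 : σ ≤ 1 / (L / s0 + 401) := min_le_right _ _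
    rw [lt_div_iff₀ hσ0]
    rw [le_div_iff₀ hLs] at h1
    linarith
  obtain ⟨V₁, g₁, hR₁⟩ := exists_isReg hKcomp ⟨xh, hmemK _ hxh⟩ hvK hbK hσ0
  obtain ⟨V₂, g₂, hR₂⟩ := exists_isReg (v := fun x => - v x) hKcomp ⟨xh, hmemK _ hxh⟩ hvK.neg
    (fun x hx => by rw [abs_neg]; exact hbK x hx) hσ0
  obtain ⟨C₁, hC₁, hq₁⟩ := hR₁.grad
  obtain ⟨C₂, hC₂, hq₂⟩ := hR₂.grad
  have hc₁ : Continuous V₁ := continuous_iff_continuousAt.2 fun x => (hR₁.hasFDerivAt x).continuousAt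
  have hc₂ : Continuous V₂ := continuous_iff_continuousAt.2 fun x => (hR₂.hasFDerivAt x).continuousAt
  set Q : Set (En n × En n) := closedBall (z0, z0) (1/8) with hQ
  have hQmem : ∀ z : En n × En n, z ∈ Q ↔ ‖z.1 - z0‖ ≤ 1/8 ∧ ‖z.2 - z0‖ ≤ 1/8 := by
    intro z
    rw [hQ, mem_closedBall, Prod.dist_eq, max_le_iff, dist_eq_norm, dist_eq_norm]
  set Ψ : En n × En n → ℝ := fun z => V₁ z.1 + V₂ z.2 - phi κ L 200 z0 z.1 z.2 with hΨ
  have homc := om_continuous hκ.1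
  have hΨc : Continuous Ψ := by
    simp only [hΨ, phi]; fun_prop
  have hphi0 : ∀ z ∈ Q, ‖z.1 - z.2‖ ≤ 1/4 ∧ L * om κ ‖z.1 - z.2‖ ≥ 0 := by
    intro z hz
    have h := (hQmem z).1 hz
    have h1 : ‖z.1 - z.2‖ ≤ 1/4 := by
      have := norm_sub_le_norm_sub_add_norm_sub z.1 z0 z.2
      rw [norm_sub_rev z0 z.2] at this
      linarith [h.1, h.2]
    exact ⟨h1, mul_nonneg (by linarith) (om_nonneg hκ (norm_nonneg _) (by linarith))⟩
  have hzh : ((xh, yh) : En n × En n) ∈ Q := (hQmem _).2 ⟨hxh, hyh⟩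
  have hΨh : m ≤ Ψ (xh, yh) := by
    have h1 := hR₁.ge xh (hmemK _ hxh)
    have h2 := hR₂.ge yh (hmemK _ hyh)
    simp only [hΨ]; linarith
  set r := min m 1 with hr
  have hr0 : 0 < r := by positivity
  -- contact points are interior and off the diagonal
  have hloc : ∀ p z, ‖p‖ < r → z ∈ Q → (∀ w ∈ Q, Ψ w - pr p w ≤ Ψ z - pr p z) →
      ‖z.1 - z0‖ ≤ 1/10 ∧ ‖z.2 - z0‖ ≤ 1/10 ∧ s0 ≤ ‖z.1 - z.2‖ := by
    intro p z hp hz hmax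
    have hzQ := (hQmem z).1 hz
    have h1 := hmax _ hzh
    have h2 : pr p ((xh, yh) - z) ≤ m / 2 := by
      refine (le_abs_self _).trans ((pr_abs_le _ _).trans ?_)
      have a1 : ‖((xh, yh) : En n × En n) - z‖ ≤ 1/4 := by
        rw [← dist_eq_norm]
        have := dist_triangle_right ((xh, yh) : En n × En n) z (z0, z0)
        have b1 := mem_closedBall.1 hzh
        have b2 := mem_closedBall.1 hz
        linarith
      have a2 : ‖p‖ ≤ m := hp.le.trans (min_le_left _ _)
      nlinarith [norm_nonneg p, norm_nonneg (((xh, yh) : En n × En n) - z)]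
    rw [pr_sub] at h2
    have h3 : m / 2 ≤ Ψ z := by linarith
    obtain ⟨ξ1, hξ1, hd1, hV1⟩ := hR₁.near z.1 (hmemK _ hzQ.1)
    obtain ⟨ξ2, hξ2, hd2, hV2⟩ := hR₂.near z.2 (hmemK _ hzQ.2)
    have b1 := abs_le.1 (hbK _ hξ1)
    have b2 := abs_le.1 (hbK _ hξ2)
    have h4 := (hphi0 z hz).2
    simp only [hΨ, phi] at h3
    have n1 := sq_nonneg ‖z.1 - z0‖
    have n2 := sq_nonneg ‖z.2 - z0‖
    refine ⟨small_of_sq (by linarith), small_of_sq (by linarith), ?_⟩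
    by_contra hlt
    push Not at hlt
    have f1 : ‖ξ1 - z.1‖ ≤ δ / 4 := by
      refine abs_le_of_sq_le_sq' ?_ (by positivity) |>.2
      linarith [show (δ / 4) ^ 2 = δ ^ 2 / 16 by ring]
    have f2 : ‖ξ2 - z.2‖ ≤ δ / 4 := by
      refine abs_le_of_sq_le_sq' ?_ (by positivity) |>.2
      linarith [show (δ / 4) ^ 2 = δ ^ 2 / 16 by ring]
    have f3 : dist ξ1 ξ2 < δ := by
      rw [dist_eq_norm]
      have e : ξ1 - ξ2 = (ξ1 - z.1) + (z.1 - z.2) - (ξ2 - z.2) := by abel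
      rw [e]
      have := norm_sub_le (ξ1 - z.1 + (z.1 - z.2)) (ξ2 - z.2)
      have := norm_add_le (ξ1 - z.1) (z.1 - z.2)
      linarith
    have f4 := hunif ξ1 hξ1 ξ2 hξ2 f3
    rw [Real.dist_eq, abs_lt] at f4
    linarith [f4.2]
  set l₁ : En n × En n → En n := fun z =>
    (L * om' κ ‖z.1 - z.2‖ / ‖z.1 - z.2‖) • (z.1 - z.2) + (2 * 200 : ℝ) • (z.1 - z0) with hl₁
  set l₂ : En n × En n → En n := fun z =>
    -(L * om' κ ‖z.1 - z.2‖ / ‖z.1 - z.2‖) • (z.1 - z.2) + (2 * 200 : ℝ) • (z.2 - z0) with hl₂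
  set C := C₁ + C₂ + 2 * L / s0 + 400 with hC
  have hC0 : 0 ≤ C := by positivity
  -- semiconvexity of `Ψ` at points off the diagonal
  have hsemi : ∀ z, s0 ≤ ‖z.1 - z.2‖ → ‖z.1 - z.2‖ ≤ 1 → ∀ h,
      Ψ z + pr (g₁ z.1 - l₁ z, g₂ z.2 - l₂ z) h - C * ‖h‖ ^ 2 ≤ Ψ (z + h) := by
    intro z hs hs1 h
    have hspos : 0 < ‖z.1 - z.2‖ := hs0pos.trans_le hs
    have a1 := phi_upper (K := 200) (z0 := z0) hκ (by linarith : 0 ≤ L) hspos hs1 h.1 h.2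
    have a2 := (abs_le.1 (hq₁ z.1 (z.1 + h.1))).1
    have a3 := (abs_le.1 (hq₂ z.2 (z.2 + h.2))).1
    rw [add_sub_cancel_left] at a2 a3
    have n1 : ‖h.1‖ ^ 2 ≤ ‖h‖ ^ 2 := by gcongr; exact norm_fst_le h
    have n2 : ‖h.2‖ ^ 2 ≤ ‖h‖ ^ 2 := by gcongr; exact norm_snd_le h
    have n3 : ‖h.1 - h.2‖ ^ 2 ≤ 4 * ‖h‖ ^ 2 := by
      have : ‖h.1 - h.2‖ ≤ 2 * ‖h‖ := by
        have := norm_sub_le h.1 h.2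
        linarith [norm_fst_le h, norm_snd_le h]
      nlinarith [norm_nonneg (h.1 - h.2)]
    have n4 : L / (2 * ‖z.1 - z.2‖) * ‖h.1 - h.2‖ ^ 2 ≤ L / (2 * s0) * (4 * ‖h‖ ^ 2) := by
      gcongr
    have n5 : L / (2 * s0) * (4 * ‖h‖ ^ 2) = 2 * L / s0 * ‖h‖ ^ 2 := by field_simp; ring
    have n6 := mul_le_mul_of_nonneg_left n1 hC₁
    have n7 := mul_le_mul_of_nonneg_left n2 hC₂
    simp only [hΨ, pr, Prod.fst_add, Prod.snd_add, inner_sub_left]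
    have e : C * ‖h‖ ^ 2 = C₁ * ‖h‖ ^ 2 + C₂ * ‖h‖ ^ 2 + 2 * L / s0 * ‖h‖ ^ 2 + 400 * ‖h‖ ^ 2 := by
      rw [hC]; ring
    rw [e]
    simp only [hl₁, hl₂]
    linarith
  -- the slope at a contact point
  have hslope : ∀ p z, ‖p‖ < r → z ∈ Q → (∀ w ∈ Q, Ψ w - pr p w ≤ Ψ z - pr p z) →
      closedBall z (1/40) ⊆ Q ∧ g₁ z.1 = l₁ z + p.1 ∧ g₂ z.2 = l₂ z + p.2 := by
    intro p z hp hz hmax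
    obtain ⟨c1, c2, c3⟩ := hloc p z hp hz hmax
    have hball : closedBall z (1/40) ⊆ Q := by
      apply closedBall_subset_closedBall'
      have : dist z (z0, z0) ≤ 1/10 := by
        rw [Prod.dist_eq, max_le_iff, dist_eq_norm, dist_eq_norm]; exact ⟨c1, c2⟩
      linarith
    have h0 : ((g₁ z.1 - l₁ z, g₂ z.2 - l₂ z) : En n × En n) - p = 0 := by
      refine pr_eq_of_contact hC0 ?_
      filter_upwards [Metric.closedBall_mem_nhds (0 : En n × En n) (show (0:ℝ) < 1/40 by norm_num)]
        with h hh
      have a1 := hsemi z c3 ((hphi0 z hz).1.trans (by norm_num)) h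
      have a2 := hmax (z + h) (hball (by simpa using hh))
      rw [pr_add] at a2
      have e : pr (((g₁ z.1 - l₁ z, g₂ z.2 - l₂ z) : En n × En n) - p) h =
        pr (g₁ z.1 - l₁ z, g₂ z.2 - l₂ z) h - pr p h := by
        simp [pr, inner_sub_left]; ring
      rw [e]; linarith
    have h1 := congrArg Prod.fst (sub_eq_zero.1 h0)
    have h2 := congrArg Prod.snd (sub_eq_zero.1 h0)
    simp only at h1 h2
    exact ⟨hball, by rw [← h1]; abel, by rw [← h2]; abel⟩
  obtain ⟨L₁, hL₁⟩ := hR₁.lip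
  obtain ⟨L₂, hL₂⟩ := hR₂.lip
  have hGlip : LipschitzWith (max (L₁ * 1) (L₂ * 1))
      (fun z : En n × En n => (g₁ z.1, g₂ z.2)) :=
    (hL₁.comp LipschitzWith.prod_fst).prodMk (hL₂.comp LipschitzWith.prod_snd)
  have hrad := hGlip.ae_differentiableAt
    (μ := (μH[(Module.finrank ℝ (En n × En n) : ℝ)] : Measure (En n × En n)))
  obtain ⟨p, z, hp, hz, hzN, hmax⟩ := jensen (isCompact_closedBall _ _) ⟨_, hzh⟩
    hΨc.continuousOn hr0 (show (0:ℝ) < 1/40 by norm_num) hC0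
    (fun p z hp hz hmax => by
      obtain ⟨c1, c2, c3⟩ := hslope p z hp hz hmax
      obtain ⟨d1, d2, d3⟩ := hloc p z hp hz hmax
      refine ⟨c1, fun h => ?_⟩
      have := hsemi z d3 ((hphi0 z hz).1.trans (by norm_num)) h
      rw [c2, c3, add_sub_cancel_left, add_sub_cancel_left] at this
      exact this) (ae_iff.1 hrad)
  have hdiff : DifferentiableAt ℝ (fun z : En n × En n => (g₁ z.1, g₂ z.2)) z := by
    simpa using hzN
  obtain ⟨hball, hg1, hg2⟩ := hslope p z hp hz hmax
  obtain ⟨d1, d2, d3⟩ := hloc p z hp hz hmax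
  obtain ⟨x, y⟩ := z
  simp only at hg1 hg2 d1 d2 d3
  have hs4 : ‖x - y‖ ≤ 1/4 := (hphi0 _ hz).1
  have hspos : 0 < ‖x - y‖ := hs0pos.trans_le d3
  have hdiff₁ : DifferentiableAt ℝ g₁ x := by
    have hi : DifferentiableAt ℝ (fun x' : En n => (x', y)) x := by fun_prop
    have h := DifferentiableAt.comp x (f := fun x' : En n => (x', y))
      (g := fun z : En n × En n => (g₁ z.1, g₂ z.2)) hdiff hi
    exact DifferentiableAt.fst h
  have hdiff₂ : DifferentiableAt ℝ g₂ y := by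
    have hi : DifferentiableAt ℝ (fun y' : En n => (x, y')) y := by fun_prop
    have h := DifferentiableAt.comp y (f := fun y' : En n => (x, y'))
      (g := fun z : En n × En n => (g₁ z.1, g₂ z.2)) hdiff hi
    exact DifferentiableAt.snd h
  obtain ⟨A, hA⟩ := hR₁.second_order hdiff₁
  obtain ⟨B, hB⟩ := hR₂.second_order hdiff₂
  have hmaxloc : ∀ᶠ h in 𝓝 (0 : En n × En n), V₁ (x + h.1) + V₂ (y + h.2)
      - phi κ L 200 z0 (x + h.1) (y + h.2) - (⟪p.1, h.1⟫ + ⟪p.2, h.2⟫) ≤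
      V₁ x + V₂ y - phi κ L 200 z0 x y := by
    filter_upwards [Metric.closedBall_mem_nhds (0 : En n × En n) (show (0:ℝ) < 1/40 by norm_num)]
      with h hh
    have a2 := hmax ((x, y) + h) (hball (by simpa using hh))
    rw [pr_add] at a2
    simp only [hΨ, Prod.fst_add, Prod.snd_add, pr] at a2
    linarith
  obtain ⟨q1, q2, q3, q4⟩ := contact_second_order hκ (by linarith : 0 ≤ L) hspos
    (hs4.trans (by norm_num)) hA hB hg1 hg2 hmaxloc
  have hτ : L / ‖x - y‖ + 401 < 2 / σ := by
    refine lt_of_le_of_lt ?_ hσ3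
    gcongr
  have hxK : x ∈ Kc := hmemK x (by linarith)
  have hyK : y ∈ Kc := hmemK y (by linarith)
  -- at points of bending less than `2/σ` the regularizations are touched by translates of `v`
  have near2 : ∀ ξ x : En n, ‖ξ - x‖ ^ 2 ≤ 2 * σ → ‖x - z0‖ ≤ 1/10 →
      ‖ξ - x‖ ≤ s0 / 2 ∧ ‖ξ‖ < 15/16 := by
    intro ξ x h1 h2
    constructor
    · refine abs_le_of_sq_le_sq' ?_ (by positivity) |>.2
      linarith [show (s0 / 2) ^ 2 = δ ^ 2 / 16 by rw [hs0]; ring, sq_nonneg δ]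
    · have : ‖ξ - x‖ ≤ 1/50 := by
        refine abs_le_of_sq_le_sq' ?_ (by positivity) |>.2
        linarith
      have := norm_le_norm_add_norm_sub' ξ x
      have := norm_le_norm_add_norm_sub' x z0
      linarith
  have upA : ∀ᶠ h in 𝓝 (0 : En n), V₁ (x + h) ≤ V₁ x + ⟪g₁ x, h⟫
      + (A h h / 2 + 1/8 * ‖h‖ ^ 2) := by
    filter_upwards [hA (1/8) (by norm_num)] with h hh
    linarith [(abs_le.1 hh).2]
  have upB : ∀ᶠ h in 𝓝 (0 : En n), V₂ (y + h) ≤ V₂ y + ⟪g₂ y, h⟫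
      + (B h h / 2 + 1/8 * ‖h‖ ^ 2) := by
    filter_upwards [hB (1/8) (by norm_num)] with h hh
    linarith [(abs_le.1 hh).2]
  obtain ⟨ξ, hξK, hξ1, hξ2⟩ := hR₁.touch x hxK _ hτ (by
    filter_upwards [upA] with h hh
    have := q1 h
    linarith [sq_nonneg ‖h‖])
  obtain ⟨ξ', hξ'K, hξ'1, hξ'2⟩ := hR₂.touch y hyK _ hτ (by
    filter_upwards [upB] with h hh
    have := q2 h
    linarith [sq_nonneg ‖h‖])
  obtain ⟨e1, e2⟩ := near2 ξ x hξ1 d1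
  obtain ⟨e1', e2'⟩ := near2 ξ' y hξ'1 d2
  have shift : ∀ ξ : En n, ‖ξ‖ < 15/16 → ∀ P : En n → Prop, (∀ᶠ h in 𝓝 (0 : En n), P h) →
      ∀ᶠ w in 𝓝 ξ, w ∈ Kc ∧ P (w - ξ) := by
    intro ξ hξ P hP
    have ht : Tendsto (fun w : En n => w - ξ) (𝓝 ξ) (𝓝 0) := by
      have : Continuous fun w : En n => w - ξ := by fun_prop
      simpa using this.tendsto ξ
    refine (Filter.Eventually.and ?_ (ht.eventually hP))
    have : ball (0 : En n) (15/16) ∈ 𝓝 ξ := isOpen_ball.mem_nhds (by simpa using hξ)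
    filter_upwards [this] with w hw
    exact ball_subset_closedBall hw
  refine ⟨x, y, ξ, ξ', g₁ x, -g₂ y, matOf A + (1/4 : ℝ) • 1, -(matOf B + (1/4 : ℝ) • 1),
    hspos, hs4, by linarith, by linarith, hKcB hξK, hKcB hξ'K, by linarith, by linarith,
    ?_, ?_, ?_, ?_, ?_, ?_, ?_, ?_, ?_⟩
  · exact (matOf_symm A).add (Matrix.isSymm_one.smul _)
  · exact ((matOf_symm B).add (Matrix.isSymm_one.smul _)).neg
  · filter_upwards [shift ξ e2 _ upA] with w ⟨hw, hwA⟩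
    have := hξ2 (w - ξ) (by rwa [add_sub_cancel])
    rw [add_sub_cancel] at this
    rw [qf_add_smul_one, qf_matOf]
    linarith
  · filter_upwards [shift ξ' e2' _ upB] with w ⟨hw, hwB⟩
    have := hξ'2 (w - ξ') (by rwa [add_sub_cancel])
    rw [add_sub_cancel] at this
    rw [qf_neg, qf_add_smul_one, qf_matOf, inner_neg_left]
    linarith
  · have e : g₁ x - ((L * om' κ ‖x - y‖ / ‖x - y‖) • (x - y) + (400 : ℝ) • (x - z0)) = p.1 := by
      rw [hg1]; simp only [hl₁]; norm_num
    rw [e]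
    exact (norm_fst_le p).trans (hp.le.trans (min_le_right _ _))
  · have e : -g₂ y - ((L * om' κ ‖x - y‖ / ‖x - y‖) • (x - y) - (400 : ℝ) • (y - z0)) = -p.2 := by
      rw [hg2]; simp only [hl₂]; module
    rw [e, norm_neg]
    exact (norm_snd_le p).trans (hp.le.trans (min_le_right _ _))
  · intro h
    rw [qf_add_smul_one, qf_matOf]
    have := q1 h
    linarith [sq_nonneg ‖h‖]
  · intro h
    rw [qf_sub, qf_neg, qf_add_smul_one, qf_add_smul_one, qf_matOf, qf_matOf]
    have := q3 h
    linarith [sq_nonneg ‖h‖]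
  · rw [qf_sub, qf_neg, qf_add_smul_one, qf_add_smul_one, qf_matOf, qf_matOf]
    have hne : ‖(‖x - y‖⁻¹ • (x - y))‖ = 1 := by
      rw [norm_smul, norm_inv, norm_norm, inv_mul_cancel₀ hspos.ne']
    rw [hne]
    linarith

/-! ### The class of rescaled problems and its Lipschitz estimate -/

/-- The class of rescaled problems.  After subtracting an affine function of slope `q` and
rescaling, the unknown `v` solves a uniformly elliptic equation whose coefficients oscillate by at
most `ε`, and the inequalities `F ≥ -ε`, `F ≤ ε` are only known for test functions whose gradient
`p` stays away from the critical slope, `ε ≤ ‖p + b‖`. The drift vector `b` is arbitrary. -/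
structure Cls {n : ℕ} (lam Lam αb ε : ℝ) (F : En n → Matrix (Fin n) (Fin n) ℝ → ℝ) (b : En n)
    (v : En n → ℝ) : Prop where
  ell : IsUnifElliptic lam Lam F
  osc : ∀ x ∈ ball (0 : En n) 1, ∀ y ∈ ball (0 : En n) 1, ∀ M : Matrix (Fin n) (Fin n) ℝ,
    M.IsSymm → |F x M - F y M| ≤ ε * ‖x - y‖ ^ αb * (‖M‖ + 1)
  cont : ContinuousOn v (ball 0 1)
  bdd : ∀ x ∈ ball (0 : En n) 1, |v x| ≤ 1
  sub : ∀ x₀ ∈ ball (0 : En n) 1, ∀ (p : En n) (M : Matrix (Fin n) (Fin n) ℝ), M.IsSymm →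
    (∀ᶠ x in nhds x₀, v x ≤ v x₀ + ⟪p, x - x₀⟫ + qf M (x - x₀) / 2) →
    ε ≤ ‖p + b‖ → -ε ≤ F x₀ M
  sup : ∀ x₀ ∈ ball (0 : En n) 1, ∀ (p : En n) (M : Matrix (Fin n) (Fin n) ℝ), M.IsSymm →
    (∀ᶠ x in nhds x₀, v x₀ + ⟪p, x - x₀⟫ + qf M (x - x₀) / 2 ≤ v x) →
    ε ≤ ‖p + b‖ → F x₀ M ≤ ε

lemma pucciPlus_neg_eq {n : ℕ} (lam Lam : ℝ) (M : Matrix (Fin n) (Fin n) ℝ) :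
    pucciMinus lam Lam (-M) = - pucciPlus lam Lam M := by
  rw [pucciPlus, neg_neg]

/-- The class is invariant under `v ↦ -v`. -/
lemma Cls.neg {n : ℕ} {lam Lam αb ε : ℝ} {F : En n → Matrix (Fin n) (Fin n) ℝ → ℝ} {b : En n}
    {v : En n → ℝ} (h : Cls lam Lam αb ε F b v) :
    Cls lam Lam αb ε (fun x M => - F x (-M)) (-b) (fun x => - v x) where
  ell := by
    refine ⟨fun x hx M N hM hN => ?_, fun x hx => by simp [h.ell.2 x hx]⟩
    have := h.ell.1 x hx (-N) (-M) hN.neg hM.neg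
    rw [show -N - -M = M - N by abel] at this
    constructor <;> linarith [this.1, this.2]
  osc := by
    intro x hx y hy M hM
    have := h.osc x hx y hy (-M) hM.neg
    rw [norm_neg] at this
    rw [show -F x (-M) - -F y (-M) = -(F x (-M) - F y (-M)) by ring, abs_neg]
    exact this
  cont := h.cont.neg
  bdd := fun x hx => by rw [abs_neg]; exact h.bdd x hx
  sub := by
    intro x₀ hx₀ p M hM ht hp
    have := h.sup x₀ hx₀ (-p) (-M) hM.neg (by
      filter_upwards [ht] with x hx
      rw [inner_neg_left, qf_neg]; linarith) (by
      rw [show -p + b = -(p + -b) by abel, norm_neg]; exact hp)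
    linarith
  sup := by
    intro x₀ hx₀ p M hM ht hp
    have := h.sub x₀ hx₀ (-p) (-M) hM.neg (by
      filter_upwards [ht] with x hx
      rw [inner_neg_left, qf_neg]; linarith) (by
      rw [show -p + b = -(p + -b) by abel, norm_neg]; exact hp)
    linarith

/-- A symmetric matrix bounded above by `m I` and with `M⁺(X) ≥ -1` has entries of size `O(m)`. -/
lemma norm_le_of_pucciPlus {n : ℕ} {lam Lam m : ℝ} (h0 : 0 < lam) (h : lam ≤ Lam) (hm : 0 ≤ m)
    {X : Matrix (Fin n) (Fin n) ℝ} (hX : X.IsSymm) (hq : ∀ e, qf X e ≤ m * ‖e‖ ^ 2)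
    (hP : -1 ≤ pucciPlus lam Lam X) : ‖X‖ + 1 ≤ ((n * Lam + 1) / lam + 1) * (m + 1) := by
  have hPSD : (m • (1 : Matrix (Fin n) (Fin n) ℝ) - X).PosSemidef := by
    refine posSemidef_of_qf ?_ fun e => ?_
    · exact (Matrix.isSymm_one.smul m).sub hX
    · rw [qf_sub, qf_smul, qf_one]; linarith [hq e]
  have h1 := pucciPlus_le h hm hPSD
  set T := (m • (1 : Matrix (Fin n) (Fin n) ℝ) - X).trace with hT
  have hLam : 0 < Lam := h0.trans_le h
  have hT0 : 0 ≤ T := hPSD.trace_nonneg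
  have h2 : T ≤ (n * Lam * m + 1) / lam := by
    rw [le_div_iff₀ h0]; linarith
  have h3 : ‖X‖ ≤ T + m := by
    rw [Matrix.norm_le_iff (by linarith)]
    intro i j
    have h4 := entry_le_trace hPSD i j
    have h5 : |(m • (1 : Matrix (Fin n) (Fin n) ℝ)) i j| ≤ m := by
      rw [Matrix.smul_apply, Matrix.one_apply]
      split_ifs <;> simp [abs_of_nonneg hm, hm]
    rw [Matrix.sub_apply] at h4
    rw [Real.norm_eq_abs]
    rw [abs_le] at *
    constructor <;> linarith [h4.1, h4.2, h5.1, h5.2]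
  have h6 : (n * Lam * m + 1) / lam ≤ (n * Lam + 1) / lam * (m + 1) := by
    rw [div_mul_eq_mul_div]
    refine (div_le_div_iff_of_pos_right h0).2 ?_
    have : 0 ≤ (n:ℝ) * Lam := by positivity
    linarith [show (n * Lam + 1) * (m + 1) = n * Lam * m + 1 + n * Lam + m by ring]
  linarith [show ((n * Lam + 1) / lam + 1) * (m + 1) = (n * Lam + 1) / lam * (m + 1) + m + 1 by ring]

/-- If all slopes of size comparable to `L` are non-critical, the doubling function with constant
`L` stays non-positive. -/
lemma Cls.le_phi {n : ℕ} {lam Lam αb ε L : ℝ} (hlam : 0 < lam) (hlamLam : lam ≤ Lam)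
    (hα : αb ∈ Ioo (0:ℝ) 1) (hε0 : 0 < ε) (hε1 : ε ≤ 1)
    (hε : 806 * ((n * Lam + 1) / lam + 1) * ε ≤ lam * αb / 2)
    (hL1 : 1 ≤ L) (hL : 2 * (801 * n * Lam + 2) / (lam * αb) < L)
    {F : En n → Matrix (Fin n) (Fin n) ℝ → ℝ} {b : En n} {v : En n → ℝ}
    (h : Cls lam Lam αb ε F b v)
    (hb : ∀ p : En n, L / 2 - 51 ≤ ‖p‖ → ‖p‖ ≤ L + 51 → ε ≤ ‖p + b‖)
    {z0 : En n} (hz0 : z0 ∈ ball (0 : En n) (3/4)) {xh yh : En n} (hxh : ‖xh - z0‖ ≤ 1/8)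
    (hyh : ‖yh - z0‖ ≤ 1/8) : v xh - v yh ≤ phi αb L 200 z0 xh yh := by
  by_contra! hex
  obtain ⟨x, y, ξ, ξ', p, q, X, Y, hs, hs4, hxz, hyz, hξ, hξ', hξx, hξy, hX, hY, hX1, hY1, hp, hq,
    hX2, hXY, hXYe⟩ := doubling hα hL1 h.cont h.bdd hz0 hxh hyh hex
  set s := ‖x - y‖ with hsdef
  have hLam : 0 < Lam := hlam.trans_le hlamLam
  obtain ⟨ho1, ho2⟩ := om'_bounds hα hs.le (by linarith : s ≤ 1)
  -- size of the two slopes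
  have hw : ‖(L * om' αb s / s) • (x - y)‖ = L * om' αb s := by
    rw [norm_smul, Real.norm_eq_abs, abs_of_nonneg (by positivity), ← hsdef]
    field_simp
  have hw1 : L / 2 ≤ L * om' αb s := by
    have := mul_le_mul_of_nonneg_left ho1 (by linarith : 0 ≤ L); linarith
  have hw2 : L * om' αb s ≤ L := by
    have := mul_le_mul_of_nonneg_left ho2 (by linarith : 0 ≤ L); linarith
  set w := (L * om' αb s / s) • (x - y) with hwdef
  have hx50 : ‖(400:ℝ) • (x - z0)‖ ≤ 50 := by
    rw [norm_smul, Real.norm_eq_abs, abs_of_nonneg (by norm_num)]; linarith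
  have hy50 : ‖(400:ℝ) • (y - z0)‖ ≤ 50 := by
    rw [norm_smul, Real.norm_eq_abs, abs_of_nonneg (by norm_num)]; linarith
  have hpw : ‖p - w‖ ≤ 51 := by
    have := norm_add_le (p - (w + (400:ℝ) • (x - z0))) ((400:ℝ) • (x - z0))
    rw [show p - (w + (400:ℝ) • (x - z0)) + (400:ℝ) • (x - z0) = p - w by abel] at this
    linarith
  have hqw : ‖q - w‖ ≤ 51 := by
    have := norm_sub_le (q - (w - (400:ℝ) • (y - z0))) ((400:ℝ) • (y - z0))
    rw [show q - (w - (400:ℝ) • (y - z0)) - (400:ℝ) • (y - z0) = q - w by abel] at this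
    linarith
  have key : ∀ r : En n, ‖r - w‖ ≤ 51 → ε ≤ ‖r + b‖ := by
    intro r hr
    apply hb
    · have := norm_le_norm_add_norm_sub r w; linarith
    · have := norm_le_norm_add_norm_sub' r w; linarith
  have e1 := h.sub ξ hξ p X hX hX1 (key p hpw)
  have e2 := h.sup ξ' hξ' q Y hY hY1 (key q hqw)
  -- size of the Hessian at the upper contact point
  have hm0 : 0 ≤ L / s + 401 := by positivity
  have e3 : -1 ≤ pucciPlus lam Lam X := by
    have := (h.ell.1 ξ hξ X 0 hX (Matrix.isSymm_zero)).2
    rw [h.ell.2 ξ hξ, sub_zero, sub_zero] at this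
    linarith
  have e4 := norm_le_of_pucciPlus hlam hlamLam hm0 hX hX2 e3
  set A := (n * Lam + 1) / lam + 1 with hA
  have hA0 : 0 < A := by positivity
  have e5 : L / s + 401 + 1 ≤ 403 * (L / s) := by
    have : 1 ≤ L / s := by rw [le_div_iff₀ hs]; linarith
    linarith
  have hξξ : ‖ξ - ξ'‖ ≤ 2 * s := by
    have := norm_add₃_le (a := ξ - x) (b := x - y) (c := -(ξ' - y))
    rw [norm_neg, show ξ - x + (x - y) + -(ξ' - y) = ξ - ξ' by abel] at this
    linarith
  have e6 : ‖ξ - ξ'‖ ^ αb ≤ 2 * s ^ αb := by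
    calc ‖ξ - ξ'‖ ^ αb ≤ (2 * s) ^ αb := Real.rpow_le_rpow (norm_nonneg _) hξξ hα.1.le
      _ = 2 ^ αb * s ^ αb := Real.mul_rpow (by norm_num) hs.le
      _ ≤ 2 * s ^ αb := by
        refine mul_le_mul_of_nonneg_right ?_ (Real.rpow_nonneg hs.le _)
        calc (2:ℝ) ^ αb ≤ 2 ^ (1:ℝ) := Real.rpow_le_rpow_of_exponent_le (by norm_num) hα.2.le
          _ = 2 := Real.rpow_one _
  have hpow : s ^ αb * (L / s) = L * s ^ (αb - 1) := by
    rw [Real.rpow_sub_one hs.ne']; field_simp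
  have e7 : ε * ‖ξ - ξ'‖ ^ αb * (‖X‖ + 1) ≤ 806 * A * ε * (L * s ^ (αb - 1)) := by
    calc ε * ‖ξ - ξ'‖ ^ αb * (‖X‖ + 1) ≤ ε * (2 * s ^ αb) * (A * (403 * (L / s))) := by
          have := mul_le_mul_of_nonneg_left e5 hA0.le
          gcongr
          linarith
      _ = 806 * A * ε * (s ^ αb * (L / s)) := by ring
      _ = _ := by rw [hpow]
  have e8 := (abs_le.1 (h.osc ξ hξ ξ' hξ' X hX)).2
  have e9 := (h.ell.1 ξ' hξ' X Y hX hY).2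
  -- the direction `x - y` carries the whole gain
  have hPSD : ((801:ℝ) • (1 : Matrix (Fin n) (Fin n) ℝ) - (X - Y)).PosSemidef := by
    refine posSemidef_of_qf ((Matrix.isSymm_one.smul _).sub (hX.sub hY)) fun e => ?_
    rw [qf_sub, qf_smul, qf_one]; linarith [hXY e]
  have hunit : ‖s⁻¹ • (x - y)‖ = 1 := by
    rw [norm_smul, Real.norm_eq_abs, abs_of_nonneg (by positivity), ← hsdef]
    field_simp
  have e10 := pucciPlus_le hlamLam (by norm_num) hPSD
  have e11 := qf_le_trace hPSD hunit
  rw [qf_sub, qf_smul, qf_one, hunit] at e11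
  set P := s ^ (αb - 1) with hP
  have hP1 : 1 ≤ P := Real.one_le_rpow_of_pos_of_le_one_of_nonpos hs (by linarith)
    (by linarith [hα.2])
  have e12 : lam * (L * (αb * (1 + αb) * P)) ≤
      lam * ((801:ℝ) • (1 : Matrix (Fin n) (Fin n) ℝ) - (X - Y)).trace :=
    mul_le_mul_of_nonneg_left (by linarith) hlam.le
  have hLP : 0 < L * P := by positivity
  have e13 : 806 * A * ε * (L * P) ≤ lam * αb / 2 * (L * P) :=
    mul_le_mul_of_nonneg_right hε hLP.le
  have e14 : lam * αb * (L * P) ≤ lam * (L * (αb * (1 + αb) * P)) := by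
    have : 0 ≤ lam * αb * αb * (L * P) := by have := hα.1; positivity
    linarith [show lam * (L * (αb * (1 + αb) * P)) = lam * αb * (L * P) + lam * αb * αb * (L * P)
      by ring]
  have hla : 0 < lam * αb := mul_pos hlam hα.1
  have e15 : 2 * (801 * n * Lam + 2) < L * (lam * αb) := by rwa [div_lt_iff₀ hla] at hL
  have e16 : L * (lam * αb) ≤ lam * αb * (L * P) := by
    have := mul_le_mul_of_nonneg_left hP1 (by positivity : 0 ≤ L * (lam * αb))
    linarith
  linarith

/-- Interior Lipschitz estimate for the class, uniform in the drift `b`. A large drift makes every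
moderate slope non-critical, a bounded drift makes every large slope non-critical. -/
lemma Cls.exists_lipschitz (n : ℕ) {lam Lam αb : ℝ} (hlam : 0 < lam) (hlamLam : lam ≤ Lam)
    (hα : αb ∈ Ioo (0:ℝ) 1) : ∃ L ε₀ : ℝ, 0 < L ∧ 0 < ε₀ ∧
      ∀ (ε : ℝ) (F : En n → Matrix (Fin n) (Fin n) ℝ → ℝ) (b : En n) (v : En n → ℝ),
        0 < ε → ε ≤ ε₀ → Cls lam Lam αb ε F b v →
        ∀ x ∈ ball (0 : En n) (3/4), ∀ y ∈ ball (0 : En n) (3/4), |v x - v y| ≤ L * ‖x - y‖ := by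
  have hLam : 0 < Lam := hlam.trans_le hlamLam
  have hα0 := hα.1
  set A := (n * Lam + 1) / lam + 1 with hA
  have hA0 : 0 < A := by positivity
  set L₁ := 1 + 2 * (801 * n * Lam + 2) / (lam * αb) with hL₁
  have hL₁1 : 1 ≤ L₁ := by
    have : 0 ≤ 2 * (801 * n * Lam + 2) / (lam * αb) := by positivity
    linarith
  refine ⟨2 * L₁ + 408, min 1 (lam * αb / 2 / (806 * A)), by linarith, by positivity, ?_⟩
  intro ε F b v hε0 hε h
  have hε1 : ε ≤ 1 := hε.trans (min_le_left _ _)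
  have hε2 : 806 * A * ε ≤ lam * αb / 2 := by
    have := hε.trans (min_le_right _ _)
    rw [le_div_iff₀ (by positivity)] at this
    linarith
  obtain ⟨L, hL1, hL2, hLle, hb⟩ : ∃ L, 1 ≤ L ∧ 2 * (801 * n * Lam + 2) / (lam * αb) < L ∧
      L ≤ 2 * L₁ + 208 ∧
      ∀ p : En n, L / 2 - 51 ≤ ‖p‖ → ‖p‖ ≤ L + 51 → ε ≤ ‖p + b‖ := by
    rcases le_total (L₁ + 52) ‖b‖ with hb | hb
    · refine ⟨L₁, hL₁1, by linarith, by linarith, fun p _ hp => ?_⟩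
      have := norm_sub_le (p + b) p
      rw [add_sub_cancel_left] at this
      linarith
    · refine ⟨2 * L₁ + 208, by linarith, by linarith, le_rfl, fun p hp _ => ?_⟩
      have := norm_sub_le (p + b) b
      rw [add_sub_cancel_right] at this
      linarith
  have key : ∀ x ∈ ball (0 : En n) (3/4), ∀ y ∈ ball (0 : En n) (3/4),
      v x - v y ≤ (2 * L₁ + 408) * ‖x - y‖ := by
    intro x hx y hy
    rcases le_total ‖x - y‖ (1/8) with hxy | hxy
    · have h1 := h.le_phi hlam hlamLam hα hε0 hε1 hε2 hL1 hL2 hb hx (xh := x) (yh := y)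
        (by simp) (by rw [norm_sub_rev]; exact hxy)
      rw [phi, sub_self, norm_zero, norm_sub_rev y x] at h1
      have h2 := mul_le_mul_of_nonneg_left (om_le (κ := αb) (norm_nonneg (x - y)))
        (by linarith : 0 ≤ L)
      have h3 : ‖x - y‖ ^ 2 ≤ ‖x - y‖ := by
        rw [sq]; exact mul_le_of_le_one_left (norm_nonneg _) (by linarith)
      have h4 := mul_le_mul_of_nonneg_right hLle (norm_nonneg (x - y))
      linarith
    · have h1 := abs_le.1 (h.bdd x (ball_subset_ball (by norm_num) hx))
      have h2 := abs_le.1 (h.bdd y (ball_subset_ball (by norm_num) hy))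
      have h3 : (2 * L₁ + 408) * (1/8) ≤ (2 * L₁ + 408) * ‖x - y‖ :=
        mul_le_mul_of_nonneg_left hxy (by linarith)
      linarith [h1.2, h2.1]
  intro x hx y hy
  rw [abs_le]
  have h1 := key x hx y hy
  have h2 := key y hy x hx
  rw [norm_sub_rev] at h2
  constructor <;> linarith

/-! ### Compactness -/

open Filter Topology in
/-- Cutting lemma. A function close to one that is strictly touched from above by the paraboloid
of slope `p` and Hessian `M` is touched, at a nearby point, by a paraboloid with the same Hessian
and a non-critical slope. The slope is moved away from `-b` by subtracting
`τ |⟪x - x₀, e⟫ - y|` from the paraboloid, where `e` is an eigenvector of `M` with eigenvalue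
`-μ < 0`; the corner is placed where the `e`-component of the slope plus `b` vanishes, so that
the quadratic part and the corner push it in the same direction. -/
lemma cut {n : ℕ} {v h : En n → ℝ} {x₀ p e b : En n} {M : Matrix (Fin n) (Fin n) ℝ}
    {r δ η τ μ : ℝ} (hM : M.IsSymm) (hr : 0 < r) (hτ : 0 < τ) (hμ : 0 < μ) (he : ‖e‖ = 1)
    (hMe : mv M e = (-μ) • e) (hv : ContinuousOn v (closedBall x₀ r))
    (hvh : ∀ x ∈ closedBall x₀ r, |v x - h x| ≤ δ)
    (hh : ∀ x ∈ closedBall x₀ r,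
      h x ≤ h x₀ + ⟪p, x - x₀⟫ + qf M (x - x₀) / 2 - η / 4 * ‖x - x₀‖ ^ 2)
    (hsmall : 2 * δ + τ * r < η / 4 * r ^ 2) :
    ∃ x₁ ∈ closedBall x₀ r, ∃ p' : En n,
      (∀ᶠ x in 𝓝 x₁, v x ≤ v x₁ + ⟪p', x - x₁⟫ + qf M (x - x₁) / 2) ∧ τ ≤ ‖p' + b‖ := by
  set y₀ := ⟪p + b, e⟫ / μ with hy₀
  set g : En n → ℝ := fun x => ⟪p, x - x₀⟫ + qf M (x - x₀) / 2 - τ * |⟪x - x₀, e⟫ - y₀| with hg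
  have hqc : Continuous fun x : En n => qf M (x - x₀) := by
    simp only [qf, dotProduct, Matrix.mulVec]
    fun_prop
  have hgc : Continuous g := by
    have : Continuous fun x : En n => ⟪x - x₀, e⟫ := by fun_prop
    simp only [hg]; fun_prop
  obtain ⟨x₁, hx₁, hmax⟩ := (isCompact_closedBall x₀ r).exists_isMaxOn
    ⟨x₀, mem_closedBall_self hr.le⟩ (hv.sub hgc.continuousOn)
  have hmax' : ∀ x ∈ closedBall x₀ r, v x - g x ≤ v x₁ - g x₁ := fun x hx => hmax hx
  have hint : x₁ ∈ ball x₀ r := by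
    rw [mem_ball_iff_norm]
    by_contra! hge
    have hx₁' := mem_closedBall_iff_norm.1 hx₁
    have heq : ‖x₁ - x₀‖ = r := le_antisymm hx₁' hge
    have h1 := hmax' x₀ (mem_closedBall_self hr.le)
    have h2 := hh x₁ hx₁
    have h3 := (abs_le.1 (hvh x₁ hx₁)).2
    have h4 := (abs_le.1 (hvh x₀ (mem_closedBall_self hr.le))).1
    have h5 : |⟪x₁ - x₀, e⟫ - y₀| ≤ r + |y₀| := by
      have h6 := abs_real_inner_le_norm (x₁ - x₀) e
      rw [he, mul_one, heq] at h6
      have h7 := abs_sub (⟪x₁ - x₀, e⟫) y₀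
      linarith
    have h8 := mul_le_mul_of_nonneg_left h5 hτ.le
    rw [heq] at h2
    have hg0 : g x₀ = - (τ * |y₀|) := by simp [hg, qf]
    have hg1 : g x₁ = ⟪p, x₁ - x₀⟫ + qf M (x₁ - x₀) / 2 - τ * |⟪x₁ - x₀, e⟫ - y₀| := rfl
    rw [hg0, hg1] at h1
    linarith
  set y₁ := ⟪x₁ - x₀, e⟫ with hy₁
  obtain ⟨s, hs, hs1⟩ : ∃ s : ℝ, s * (y₁ - y₀) = |y₁ - y₀| ∧ |s| = 1 := by
    rcases le_total 0 (y₁ - y₀) with h0 | h0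
    · exact ⟨1, by rw [abs_of_nonneg h0, one_mul], by simp⟩
    · exact ⟨-1, by rw [abs_of_nonpos h0]; ring, by simp⟩
  refine ⟨x₁, hx₁, p + mv M (x₁ - x₀) - (τ * s) • e, ?_, ?_⟩
  · filter_upwards [isOpen_ball.mem_nhds hint] with x hx
    have h1 := hmax' x (ball_subset_closedBall hx)
    have hgx : g x = ⟪p, x - x₀⟫ + qf M (x - x₀) / 2 - τ * |⟪x - x₀, e⟫ - y₀| := rfl
    have hg1 : g x₁ = ⟪p, x₁ - x₀⟫ + qf M (x₁ - x₀) / 2 - τ * |y₁ - y₀| := rfl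
    have hd : x - x₀ = (x₁ - x₀) + (x - x₁) := by abel
    have h2 : s * (⟪x - x₀, e⟫ - y₀) ≤ |⟪x - x₀, e⟫ - y₀| := by
      have := le_abs_self (s * (⟪x - x₀, e⟫ - y₀))
      rwa [abs_mul, hs1, one_mul] at this
    have h3 := mul_le_mul_of_nonneg_left h2 hτ.le
    rw [← hs] at hg1
    have h4 : ⟪x - x₀, e⟫ = y₁ + ⟪x - x₁, e⟫ := by rw [hd, inner_add_left]
    have h5 : ⟪p, x - x₀⟫ = ⟪p, x₁ - x₀⟫ + ⟪p, x - x₁⟫ := by rw [hd, inner_add_right]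
    have h6 : qf M (x - x₀) = qf M (x₁ - x₀) + 2 * ⟪mv M (x₁ - x₀), x - x₁⟫ + qf M (x - x₁) := by
      conv_lhs => rw [hd]
      exact qf_add_vec hM _ _
    rw [h4] at h3 hgx
    rw [h5, h6] at hgx
    rw [inner_sub_left, inner_add_left, real_inner_smul_left, real_inner_comm (x - x₁) e]
    have h7 : τ * (s * (y₁ + ⟪x - x₁, e⟫ - y₀)) = τ * (s * (y₁ - y₀)) + τ * s * ⟪x - x₁, e⟫ := by
      ring
    linarith
  · set P := p + mv M (x₁ - x₀) - (τ * s) • e + b with hP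
    have h1 : ⟪P, e⟫ = - (μ * (y₁ - y₀) + τ * s) := by
      have h2 : ⟪mv M (x₁ - x₀), e⟫ = - μ * y₁ := by
        rw [mv_inner_symm hM, hMe, real_inner_smul_left, real_inner_comm]
      have h3 : ⟪p + b, e⟫ = μ * y₀ := by rw [hy₀]; field_simp
      rw [inner_add_left] at h3
      rw [hP, inner_add_left, inner_sub_left, inner_add_left, real_inner_smul_left,
        real_inner_self_eq_norm_sq, he, h2]
      linarith
    have h4 := abs_real_inner_le_norm P e
    rw [he, mul_one, h1, abs_neg] at h4
    refine le_trans ?_ h4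
    have h5 := le_abs_self (s * (μ * (y₁ - y₀) + τ * s))
    rw [abs_mul, hs1, one_mul] at h5
    refine le_trans ?_ h5
    have h6 : s * s = 1 := by rw [← abs_mul_abs_self, hs1, one_mul]
    have h7 : s * (μ * (y₁ - y₀) + τ * s) = μ * (s * (y₁ - y₀)) + τ * (s * s) := by ring
    rw [h7, h6, hs]
    have := mul_nonneg hμ.le (abs_nonneg (y₁ - y₀))
    linarith

open Filter Topology in
/-- Stability: a uniform limit of members of the class with `ε → 0` is a subsolution of the
constant-coefficient limit equation, with no restriction on the slope of test functions. -/
lemma stab_sub {n : ℕ} {lam Lam αb : ℝ} (hlam : 0 < lam) (hlamLam : lam ≤ Lam)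
    (hα : αb ∈ Ioo (0:ℝ) 1) {l : Filter ℕ} [l.NeBot] {ε : ℕ → ℝ}
    {F : ℕ → En n → Matrix (Fin n) (Fin n) ℝ → ℝ} {b : ℕ → En n} {v : ℕ → En n → ℝ}
    {h : En n → ℝ} {G : Matrix (Fin n) (Fin n) ℝ → ℝ}
    (hc : ∀ j, Cls lam Lam αb (ε j) (F j) (b j) (v j)) (hε0 : ∀ j, 0 < ε j)
    (hε : Tendsto ε l (𝓝 0))
    (hvh : ∀ δ > 0, ∀ᶠ j in l, ∀ x ∈ ball (0 : En n) (3/4), |v j x - h x| ≤ δ)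
    (hG : ∀ M : Matrix (Fin n) (Fin n) ℝ, M.IsSymm → Tendsto (fun j => F j 0 M) l (𝓝 (G M)))
    (hGe : IsUnifEllipticConst lam Lam G) {ψ : En n → ℝ} (hψ : ContDiff ℝ 2 ψ) {x₀ : En n}
    (hx₀ : x₀ ∈ ball (0 : En n) (3/4)) (hmax : IsLocalMax (fun x => h x - ψ x) x₀) :
    0 ≤ G (hessMat ψ x₀) := by
  by_contra! hneg
  have hLam : 0 < Lam := hlam.trans_le hlamLam
  set H := hessMat ψ x₀ with hH
  have hHs : H.IsSymm := hess_symm hψ x₀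
  set η := - G H / (2 * (n * Lam + 1)) with hη
  have hη0 : 0 < η := by
    have : 0 < - G H := by linarith
    positivity
  set M := H + η • (1 : Matrix (Fin n) (Fin n) ℝ) with hMdef
  have hM : M.IsSymm := hHs.add (Matrix.isSymm_one.smul η)
  have hGM : G M < 0 := by
    have h1 := (hGe.1 M H hM hHs).2
    rw [hMdef, add_sub_cancel_left, ← hMdef] at h1
    have h2 := pucciPlus_le (n := n) (M := η • 1) hlamLam hη0.le (by
      rw [sub_self]; exact Matrix.PosSemidef.zero)
    rw [sub_self, Matrix.trace_zero, mul_zero, sub_zero] at h2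
    have h3 : η * (2 * (n * Lam + 1)) = - G H := by
      rw [hη]; field_simp
    have h4 : 0 ≤ n * Lam * η := by positivity
    linarith [show η * (2 * (n * Lam + 1)) = 2 * (n * Lam * η) + 2 * η by ring]
  have hMn : ¬ M.PosSemidef := by
    intro hP
    have h1 := (hGe.1 M 0 hM Matrix.isSymm_zero).1
    rw [sub_zero, hGe.2, sub_zero] at h1
    linarith [pucciMinus_nonneg hlam hlamLam hP]
  obtain ⟨e, μ, he, hμ, hMe⟩ := exists_neg_eigen hM hMn
  set p := gradient ψ x₀ with hp
  have hloc : ∀ᶠ x in 𝓝 x₀,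
      h x ≤ h x₀ + ⟪p, x - x₀⟫ + qf M (x - x₀) / 2 - η / 4 * ‖x - x₀‖ ^ 2 := by
    filter_upwards [c2_expand hψ x₀ (by positivity : 0 < η / 4), hmax] with x h1 h2
    have h3 := (abs_le.1 h1).2
    rw [hMdef, qf_add, qf_smul, qf_one]
    linarith
  obtain ⟨r₁, hr₁, hball⟩ := Metric.eventually_nhds_iff_ball.1
    (hloc.and (isOpen_ball.mem_nhds hx₀))
  set r := r₁ / 2 with hr
  have hr0 : 0 < r := by positivity
  have hsub : ∀ x ∈ closedBall x₀ r, x ∈ ball x₀ r₁ :=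
    fun x hx => closedBall_subset_ball (by linarith) hx
  set τ := η * r / 16 with hτ
  have hτ0 : 0 < τ := by positivity
  set δ := η * r ^ 2 / 32 with hδ
  have hδ0 : 0 < δ := by positivity
  have hev : ∀ᶠ j in l, - ε j * (‖M‖ + 2) ≤ F j 0 M := by
    filter_upwards [hvh δ hδ0, hε.eventually (gt_mem_nhds hτ0)] with j hj1 hj2
    obtain ⟨x₁, hx₁, p', ht, hp'⟩ := cut (v := v j) (h := h) (b := b j) (δ := δ) (η := η) hM hr0 hτ0
      hμ he hMe
      ((hc j).cont.mono fun x hx => ball_subset_ball (by norm_num) (hball x (hsub x hx)).2)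
      (fun x hx => hj1 x (hball x (hsub x hx)).2) (fun x hx => (hball x (hsub x hx)).1)
      (by
        have : 0 < η * r ^ 2 := by positivity
        rw [hτ, hδ]
        linarith [show η * r / 16 * r = η * r ^ 2 / 16 by ring])
    have hx1 : x₁ ∈ ball (0 : En n) 1 :=
      ball_subset_ball (by norm_num) (hball x₁ (hsub x₁ hx₁)).2
    have h1 := (hc j).sub x₁ hx1 p' M hM ht (hj2.le.trans hp')
    have h2 := (abs_le.1 ((hc j).osc x₁ hx1 0 (mem_ball_self one_pos) M hM)).2
    rw [sub_zero] at h2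
    have h3 : ‖x₁‖ ^ αb ≤ 1 :=
      Real.rpow_le_one (norm_nonneg _) (mem_ball_zero_iff.1 hx1).le hα.1.le
    have h4 : ε j * ‖x₁‖ ^ αb * (‖M‖ + 1) ≤ ε j * 1 * (‖M‖ + 1) := by
      have := (hε0 j).le
      gcongr
    linarith [show - ε j * (‖M‖ + 2) = - ε j - ε j * 1 * (‖M‖ + 1) by ring]
  have hlim : Tendsto (fun j => - ε j * (‖M‖ + 2)) l (𝓝 (-0 * (‖M‖ + 2))) :=
    (hε.neg).mul_const _
  have := le_of_tendsto_of_tendsto hlim (hG M hM) hev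
  linarith

open Filter Topology in
lemma ultra_lim (U : Ultrafilter ℕ) {f : ℕ → ℝ} {A B : ℝ} (hf : ∀ j, f j ∈ Icc A B) :
    ∃ a, Tendsto f U (𝓝 a) := by
  obtain ⟨a, -, ha⟩ := (isCompact_Icc (a := A) (b := B)).ultrafilter_le_nhds (U.map f) (by
    rw [Ultrafilter.coe_map, le_principal_iff]
    exact mem_map.2 (Filter.univ_mem' hf))
  exact ⟨a, ha⟩

open Filter Topology in
/-- Equi-Lipschitz functions converging pointwise on a bounded set converge uniformly. -/
lemma unif_of_lip {n : ℕ} {l : Filter ℕ} {v : ℕ → En n → ℝ} {h : En n → ℝ} {L : ℝ}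
    (hL : 0 < L) {S : Set (En n)} (hS : TotallyBounded S)
    (hv : ∀ j, ∀ x ∈ S, ∀ y ∈ S, |v j x - v j y| ≤ L * ‖x - y‖)
    (hh : ∀ x ∈ S, ∀ y ∈ S, |h x - h y| ≤ L * ‖x - y‖)
    (hlim : ∀ x ∈ S, Tendsto (fun j => v j x) l (𝓝 (h x))) {δ : ℝ} (hδ : 0 < δ) :
    ∀ᶠ j in l, ∀ x ∈ S, |v j x - h x| ≤ δ := by
  obtain ⟨t, htS, htf, ht⟩ := totallyBounded_iff_subset.1 hS _
    (Metric.dist_mem_uniformity (show 0 < δ / (3 * L) by positivity))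
  have h1 : ∀ᶠ j in l, ∀ y ∈ t, |v j y - h y| < δ / 3 := by
    rw [htf.eventually_all]
    intro y hy
    have := Metric.tendsto_nhds.1 (hlim y (htS hy)) (δ / 3) (by positivity)
    simpa [Real.dist_eq] using this
  filter_upwards [h1] with j hj x hx
  obtain ⟨y, hy, hxy⟩ := mem_iUnion₂.1 (ht hx)
  have hd : ‖x - y‖ < δ / (3 * L) := by simpa [dist_eq_norm] using hxy
  have hd' : L * ‖x - y‖ ≤ δ / 3 := by
    rw [lt_div_iff₀ (by positivity)] at hd; linarith
  have a1 := abs_le.1 (hv j x hx y (htS hy))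
  have a2 := abs_le.1 (hh x hx y (htS hy))
  have a3 := abs_le.1 (hj y hy).le
  rw [abs_le]
  constructor <;> linarith [a1.1, a1.2, a2.1, a2.2, a3.1, a3.2]

lemma hessMat_neg {n : ℕ} (ψ : En n → ℝ) (x : En n) :
    hessMat (fun y => - ψ y) x = - hessMat ψ x := by
  ext i j
  have : iteratedFDeriv ℝ 2 (fun y => - ψ y) x = - iteratedFDeriv ℝ 2 ψ x :=
    iteratedFDeriv_neg_apply
  simp [hessMat, this]

open Filter Topology in
/-- Approximation: for `ε` small, members of the class are `δ`-close to solutions of homogeneous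
constant-coefficient equations. -/
lemma compact_approx (n : ℕ) {lam Lam αb : ℝ} (hlam : 0 < lam) (hlamLam : lam ≤ Lam)
    (hα : αb ∈ Ioo (0:ℝ) 1) : ∃ L : ℝ, 0 < L ∧ ∀ δ > 0, ∃ ε : ℝ, 0 < ε ∧
      ∀ (F : En n → Matrix (Fin n) (Fin n) ℝ → ℝ) (b : En n) (v : En n → ℝ),
        Cls lam Lam αb ε F b v →
        ∃ (G : Matrix (Fin n) (Fin n) ℝ → ℝ) (h : En n → ℝ), IsUnifEllipticConst lam Lam G ∧
          IsViscositySolutionOn (ball (0 : En n) (3/4)) (fun _ _ M => G M) (fun _ => 0) h ∧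
          (∀ x ∈ ball (0 : En n) (3/4), |h x| ≤ 1) ∧
          (∀ x ∈ ball (0 : En n) (3/4), ∀ y ∈ ball (0 : En n) (3/4),
            |h x - h y| ≤ L * ‖x - y‖) ∧
          ∀ x ∈ ball (0 : En n) (3/4), |v x - h x| ≤ δ := by
  obtain ⟨L, ε₀, hL, hε₀, hlip⟩ := Cls.exists_lipschitz n hlam hlamLam hα
  refine ⟨L, hL, fun δ hδ => ?_⟩
  by_contra! hcon
  set ε : ℕ → ℝ := fun j => min ε₀ (1 / ((j:ℝ) + 1)) with hεdef
  have hε0 : ∀ j, 0 < ε j := fun j => lt_min hε₀ (by positivity)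
  have hεlim : Tendsto ε atTop (𝓝 0) :=
    squeeze_zero (fun j => (hε0 j).le) (fun j => min_le_right _ _)
      tendsto_one_div_add_atTop_nhds_zero_nat
  choose F b v hc hbad using fun j => hcon (ε j) (hε0 j)
  set U : Ultrafilter ℕ := hyperfilter ℕ with hU
  have hεU : Tendsto ε U (𝓝 0) :=
    hεlim.mono_left (by rw [← Nat.cofinite_eq_atTop]; exact hyperfilter_le_cofinite)
  have hB : ∀ x ∈ ball (0 : En n) (3/4), x ∈ ball (0 : En n) 1 :=
    fun x hx => ball_subset_ball (by norm_num) hx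
  have h01 : (0 : En n) ∈ ball (0 : En n) 1 := mem_ball_self one_pos
  have hGex : ∀ M : Matrix (Fin n) (Fin n) ℝ, ∃ a, M.IsSymm →
      Tendsto (fun j => F j 0 M) U (𝓝 a) := by
    intro M
    by_cases hM : M.IsSymm
    · obtain ⟨a, ha⟩ := ultra_lim U (f := fun j => F j 0 M) (A := pucciMinus lam Lam M)
        (B := pucciPlus lam Lam M) (fun j => by
          have := (hc j).ell.1 0 h01 M 0 hM Matrix.isSymm_zero
          rwa [sub_zero, (hc j).ell.2 0 h01, sub_zero] at this)
      exact ⟨a, fun _ => ha⟩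
    · exact ⟨0, fun h => absurd h hM⟩
  choose G hG using hGex
  have hhex : ∀ x : En n, ∃ a, x ∈ ball (0 : En n) (3/4) →
      Tendsto (fun j => v j x) U (𝓝 a) := by
    intro x
    by_cases hx : x ∈ ball (0 : En n) (3/4)
    · obtain ⟨a, ha⟩ := ultra_lim U (f := fun j => v j x) (A := -1)
        (B := 1) (fun j => abs_le.1 ((hc j).bdd x (hB x hx)))
      exact ⟨a, fun _ => ha⟩
    · exact ⟨0, fun h => absurd h hx⟩
  choose h hh using hhex
  have hvl : ∀ j, ∀ x ∈ ball (0 : En n) (3/4), ∀ y ∈ ball (0 : En n) (3/4),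
      |v j x - v j y| ≤ L * ‖x - y‖ :=
    fun j => hlip (ε j) (F j) (b j) (v j) (hε0 j) (min_le_left _ _) (hc j)
  have hhl : ∀ x ∈ ball (0 : En n) (3/4), ∀ y ∈ ball (0 : En n) (3/4),
      |h x - h y| ≤ L * ‖x - y‖ := fun x hx y hy =>
    le_of_tendsto (((hh x hx).sub (hh y hy)).abs) (Eventually.of_forall fun j => hvl j x hx y hy)
  have hh1 : ∀ x ∈ ball (0 : En n) (3/4), |h x| ≤ 1 := fun x hx =>
    le_of_tendsto (hh x hx).abs (Eventually.of_forall fun j => (hc j).bdd x (hB x hx))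
  have hunif : ∀ δ > 0, ∀ᶠ j in (U : Filter ℕ), ∀ x ∈ ball (0 : En n) (3/4),
      |v j x - h x| ≤ δ := fun δ hδ =>
    unif_of_lip hL ((isCompact_closedBall (0 : En n) (3/4)).totallyBounded.subset
      ball_subset_closedBall) hvl hhl hh hδ
  have hGe : IsUnifEllipticConst lam Lam G := by
    refine ⟨fun M N hM hN => ⟨?_, ?_⟩, ?_⟩
    · exact ge_of_tendsto ((hG M hM).sub (hG N hN))
        (Eventually.of_forall fun j => ((hc j).ell.1 0 h01 M N hM hN).1)
    · exact le_of_tendsto ((hG M hM).sub (hG N hN))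
        (Eventually.of_forall fun j => ((hc j).ell.1 0 h01 M N hM hN).2)
    · refine tendsto_nhds_unique (hG 0 Matrix.isSymm_zero) ?_
      simp only [(hc _).ell.2 0 h01]
      exact tendsto_const_nhds
  have hvisc : IsViscositySolutionOn (ball (0 : En n) (3/4)) (fun _ _ M => G M) (fun _ => 0) h := by
    refine ⟨fun ψ hψ x₀ hx₀ hmax => ?_, fun ψ hψ x₀ hx₀ hmin => ?_⟩
    · exact stab_sub hlam hlamLam hα hc hε0 hεU hunif hG hGe hψ hx₀ hmax
    · have hGe' : IsUnifEllipticConst lam Lam (fun M => - G (-M)) := by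
        refine ⟨fun M N hM hN => ?_, by simp [hGe.2]⟩
        have := hGe.1 (-N) (-M) hN.neg hM.neg
        rw [show -N - -M = M - N by abel] at this
        constructor <;> linarith [this.1, this.2]
      have := stab_sub (h := fun x => - h x) (G := fun M => - G (-M)) hlam hlamLam hα
        (fun j => (hc j).neg) hε0 hεU
        (fun δ hδ => by
          filter_upwards [hunif δ hδ] with j hj x hx
          rw [show - v j x - - h x = -(v j x - h x) by ring, abs_neg]
          exact hj x hx)
        (fun M hM => (hG (-M) hM.neg).neg) hGe' (ψ := fun x => - ψ x) hψ.neg hx₀ (by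
          have := hmin.neg
          refine this.congr (Eventually.of_forall fun x => ?_)
          simp only
          ring)
      simp only [hessMat_neg, neg_neg] at this
      linarith
  obtain ⟨j, hj⟩ := (hunif δ hδ).exists
  obtain ⟨x, hx, hxb⟩ := hbad j G h hGe hvisc hh1 hhl
  exact absurd (hj x hx) (not_le.2 hxb)

/-! ### Improvement of flatness -/

/-- Composition of a test function with the affine change `ψ ↦ c ψ + a + ⟪g, ·⟫`. -/
lemma hessMat_affine {n : ℕ} {ψ : En n → ℝ} (hψ : ContDiff ℝ 2 ψ) (c a : ℝ) (g x : En n) :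
    hessMat (fun y => c * ψ y + (a + ⟪g, y⟫)) x = c • hessMat ψ x := by
  have haff : ContDiff ℝ 2 fun y : En n => a + ⟪g, y⟫ :=
    contDiff_const.add (contDiff_const.inner ℝ contDiff_id)
  have h0 : iteratedFDeriv ℝ 2 (fun y : En n => a + ⟪g, y⟫) x = 0 := by
    have hd : fderiv ℝ (fun y : En n => a + ⟪g, y⟫) = fun _ => innerSL ℝ g := by
      funext y
      exact (((innerSL ℝ g).hasFDerivAt (x := y)).const_add a).fderiv
    ext m
    rw [iteratedFDeriv_two_apply, hd]
    simp
  have h1 : iteratedFDeriv ℝ 2 (fun y => c * ψ y + (a + ⟪g, y⟫)) x =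
      c • iteratedFDeriv ℝ 2 ψ x := by
    have h2 := iteratedFDeriv_add_apply (𝕜 := ℝ) (i := 2) (x := x)
      (f := fun y => c * ψ y) (g := fun y : En n => a + ⟪g, y⟫)
      (contDiff_const.mul hψ).contDiffAt haff.contDiffAt
    have h3 := iteratedFDeriv_const_smul_apply (𝕜 := ℝ) (a := c) (i := 2) (x := x) (f := ψ)
      hψ.contDiffAt
    rw [h0, add_zero] at h2
    exact h2.trans h3
  ext i j
  simp [hessMat, h1]

/-- Subtracting an affine function and dividing by `c > 0` turns a solution of `G(D²h) = 0` into a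
solution of an equation with the same ellipticity constants. -/
lemma visc_affine {n : ℕ} {Ω : Set (En n)} {G : Matrix (Fin n) (Fin n) ℝ → ℝ} {h : En n → ℝ}
    (hh : IsViscositySolutionOn Ω (fun _ _ M => G M) (fun _ => 0) h) {c : ℝ} (hc : 0 < c)
    (a : ℝ) (g : En n) :
    IsViscositySolutionOn Ω (fun _ _ M => G (c • M) / c) (fun _ => 0)
      (fun x => (h x - (a + ⟪g, x⟫)) / c) := by
  have haff : ContDiff ℝ 2 fun y : En n => a + ⟪g, y⟫ :=
    contDiff_const.add (contDiff_const.inner ℝ contDiff_id)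
  have key : ∀ (ψ : En n → ℝ) (x : En n), h x - (c * ψ x + (a + ⟪g, x⟫)) =
      c * ((h x - (a + ⟪g, x⟫)) / c - ψ x) := by
    intro ψ x
    field_simp
    ring
  refine ⟨fun ψ hψ x₀ hx₀ hmax => ?_, fun ψ hψ x₀ hx₀ hmin => ?_⟩
  · have := hh.1 _ ((contDiff_const.mul hψ).add haff) x₀ hx₀ (by
      filter_upwards [hmax] with x hx
      rw [key ψ x, key ψ x₀]
      exact mul_le_mul_of_nonneg_left hx hc.le)
    simp only [hessMat_affine hψ] at this
    exact div_nonneg this hc.le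
  · have := hh.2 _ ((contDiff_const.mul hψ).add haff) x₀ hx₀ (by
      filter_upwards [hmin] with x hx
      rw [key ψ x, key ψ x₀]
      exact mul_le_mul_of_nonneg_left hx hc.le)
    simp only [hessMat_affine hψ] at this
    exact div_nonpos_of_nonpos_of_nonneg this hc.le

/-- The first-order Taylor remainder of `h` at the origin has zero gradient there; if `h` is not
differentiable, neither is the remainder, and both gradients are zero by convention. -/
lemma gradient_remainder {n : ℕ} (h : En n → ℝ) {c : ℝ} (hc : 0 < c) (a : ℝ) :
    gradient (fun x => (h x - (a + ⟪gradient h 0, x⟫)) / c) 0 = 0 := by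
  set g := gradient h 0 with hg
  by_cases hd : DifferentiableAt ℝ h 0
  · have h1 : HasGradientAt h g 0 := hd.hasGradientAt
    have h2 : HasFDerivAt (fun x : En n => a + ⟪g, x⟫) (innerSL ℝ g) 0 :=
      ((innerSL ℝ g).hasFDerivAt).const_add a
    have h3 : HasFDerivAt (fun x => (h x - (a + ⟪g, x⟫)) / c) (0 : En n →L[ℝ] ℝ) 0 := by
      simp only [div_eq_mul_inv]
      refine HasFDerivAt.congr_fderiv
        (HasFDerivAt.mul_const (HasFDerivAt.sub h1.hasFDerivAt h2) c⁻¹) ?_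
      ext y
      simp
    rw [gradient, h3.fderiv, map_zero]
  · have h4 : ¬ DifferentiableAt ℝ (fun x => (h x - (a + ⟪g, x⟫)) / c) 0 := by
      intro h5
      apply hd
      have h6 : DifferentiableAt ℝ (fun x : En n => a + ⟪g, x⟫) 0 :=
        ((innerSL ℝ g).hasFDerivAt.const_add a).differentiableAt
      have h7 := (h5.const_mul c).add h6
      refine h7.congr_of_eventuallyEq (Filter.Eventually.of_forall fun x => ?_)
      simp only [Pi.add_apply]
      field_simp
      ring
    exact gradient_eq_zero_of_not_differentiableAt h4

/-- Flatness improvement: members of the class are, at the scale `ρ₁`, within `ρ₁^{1+β}` of an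
affine function with bounded slope. -/
lemma flat (n : ℕ) {lam Lam αb α₀ C₀ β : ℝ} (hlam : 0 < lam) (hlamLam : lam ≤ Lam)
    (hα : αb ∈ Ioo (0:ℝ) 1) (hC₀ : 0 < C₀) (hap : InteriorC1AlphaEstimate n lam Lam α₀ C₀)
    (hβα : β < α₀) : ∃ ρ₁ ε L : ℝ, 0 < ρ₁ ∧ ρ₁ ≤ 1/2 ∧ 0 < ε ∧ 0 < L ∧
      ∀ (F : En n → Matrix (Fin n) (Fin n) ℝ → ℝ) (b : En n) (v : En n → ℝ),
        Cls lam Lam αb ε F b v → ∃ (a : ℝ) (q : En n), ‖q‖ ≤ L ∧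
          ∀ x ∈ ball (0 : En n) ρ₁, |v x - a - ⟪q, x⟫| ≤ ρ₁ ^ (1 + β) := by
  obtain ⟨L, hL, hcomp⟩ := compact_approx n hlam hlamLam hα
  set c := 2 + L with hc
  have hc0 : 0 < c := by linarith
  set κ := α₀ - β with hκ
  have hκ0 : 0 < κ := by linarith
  set Q := 1 / (2 * c * C₀) with hQ
  have hQ0 : 0 < Q := by positivity
  set ρ₁ := min (1/2) (Q ^ (1 / κ)) with hρ
  have hρ0 : 0 < ρ₁ := lt_min (by norm_num) (by positivity)
  have hρ2 : ρ₁ ≤ 1/2 := min_le_left _ _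
  have hρκ : ρ₁ ^ κ ≤ Q := by
    calc ρ₁ ^ κ ≤ (Q ^ (1 / κ)) ^ κ := Real.rpow_le_rpow hρ0.le (min_le_right _ _) hκ0.le
      _ = Q := by rw [← Real.rpow_mul hQ0.le, one_div_mul_cancel hκ0.ne', Real.rpow_one]
  have hpos : 0 < ρ₁ ^ (1 + β) := Real.rpow_pos_of_pos hρ0 _
  have hsplit : c * (C₀ * ρ₁ ^ (1 + α₀)) ≤ ρ₁ ^ (1 + β) / 2 := by
    rw [show 1 + α₀ = (1 + β) + κ by rw [hκ]; ring, Real.rpow_add hρ0]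
    have h1 := mul_le_mul_of_nonneg_left hρκ (by positivity : 0 ≤ c * C₀ * ρ₁ ^ (1 + β))
    have h2 : c * C₀ * ρ₁ ^ (1 + β) * Q = ρ₁ ^ (1 + β) / 2 := by rw [hQ]; field_simp
    linarith [show c * (C₀ * (ρ₁ ^ (1 + β) * ρ₁ ^ κ)) = c * C₀ * ρ₁ ^ (1 + β) * ρ₁ ^ κ by ring]
  obtain ⟨ε, hε, happ⟩ := hcomp (ρ₁ ^ (1 + β) / 2) (by positivity)
  refine ⟨ρ₁, ε, L, hρ0, hρ2, hε, hL, fun F b v hcl => ?_⟩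
  obtain ⟨G, h, hGe, hvisc, hh1, hhl, hvh⟩ := happ F b v hcl
  have h034 : (0 : En n) ∈ ball (0 : En n) (3/4) := mem_ball_self (by norm_num)
  set g := gradient h 0 with hg
  have hgL : ‖g‖ ≤ L := by
    rw [hg, gradient, LinearIsometryEquiv.norm_map]
    refine norm_fderiv_le_of_lip' ℝ hL.le ?_
    filter_upwards [isOpen_ball.mem_nhds h034] with x hx
    rw [Real.norm_eq_abs]
    exact hhl x hx 0 h034
  refine ⟨h 0, g, hgL, fun x hx => ?_⟩
  have hcont : ContinuousOn h (ball (0 : En n) (3/4)) := by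
    have : LipschitzOnWith (Real.toNNReal L) h (ball (0 : En n) (3/4)) := by
      refine LipschitzOnWith.of_dist_le_mul fun x hx y hy => ?_
      rw [Real.dist_eq, dist_eq_norm, Real.coe_toNNReal _ hL.le]
      exact hhl x hx y hy
    exact this.continuousOn
  have hin : ∀ y ∈ ball (0 : En n) (3/4), |⟪g, y⟫| ≤ L := by
    intro y hy
    have h1 := abs_real_inner_le_norm g y
    have h2 : ‖y‖ ≤ 1 := by have := mem_ball_zero_iff.1 hy; linarith
    have h3 := mul_le_mul hgL h2 (norm_nonneg _) hL.le
    linarith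
  have hGe' : IsUnifEllipticConst lam Lam (fun M => G (c • M) / c) := by
    refine ⟨fun M N hM hN => ?_, by simp [hGe.2]⟩
    have h1 := hGe.1 (c • M) (c • N) (hM.smul c) (hN.smul c)
    rw [← smul_sub, pucciMinus_smul lam Lam hc0.le, pucciPlus_smul lam Lam hc0.le] at h1
    simp only
    rw [← sub_div, le_div_iff₀ hc0, div_le_iff₀ hc0]
    constructor <;> linarith [h1.1, h1.2]
  have hest := hap _ hGe' (fun x => (h x - (h 0 + ⟪g, x⟫)) / c)
    (by
      have : Continuous fun x : En n => h 0 + ⟪g, x⟫ := by fun_prop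
      exact (hcont.sub this.continuousOn).div_const c)
    (visc_affine hvisc hc0 _ _)
    (fun y hy => by
      rw [abs_div, abs_of_pos hc0, div_le_one hc0]
      have h1 := abs_le.1 (hh1 y hy)
      have h2 := abs_le.1 (hh1 0 h034)
      have h3 := abs_le.1 (hin y hy)
      rw [abs_le]
      constructor <;> linarith [h1.1, h1.2, h2.1, h2.2, h3.1, h3.2])
    (by simp) (gradient_remainder h hc0 _) ρ₁ hρ0 hρ2 x hx
  rw [abs_div, abs_of_pos hc0, div_le_iff₀ hc0] at hest
  have h1 := abs_le.1 hest
  have h2 := abs_le.1 (hvh x (ball_subset_ball (by linarith) hx))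
  rw [abs_le]
  constructor <;> linarith [h1.1, h1.2, h2.1, h2.2]

/-! ### Rescaling -/

/-- Dividing out the degeneracy: if the factor `D` is bounded below by `d > 0`, the inequality
`fv ≤ D Fv` becomes a lower bound for `Fv` alone. -/
lemma nondeg {D d Fv fv k t ε : ℝ} (hd : 0 < d) (hD : d ≤ D) (hf : -k ≤ fv) (ht : 0 ≤ t)
    (hε : 0 ≤ ε) (hk : t * k ≤ ε * d) (h : fv ≤ D * Fv) : -ε ≤ t * Fv := by
  rcases le_total 0 Fv with h0 | h0
  · have := mul_nonneg ht h0; linarith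
  · have h1 : D * Fv ≤ d * Fv := mul_le_mul_of_nonpos_right hD h0
    have h2 : t * (-k) ≤ t * (d * Fv) := mul_le_mul_of_nonneg_left (by linarith) ht
    have h3 : d * (-ε) ≤ d * (t * Fv) := by
      linarith [show t * (d * Fv) = d * (t * Fv) by ring]
    exact le_of_mul_le_mul_left h3 hd

open Filter Topology in
/-- Rescaling: if `u` is within `s` of an affine function of slope `q` on `B_r`, the normalized
difference belongs to the class, with drift `(r / s) q`. -/
lemma resc {n : ℕ} {lam Lam tlam tLam γ K₁ αb K₂ θ ε r s a : ℝ} (htlam : 0 < tlam)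
    (hγ : γ ∈ Ioo (0:ℝ) 1) (hK₂ : 0 < K₂)
    (hθ : θ ∈ Ioo (0:ℝ) 1) {Dg : En n → En n → ℝ} {F : En n → Matrix (Fin n) (Fin n) ℝ → ℝ}
    {f u : En n → ℝ} (hF : IsUnifElliptic lam Lam F)
    (hosc : ∀ x ∈ ball (0 : En n) 1, ∀ y ∈ ball (0 : En n) 1,
          ∀ M : Matrix (Fin n) (Fin n) ℝ, M.IsSymm →
          |F x M - F y M| ≤ K₁ * ‖x - y‖ ^ αb * (‖M‖ + 1))
    (hD : IsDegeneracyLaw tlam tLam γ Dg)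
    (hf : ∀ x ∈ ball (0 : En n) 1, |f x| ≤ K₂ * ‖x‖ ^ θ)
    (hu : ContinuousOn u (ball (0 : En n) 1))
    (hvisc : IsViscositySolutionOn (ball (0 : En n) 1) (fun x p M => Dg x p * F x M) f u)
    (hε : 0 < ε) (hr : 0 < r) (hr1 : r ≤ 1) (hs : 0 < s) (hrs : r ^ 2 ≤ s)
    (hK1 : K₁ * r ^ αb ≤ ε)
    (hK2 : K₂ * r ^ θ * (r ^ 2 / s) * (r / s) ^ γ ≤ tlam * ε ^ (1 + γ)) {q : En n}
    (happ : ∀ x ∈ ball (0 : En n) r, |u x - a - ⟪q, x⟫| ≤ s) :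
    Cls lam Lam αb ε (fun x M => r ^ 2 / s * F (r • x) ((s / r ^ 2) • M)) ((r / s) • q)
      (fun x => (u (r • x) - a - ⟪q, r • x⟫) / s) := by
  have hball : ∀ x ∈ ball (0 : En n) 1, r • x ∈ ball (0 : En n) r := by
    intro x hx
    rw [mem_ball_zero_iff] at hx ⊢
    rw [norm_smul, Real.norm_eq_abs, abs_of_pos hr]
    calc r * ‖x‖ < r * 1 := mul_lt_mul_of_pos_left hx hr
      _ = r := mul_one r
  have hball1 : ∀ x ∈ ball (0 : En n) 1, r • x ∈ ball (0 : En n) 1 :=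
    fun x hx => ball_subset_ball hr1 (hball x hx)
  set t := r ^ 2 / s with ht
  have ht0 : 0 < t := by positivity
  have ht1 : t ≤ 1 := (div_le_one hs).2 hrs
  have htinv : t * (s / r ^ 2) = 1 := by rw [ht]; field_simp
  set T := s / r ^ 2 with hT
  have hT0 : 0 < T := by positivity
  set d := tlam * (s / r * ε) ^ γ with hd
  have hd0 : 0 < d := by positivity
  -- the smallness of the right-hand side, relative to the least non-critical degeneracy
  have hkd : t * (K₂ * r ^ θ) ≤ ε * d := by
    have e1 : (r / s) ^ γ * (s / r) ^ γ = 1 := by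
      rw [← Real.mul_rpow (by positivity) (by positivity), div_mul_div_cancel₀ hs.ne',
        div_self hr.ne', Real.one_rpow]
    have e2 := mul_le_mul_of_nonneg_right hK2 (by positivity : 0 ≤ (s / r) ^ γ)
    rw [mul_assoc, e1] at e2
    rw [hd, Real.mul_rpow (by positivity) hε.le]
    rw [Real.rpow_add hε, Real.rpow_one] at e2
    linarith
  have hfb : ∀ x ∈ ball (0 : En n) 1, |f (r • x)| ≤ K₂ * r ^ θ := by
    intro x hx
    refine (hf _ (hball1 x hx)).trans ?_
    have := (mem_ball_zero_iff.1 (hball x hx)).le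
    have := Real.rpow_le_rpow (norm_nonneg _) this hθ.1.le
    exact mul_le_mul_of_nonneg_left this hK₂.le
  have hDb : ∀ x ∈ ball (0 : En n) 1, ∀ p : En n, ε ≤ ‖p + (r / s) • q‖ →
      d ≤ Dg (r • x) ((s / r) • p + q) := by
    intro x hx p hp
    refine le_trans ?_ (hD _ (hball1 x hx) _).1
    have e1 : (s / r) • p + q = (s / r) • (p + (r / s) • q) := by
      rw [smul_add, smul_smul, div_mul_div_cancel₀ hr.ne', div_self hs.ne', one_smul]
    rw [e1, norm_smul, Real.norm_eq_abs, abs_of_pos (by positivity), hd]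
    have := hγ.1.le
    gcongr
  have hpull : ∀ x₀ : En n, Tendsto (fun y : En n => r⁻¹ • y) (𝓝 (r • x₀)) (𝓝 x₀) := by
    intro x₀
    have : Continuous fun y : En n => r⁻¹ • y := by fun_prop
    have h1 := this.tendsto (r • x₀)
    rwa [inv_smul_smul₀ hr.ne'] at h1
  have hscale : ∀ (x₀ y p : En n) (M : Matrix (Fin n) (Fin n) ℝ),
      s * (⟪p, r⁻¹ • y - x₀⟫ + qf M (r⁻¹ • y - x₀) / 2) + ⟪q, y⟫ =
      ⟪q, r • x₀⟫ + ⟪(s / r) • p + q, y - r • x₀⟫ + qf (T • M) (y - r • x₀) / 2 := by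
    intro x₀ y p M
    have e1 : r⁻¹ • y - x₀ = r⁻¹ • (y - r • x₀) := by
      rw [smul_sub, inv_smul_smul₀ hr.ne']
    have e2 : ⟪q, y⟫ = ⟪q, r • x₀⟫ + ⟪q, y - r • x₀⟫ := by
      rw [← inner_add_right]; congr 1; abel
    rw [e1, e2, qf_smul_vec, qf_smul, inner_add_left, real_inner_smul_left, real_inner_smul_right,
      hT]
    field_simp
    ring
  constructor
  · refine ⟨fun x hx M N hM hN => ?_, fun x hx => by simp [hF.2 _ (hball1 x hx)]⟩
    have h1 := hF.1 _ (hball1 x hx) (T • M) (T • N) (hM.smul T) (hN.smul T)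
    rw [← smul_sub, pucciMinus_smul lam Lam hT0.le, pucciPlus_smul lam Lam hT0.le] at h1
    have h2 := mul_le_mul_of_nonneg_left h1.1 ht0.le
    have h3 := mul_le_mul_of_nonneg_left h1.2 ht0.le
    rw [← mul_assoc, htinv, one_mul] at h2 h3
    constructor <;> linarith
  · intro x hx y hy M hM
    have h1 := hosc _ (hball1 x hx) _ (hball1 y hy) (T • M) (hM.smul T)
    have hn : ‖T • M‖ = T * ‖M‖ := by
      let _ : NormedSpace ℝ (Matrix (Fin n) (Fin n) ℝ) := Matrix.normedSpace
      rw [norm_smul, Real.norm_eq_abs, abs_of_pos hT0]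
    rw [← smul_sub, norm_smul, Real.norm_eq_abs, abs_of_pos hr,
      Real.mul_rpow hr.le (norm_nonneg _), hn] at h1
    rw [← mul_sub, abs_mul, abs_of_pos ht0]
    calc t * |F (r • x) (T • M) - F (r • y) (T • M)|
        ≤ t * (K₁ * (r ^ αb * ‖x - y‖ ^ αb) * (T * ‖M‖ + 1)) :=
          mul_le_mul_of_nonneg_left h1 ht0.le
      _ = K₁ * r ^ αb * ‖x - y‖ ^ αb * (t * T * ‖M‖ + t) := by ring
      _ ≤ ε * ‖x - y‖ ^ αb * (‖M‖ + 1) := by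
          rw [htinv, one_mul]
          have : 0 ≤ ‖x - y‖ ^ αb := by positivity
          have : 0 ≤ ‖M‖ := norm_nonneg _
          gcongr
  · have h1 : ContinuousOn (fun x : En n => u (r • x)) (ball 0 1) :=
      hu.comp (by fun_prop) hball1
    have h2 : Continuous fun x : En n => ⟪q, r • x⟫ := by fun_prop
    exact ((h1.sub continuousOn_const).sub h2.continuousOn).div_const s
  · intro x hx
    rw [abs_div, abs_of_pos hs, div_le_one hs]
    exact happ _ (hball x hx)
  · intro x₀ hx₀ p M hM htouch hp
    have h1 := visc_above hvisc (p := (s / r) • p + q) (hball1 x₀ hx₀) (hM.smul T) (by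
      filter_upwards [(hpull x₀).eventually htouch] with y hy
      rw [smul_inv_smul₀ hr.ne', div_le_iff₀ hs] at hy
      have := hscale x₀ y p M
      have e : ((u (r • x₀) - a - ⟪q, r • x₀⟫) / s) * s = u (r • x₀) - a - ⟪q, r • x₀⟫ := by
        field_simp
      linarith)
    exact nondeg hd0 (hDb x₀ hx₀ p hp) (abs_le.1 (hfb x₀ hx₀)).1 ht0.le hε.le hkd h1
  · intro x₀ hx₀ p M hM htouch hp
    have h1 := visc_below hvisc (p := (s / r) • p + q) (hball1 x₀ hx₀) (hM.smul T) (by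
      filter_upwards [(hpull x₀).eventually htouch] with y hy
      rw [smul_inv_smul₀ hr.ne', le_div_iff₀ hs] at hy
      have := hscale x₀ y p M
      have e : ((u (r • x₀) - a - ⟪q, r • x₀⟫) / s) * s = u (r • x₀) - a - ⟪q, r • x₀⟫ := by
        field_simp
      linarith)
    have := nondeg (Fv := - F (r • x₀) (T • M)) (fv := - f (r • x₀)) hd0 (hDb x₀ hx₀ p hp)
      (by linarith [(abs_le.1 (hfb x₀ hx₀)).2]) ht0.le hε.le hkd (by linarith)
    linarith

/-- Comparison of the approximating slopes with the gradient: an affine function within `s` of `u`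
on `B_r`, where `|u - ⟪g, ·⟫| ≤ η |·|`, has slope within `4 s / r + η` of `g`. -/
lemma slope_close {n : ℕ} {u : En n → ℝ} {g q : En n} {a r s η : ℝ} (hr : 0 < r) (hη : 0 ≤ η)
    (h0 : u 0 = 0) (happ : ∀ x ∈ ball (0 : En n) r, |u x - a - ⟪q, x⟫| ≤ s)
    (hdiff : ∀ x ∈ ball (0 : En n) r, |u x - ⟪g, x⟫| ≤ η * ‖x‖) : ‖q - g‖ ≤ 4 * (s / r) + η := by
  have ha := happ 0 (mem_ball_self hr)
  rw [h0, inner_zero_right] at ha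
  have hs : 0 ≤ s := (abs_nonneg _).trans ha
  rcases eq_or_ne (q - g) 0 with hz | hz
  · rw [hz, norm_zero]; positivity
  · have hw : 0 < ‖q - g‖ := norm_pos_iff.2 hz
    set y := (r / 2 / ‖q - g‖) • (q - g) with hy
    have hyn : ‖y‖ = r / 2 := by
      rw [hy, norm_smul, Real.norm_eq_abs, abs_of_pos (by positivity)]; field_simp
    have hyb : y ∈ ball (0 : En n) r := by rw [mem_ball_zero_iff, hyn]; linarith
    have h1 := (abs_le.1 (happ y hyb)).1
    have h2 := (abs_le.1 (hdiff y hyb)).2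
    have h3 := (abs_le.1 ha).1
    have h4 : ⟪q, y⟫ - ⟪g, y⟫ = r / 2 * ‖q - g‖ := by
      rw [← inner_sub_left, hy, real_inner_smul_right, real_inner_self_eq_norm_sq]
      field_simp
    rw [hyn] at h2
    have h3' := (abs_le.1 ha).2
    have h5 : r / 2 * ‖q - g‖ ≤ r / 2 * (4 * (s / r) + η) := by
      have : r / 2 * (4 * (s / r) + η) = 2 * s + η * (r / 2) := by field_simp; ring
      linarith
    exact le_of_mul_le_mul_left h5 (by positivity)

/-! ### Iteration -/

/-- **Regularity for small gradient.** There are universal `ρ, η* > 0` and `C > 0` such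
that if `|∇u(0)| ≤ η* t^β` for some `0 < t ≤ ρ`, then `sup_{B_t}|u| ≤ C t^{1+β}`. -/
theorem regularity_for_small_gradient
    {n : ℕ} (lam Lam tlam tLam γ K₁ αb K₂ θ α₀ C₀ : ℝ)
    (hlam : 0 < lam) (hlamLam : lam ≤ Lam)
    (htlam : 0 < tlam) (htlamLam : tlam ≤ tLam)
    (hγ : γ ∈ Set.Ioo (0:ℝ) 1) (hK₁ : 0 < K₁) (hαb : αb ∈ Set.Ioo (0:ℝ) 1)
    (hK₂ : 0 < K₂) (hθ : θ ∈ Set.Ioo (0:ℝ) 1)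
    (hα₀ : α₀ ∈ Set.Ioo (0:ℝ) 1) (hC₀ : 0 < C₀)
    (hapriori : InteriorC1AlphaEstimate n lam Lam α₀ C₀)
    (β : ℝ) (hβ0 : 0 < β) (hβα : β < α₀) (hβθ : β ≤ (1 + θ) / (1 + γ)) :
    ∃ ρ ηs C : ℝ, 0 < ρ ∧ 0 < ηs ∧ 0 < C ∧
      ∀ (Dg : En n → En n → ℝ) (F : En n → Matrix (Fin n) (Fin n) ℝ → ℝ) (f u : En n → ℝ),
        IsUnifElliptic lam Lam F →
        (∀ x ∈ ball (0 : En n) 1, ∀ y ∈ ball (0 : En n) 1,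
          ∀ M : Matrix (Fin n) (Fin n) ℝ, M.IsSymm →
          |F x M - F y M| ≤ K₁ * ‖x - y‖ ^ αb * (‖M‖ + 1)) →
        IsDegeneracyLaw tlam tLam γ Dg →
        (∀ x ∈ ball (0 : En n) 1, |f x| ≤ K₂ * ‖x‖ ^ θ) →
        ContinuousOn u (ball (0 : En n) 1) →
        (∀ x ∈ ball (0 : En n) 1, |u x| ≤ 1) →
        IsViscositySolutionOn (ball (0 : En n) 1) (fun x p M => Dg x p * F x M) f u →
        u 0 = 0 → DifferentiableAt ℝ u 0 →
        ∀ t : ℝ, 0 < t → t ≤ ρ → ‖gradient u 0‖ ≤ ηs * t ^ β →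
          ∀ x ∈ ball (0 : En n) t, |u x| ≤ C * t ^ (1 + β) := by
  obtain ⟨ρ₁, ε, L, hρ0, hρ2, hε, hL, hflat⟩ := flat n hlam hlamLam hαb hC₀ hapriori hβα
  have hβ1 : β < 1 := hβα.trans hα₀.2
  have hγ0 := hγ.1
  have hρlt : ρ₁ < 1 := by linarith
  -- the starting scale makes the oscillation and the right-hand side smaller than `ε`
  set Q₁ := ε / K₁ with hQ₁
  set Q₂ := tlam * ε ^ (1 + γ) / K₂ with hQ₂
  have hQ₁0 : 0 < Q₁ := by positivity
  have hQ₂0 : 0 < Q₂ := by positivity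
  set r₀ := min 1 (min (Q₁ ^ (1 / αb)) (Q₂ ^ (1 / θ))) with hr₀
  have hr₀0 : 0 < r₀ := by positivity
  have hr₀1 : r₀ ≤ 1 := min_le_left _ _
  have hr₀a : r₀ ^ αb ≤ Q₁ := by
    calc r₀ ^ αb ≤ (Q₁ ^ (1 / αb)) ^ αb :=
          Real.rpow_le_rpow hr₀0.le ((min_le_right _ _).trans (min_le_left _ _)) hαb.1.le
      _ = Q₁ := by rw [← Real.rpow_mul hQ₁0.le, one_div_mul_cancel hαb.1.ne', Real.rpow_one]
  have hr₀t : r₀ ^ θ ≤ Q₂ := by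
    calc r₀ ^ θ ≤ (Q₂ ^ (1 / θ)) ^ θ :=
          Real.rpow_le_rpow hr₀0.le ((min_le_right _ _).trans (min_le_right _ _)) hθ.1.le
      _ = Q₂ := by rw [← Real.rpow_mul hQ₂0.le, one_div_mul_cancel hθ.1.ne', Real.rpow_one]
  set τ := ρ₁ ^ β with hτ
  have hτ0 : 0 < τ := Real.rpow_pos_of_pos hρ0 _
  have hτ1 : τ < 1 := Real.rpow_lt_one hρ0.le hρlt hβ0
  set A := L / (r₀ * (1 - τ)) with hA
  have h1τ : 0 < 1 - τ := by linarith
  have hA0 : 0 < A := by positivity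
  set B := r₀ * ρ₁ with hB
  have hB0 : 0 < B := by positivity
  refine ⟨r₀, 1, 2 / B ^ (1 + β) + 1 + A / B ^ β, hr₀0, one_pos, by positivity, ?_⟩
  intro Dg F f u hF hosc hD hf hu hu1 hvisc hu0 hdiff t ht htr hgrad x hx
  set s : ℕ → ℝ := fun k => (ρ₁ ^ k) ^ (1 + β) with hs
  have hm0 : ∀ k : ℕ, 0 < ρ₁ ^ k := fun k => by positivity
  have hm1 : ∀ k : ℕ, ρ₁ ^ k ≤ 1 := fun k => pow_le_one₀ hρ0.le hρlt.le
  have hs0 : ∀ k, 0 < s k := fun k => Real.rpow_pos_of_pos (hm0 k) _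
  have hτk : ∀ k : ℕ, τ ^ k = (ρ₁ ^ k) ^ β := fun k => by
    rw [hτ, ← Real.rpow_mul_natCast hρ0.le, ← Real.rpow_natCast_mul hρ0.le, mul_comm]
  have hsτ : ∀ k, s k = ρ₁ ^ k * τ ^ k := fun k => by
    rw [hτk]; simp only [hs]; rw [Real.rpow_add (hm0 k), Real.rpow_one]
  have hsr : ∀ k, s k / (r₀ * ρ₁ ^ k) = τ ^ k / r₀ := fun k => by
    rw [hsτ]; have := (hm0 k).ne'; field_simp
  set P : ℕ → ℝ → En n → Prop := fun k a q =>
    ∀ x ∈ ball (0 : En n) (r₀ * ρ₁ ^ k), |u x - a - ⟪q, x⟫| ≤ s k with hP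
  -- one step of the iteration
  have hstep : ∀ k a q, P k a q → ∃ a' q', P (k + 1) a' q' ∧ ‖q' - q‖ ≤ L * (τ ^ k / r₀) := by
    intro k a q hk
    set m := ρ₁ ^ k with hm
    have hmp : 0 < m := hm0 k
    have hml : m ≤ 1 := hm1 k
    set r := r₀ * m with hr
    have hr0 : 0 < r := by positivity
    have hrr : r ≤ r₀ := mul_le_of_le_one_right hr₀0.le hml
    have hrs : r ^ 2 ≤ s k := by
      have h1 : m ^ (2:ℝ) ≤ m ^ (1 + β) :=
        Real.rpow_le_rpow_of_exponent_ge hmp hml (by linarith)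
      rw [Real.rpow_two] at h1
      have h2 : r ^ 2 ≤ m ^ 2 := by
        refine pow_le_pow_left₀ hr0.le ?_ 2
        exact mul_le_of_le_one_left hmp.le hr₀1
      exact h2.trans h1
    have hK1 : K₁ * r ^ αb ≤ ε := by
      have h1 : r ^ αb ≤ Q₁ := (Real.rpow_le_rpow hr0.le hrr hαb.1.le).trans hr₀a
      rw [hQ₁, le_div_iff₀ hK₁] at h1
      linarith
    have hK2 : K₂ * r ^ θ * (r ^ 2 / s k) * (r / s k) ^ γ ≤ tlam * ε ^ (1 + γ) := by
      have e1 : r / s k ≤ m ^ (-β) := by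
        rw [div_le_iff₀ (hs0 k)]
        simp only [hs]
        rw [← Real.rpow_add hmp, show -β + (1 + β) = (1:ℝ) by ring, Real.rpow_one]
        exact mul_le_of_le_one_left hmp.le hr₀1
      have e2 : r ^ 2 / s k ≤ m ^ (1 - β) := by
        rw [div_le_iff₀ (hs0 k)]
        simp only [hs]
        rw [← Real.rpow_add hmp, show 1 - β + (1 + β) = (2:ℝ) by ring, Real.rpow_two]
        exact pow_le_pow_left₀ hr0.le (mul_le_of_le_one_left hmp.le hr₀1) 2
      have e3 : (r / s k) ^ γ ≤ m ^ (-β * γ) := by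
        rw [Real.rpow_mul hmp.le]
        exact Real.rpow_le_rpow (div_nonneg hr0.le (hs0 k).le) e1 hγ0.le
      have e4 : r ^ θ = r₀ ^ θ * m ^ θ := Real.mul_rpow hr₀0.le hmp.le
      have e5 : m ^ θ * (m ^ (1 - β) * m ^ (-β * γ)) ≤ 1 := by
        rw [← Real.rpow_add hmp, ← Real.rpow_add hmp]
        refine Real.rpow_le_one hmp.le hml ?_
        rw [le_div_iff₀ (by linarith)] at hβθ
        linarith
      have e6 : K₂ * r₀ ^ θ ≤ tlam * ε ^ (1 + γ) := by
        rw [hQ₂, le_div_iff₀ hK₂] at hr₀t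
        linarith
      have hsk := hs0 k
      calc K₂ * r ^ θ * (r ^ 2 / s k) * (r / s k) ^ γ
          ≤ K₂ * (r₀ ^ θ * m ^ θ) * m ^ (1 - β) * m ^ (-β * γ) := by
            rw [e4]; gcongr
        _ = K₂ * r₀ ^ θ * (m ^ θ * (m ^ (1 - β) * m ^ (-β * γ))) := by ring
        _ ≤ K₂ * r₀ ^ θ * 1 := by gcongr
        _ ≤ _ := by linarith
    have hcls := resc htlam hγ hK₂ hθ hF hosc hD hf hu hvisc hε hr0 (hrr.trans hr₀1)
      (hs0 k) hrs hK1 hK2 hk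
    obtain ⟨a', q', hq', happ⟩ := hflat _ _ _ hcls
    refine ⟨a + s k * a', q + (s k / r) • q', ?_, ?_⟩
    · intro y hy
      have hy' : r⁻¹ • y ∈ ball (0 : En n) ρ₁ := by
        rw [mem_ball_zero_iff] at hy ⊢
        rw [norm_smul, Real.norm_eq_abs, abs_of_pos (by positivity), inv_mul_lt_iff₀ hr0]
        calc ‖y‖ < r₀ * ρ₁ ^ (k + 1) := hy
          _ = r * ρ₁ := by rw [pow_succ, hr, hm]; ring
      have h1 := happ _ hy'
      simp only [smul_inv_smul₀ hr0.ne'] at h1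
      have h2 := mul_le_mul_of_nonneg_left h1 (hs0 k).le
      have h3 : s (k + 1) = s k * ρ₁ ^ (1 + β) := by
        simp only [hs]
        rw [pow_succ, Real.mul_rpow (hm0 k).le hρ0.le]
      rw [h3]
      refine le_of_eq_of_le ?_ h2
      rw [← abs_of_pos (hs0 k), ← abs_mul, abs_of_pos (hs0 k)]
      congr 1
      rw [inner_add_left, real_inner_smul_left, real_inner_smul_right]
      have := (hs0 k).ne'
      field_simp
      ring
    · rw [add_sub_cancel_left, norm_smul, Real.norm_eq_abs,
        abs_of_pos (div_pos (hs0 k) hr0), hsr k, mul_comm]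
      exact mul_le_mul_of_nonneg_right hq' (by positivity)
  -- the slopes form a geometric Cauchy sequence
  have hiter : ∀ k a q, P k a q → ∀ m, ∃ a' q', P (k + m) a' q' ∧
      ‖q' - q‖ ≤ A * (τ ^ k - τ ^ (k + m)) := by
    intro k a q hk m
    induction m with
    | zero => exact ⟨a, q, hk, by simp⟩
    | succ m ih =>
      obtain ⟨a', q', h1, h2⟩ := ih
      obtain ⟨a'', q'', h3, h4⟩ := hstep (k + m) a' q' h1
      refine ⟨a'', q'', h3, ?_⟩
      have h5 := norm_add_le (q'' - q') (q' - q)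
      rw [sub_add_sub_cancel] at h5
      have h6 : L * (τ ^ (k + m) / r₀) = A * (τ ^ (k + m) - τ ^ (k + (m + 1))) := by
        rw [hA, ← add_assoc, pow_succ]
        field_simp
      linarith
  have hP0 : P 0 0 0 := by
    intro y hy
    rw [pow_zero, mul_one] at hy
    simpa [hs] using hu1 y (ball_subset_ball hr₀1 hy)
  set g := gradient u 0 with hg
  have hclose : ∀ k a q, P k a q → ‖q - g‖ ≤ A * τ ^ k := by
    intro k a q hk
    refine le_of_forall_pos_le_add fun η hη => ?_
    have hfd : HasFDerivAt u (InnerProductSpace.toDual ℝ (En n) g) 0 :=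
      hdiff.hasGradientAt.hasFDerivAt
    have hlit := hfd.isLittleO.def (by positivity : 0 < η / 2)
    obtain ⟨δ, hδ, hδb⟩ := Metric.eventually_nhds_iff_ball.1 hlit
    have hz1 : Filter.Tendsto (fun m : ℕ => r₀ * ρ₁ ^ (k + m)) Filter.atTop (nhds (r₀ * 0)) :=
      ((tendsto_pow_atTop_nhds_zero_of_lt_one hρ0.le hρlt).comp
        (Filter.tendsto_add_atTop_nat k |>.congr fun m => add_comm m k)).const_mul r₀
    have hz2 : Filter.Tendsto (fun m : ℕ => 4 * (τ ^ (k + m) / r₀)) Filter.atTop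
        (nhds (4 * (0 / r₀))) :=
      (((tendsto_pow_atTop_nhds_zero_of_lt_one hτ0.le hτ1).comp
        (Filter.tendsto_add_atTop_nat k |>.congr fun m => add_comm m k)).div_const r₀).const_mul 4
    rw [mul_zero] at hz1
    rw [zero_div, mul_zero] at hz2
    obtain ⟨m, hm1', hm2'⟩ := ((hz1.eventually (gt_mem_nhds hδ)).and
      (hz2.eventually (gt_mem_nhds (by positivity : 0 < η / 2)))).exists
    obtain ⟨a', q', h1, h2⟩ := hiter k a q hk m
    have h3 := slope_close (g := g) (η := η / 2) (mul_pos hr₀0 (hm0 (k + m))) (by positivity) hu0 h1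
      (fun y hy => by
        have := hδb y (ball_subset_ball hm1'.le hy)
        simpa [hu0] using this)
    rw [hsr] at h3
    have h4 := norm_sub_le (q' - g) (q' - q)
    rw [show q' - g - (q' - q) = q - g by abel] at h4
    have h5 : 0 ≤ A * τ ^ (k + m) := by positivity
    linarith [show A * (τ ^ k - τ ^ (k + m)) = A * τ ^ k - A * τ ^ (k + m) by ring]
  -- the scale `r₀ ρ₁^k` comparable to `t`
  obtain ⟨k, hk1, hk2⟩ := exists_nat_pow_near_of_lt_one (x := t / r₀) (y := ρ₁) (by positivity)
    ((div_le_one hr₀0).2 htr) hρ0 hρlt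
  obtain ⟨a, q, hPk, -⟩ := hiter 0 0 0 hP0 k
  rw [zero_add] at hPk
  have hq := hclose k a q hPk
  have htk : t ≤ r₀ * ρ₁ ^ k := by rw [div_le_iff₀ hr₀0] at hk2; linarith
  have hmk : ρ₁ ^ k ≤ t / B := by
    rw [le_div_iff₀ hB0, hB]
    rw [lt_div_iff₀ hr₀0, pow_succ] at hk1
    linarith
  have b1 : s k ≤ t ^ (1 + β) / B ^ (1 + β) := by
    rw [← Real.div_rpow ht.le hB0.le]
    exact Real.rpow_le_rpow (hm0 k).le hmk (by linarith)
  have b2 : τ ^ k ≤ t ^ β / B ^ β := by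
    rw [hτk, ← Real.div_rpow ht.le hB0.le]
    exact Real.rpow_le_rpow (hm0 k).le hmk hβ0.le
  have htβ : t ^ (1 + β) = t ^ β * t := by rw [add_comm, Real.rpow_add ht, Real.rpow_one]
  have ha := hPk 0 (mem_ball_self (mul_pos hr₀0 (hm0 k)))
  rw [hu0, inner_zero_right, sub_zero, zero_sub, abs_neg] at ha
  have hxk := hPk x (ball_subset_ball htk hx)
  have hqn : ‖q‖ ≤ t ^ β + A * (t ^ β / B ^ β) := by
    have h1 := norm_le_norm_add_norm_sub' q g
    have h2 := mul_le_mul_of_nonneg_left b2 hA0.le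
    linarith
  have hin : |⟪q, x⟫| ≤ (t ^ β + A * (t ^ β / B ^ β)) * t :=
    (abs_real_inner_le_norm q x).trans
      (mul_le_mul hqn (mem_ball_zero_iff.1 hx).le (norm_nonneg _) (by positivity))
  have hC : (2 / B ^ (1 + β) + 1 + A / B ^ β) * t ^ (1 + β) =
      2 * (t ^ (1 + β) / B ^ (1 + β)) + (t ^ β + A * (t ^ β / B ^ β)) * t := by
    rw [htβ]; ring
  rw [hC]
  have c1 := abs_le.1 ha
  have c2 := abs_le.1 hxk
  have c3 := abs_le.1 hin
  rw [abs_le]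
  constructor <;> linarith [c1.1, c1.2, c2.1, c2.2, c3.1, c3.2]

end
end

section
/- Let n ≥ 1, α ∈ (0,1) and γ > 0, and define u : ℝⁿ → ℝ by u(x) = |x|^{1+α}. Then for every x ≠ 0, u is twice differentiable at x and |∇u(x)|^γ Δu(x) = (1+α)^{1+γ} (n−1+α) |x|^θ, where θ = (1+α)(1+γ) − (2+γ). Moreover θ = αγ + α − 1 ≤ γ (since α < 1), and |u(x)| ≤ |x|^{1+α} for all x, so that u is exactly C^{1,α} at the origin. -/
/-!
Everything follows from the explicit derivatives of `u = ‖·‖ ^ (1 + α)`. Its gradient at `x` is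
`(1 + α) ‖x‖ ^ (α - 1) x`, of norm `(1 + α) ‖x‖ ^ α`. Differentiating once more away from the
origin, the Hessian quadratic form at `v` is
`(1 + α) (‖x‖ ^ (α - 1) ‖v‖ ^ 2 + (α - 1) ‖x‖ ^ (α - 3) ⟪x, v⟫ ^ 2)`
(`iteratedFDeriv_two_norm_rpow_one_add`). Summing over the standard basis, where the squares
`⟪x, eᵢ⟫ ^ 2` add up to `‖x‖ ^ 2`, gives the Laplacian `(1 + α) (n - 1 + α) ‖x‖ ^ (α - 1)`
(`trace_hessMat_norm_rpow_one_add`), and the exponents combine to `θ = α γ + (α - 1)`.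
-/

open Metric Set
open scoped RealInnerProductSpace

noncomputable section

attribute [local instance] Matrix.normedAddCommGroup

section NormPower

variable {E : Type*} [NormedAddCommGroup E] [InnerProductSpace ℝ E]

/-- Away from the origin the exponent is arbitrary; Mathlib's `hasFDerivAt_norm_rpow` covers the
origin too but needs `1 < q`, which fails for the exponent `α - 1` in the gradient of `u`. -/
theorem hasFDerivAt_norm_rpow_of_ne_zero (q : ℝ) {x : E} (hx : x ≠ 0) :
    HasFDerivAt (fun y : E => ‖y‖ ^ q) ((q * ‖x‖ ^ (q - 2)) • innerSL ℝ x) x := by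
  have key (y : E) (s : ℝ) : (‖y‖ ^ 2) ^ s = ‖y‖ ^ (2 * s) := by
    rw [← Real.rpow_natCast_mul (norm_nonneg y)]; norm_num
  -- The norm is handled through its smooth square: `‖y‖ ^ q = (‖y‖ ^ 2) ^ (q / 2)`.
  have h := ((hasStrictFDerivAt_norm_sq x).hasFDerivAt).rpow_const (p := q / 2)
    (Or.inl (pow_ne_zero 2 (norm_ne_zero_iff.2 hx)))
  simp only [key, ← Nat.cast_smul_eq_nsmul ℝ, smul_smul] at h
  rw [show 2 * (q / 2) = q by ring, show 2 * (q / 2 - 1) = q - 2 by ring,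
    show q / 2 * ‖x‖ ^ (q - 2) * ((2 : ℕ) : ℝ) = q * ‖x‖ ^ (q - 2) by push_cast; ring] at h
  exact h

theorem fderiv_norm_rpow_one_add {α : ℝ} (hα : 0 < α) :
    fderiv ℝ (fun y : E => ‖y‖ ^ (1 + α)) =
      fun y => ((1 + α) * ‖y‖ ^ (α - 1)) • innerSL ℝ y := by
  ext1 y
  rw [(hasFDerivAt_norm_rpow y (by linarith : 1 < 1 + α)).fderiv,
    show 1 + α - 2 = α - 1 by ring]

theorem iteratedFDeriv_two_norm_rpow_one_add {α : ℝ} (hα : 0 < α) {x : E} (hx : x ≠ 0) (v : E) :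
    iteratedFDeriv ℝ 2 (fun y : E => ‖y‖ ^ (1 + α)) x ![v, v] =
      (1 + α) * (‖x‖ ^ (α - 1) * ‖v‖ ^ 2 +
        (α - 1) * ‖x‖ ^ (α - 3) * (inner ℝ x v) ^ 2) := by
  have h : HasFDerivAt (fun y : E => ((1 + α) * ‖y‖ ^ (α - 1)) • innerSL ℝ y) _ x :=
    ((hasFDerivAt_norm_rpow_of_ne_zero (α - 1) hx).const_mul (1 + α)).smul
      (innerSL ℝ (E := E)).hasFDerivAt
  rw [iteratedFDeriv_two_apply, fderiv_norm_rpow_one_add hα, h.fderiv]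
  -- `starRingEnd ℝ` is the identity only up to unfolding, so the value of the form is restated.
  change (1 + α) * ‖x‖ ^ (α - 1) * inner ℝ v v +
    (1 + α) * ((α - 1) * ‖x‖ ^ (α - 1 - 2) * inner ℝ x v) * inner ℝ x v = _
  rw [real_inner_self_eq_norm_sq, show α - 1 - 2 = α - 3 by ring]
  ring

theorem norm_gradient_norm_rpow_one_add [CompleteSpace E] {α : ℝ} (hα : 0 < α) {x : E}
    (hx : x ≠ 0) :
    ‖gradient (fun y : E => ‖y‖ ^ (1 + α)) x‖ = (1 + α) * ‖x‖ ^ α := by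
  have hx' := norm_pos_iff.2 hx
  rw [gradient, LinearIsometryEquiv.norm_map, fderiv_norm_rpow_one_add hα, norm_smul,
    innerSL_apply_norm, Real.norm_of_nonneg (by positivity), mul_assoc,
    ← Real.rpow_add_one hx'.ne']
  simp

end NormPower

theorem trace_hessMat_norm_rpow_one_add {n : ℕ} {α : ℝ} (hα : 0 < α) {x : En n} (hx : x ≠ 0) :
    (hessMat (fun y : En n => ‖y‖ ^ (1 + α)) x).trace =
      (1 + α) * ((n : ℝ) - 1 + α) * ‖x‖ ^ (α - 1) := by
  have hx' := norm_pos_iff.2 hx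
  have h2 : ‖x‖ ^ (α - 1) = ‖x‖ ^ (α - 3) * ‖x‖ ^ 2 := by
    rw [← Real.rpow_add_natCast hx'.ne']; congr 1; push_cast; ring
  have hs : ∑ i, x i ^ 2 = ‖x‖ ^ 2 := by simp [EuclideanSpace.norm_sq_eq]
  simp only [Matrix.trace, Matrix.diag, hessMat, Matrix.of_apply,
    iteratedFDeriv_two_norm_rpow_one_add hα hx, ← Finset.mul_sum, Finset.sum_add_distrib]
  simp [EuclideanSpace.inner_single_right, hs]
  rw [h2]; ring

/-- The radial function `u(x) = |x|^{1+α}` satisfies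
`|∇u|^γ Δu = (1+α)^{1+γ}(n−1+α)|x|^θ` away from the origin, with
`θ = (1+α)(1+γ) − (2+γ) = αγ + α − 1 ≤ γ`, and `|u(x)| ≤ |x|^{1+α}`,
so `u` is exactly `C^{1,α}` at the origin. -/
theorem radial_example
    {n : ℕ} (hn : 1 ≤ n) (α γ : ℝ) (hα : α ∈ Set.Ioo (0:ℝ) 1) (hγ : 0 < γ) :
    (∀ x : En n, x ≠ 0 →
      ContDiffAt ℝ 2 (fun y : En n => ‖y‖ ^ (1 + α)) x ∧
      ‖gradient (fun y : En n => ‖y‖ ^ (1 + α)) x‖ ^ γ *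
          (hessMat (fun y : En n => ‖y‖ ^ (1 + α)) x).trace =
        (1 + α) ^ (1 + γ) * ((n : ℝ) - 1 + α) *
          ‖x‖ ^ ((1 + α) * (1 + γ) - (2 + γ))) ∧
    (1 + α) * (1 + γ) - (2 + γ) = α * γ + α - 1 ∧
    (1 + α) * (1 + γ) - (2 + γ) ≤ γ ∧
    ∀ x : En n, |‖x‖ ^ (1 + α)| ≤ ‖x‖ ^ (1 + α) := by
  obtain ⟨h0, h1⟩ := hα
  refine ⟨fun x hx => ⟨?_, ?_⟩, by ring, by nlinarith, fun x => ?_⟩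
  · exact (contDiffAt_norm ℝ hx).rpow_const_of_ne (norm_ne_zero_iff.2 hx)
  · have hx' := norm_pos_iff.2 hx
    have hα' : 0 < 1 + α := by linarith
    rw [norm_gradient_norm_rpow_one_add h0 hx, trace_hessMat_norm_rpow_one_add h0 hx,
      Real.mul_rpow hα'.le (by positivity), ← Real.rpow_mul hx'.le,
      show (1 + α) * (1 + γ) - (2 + γ) = α * γ + (α - 1) by ring,
      Real.rpow_add hx', Real.rpow_add hα', Real.rpow_one]
    ring
  · rw [abs_of_nonneg (by positivity)]

end
end

section
/- Let n ≥ 1, 0 < γ < θ < 1, set p = 2 + (θ−γ)/(1+γ), and define u : ℝⁿ → ℝ by u(x) = |x_n|^p. Then u is twice continuously differentiable on ℝⁿ, with ∇u(x) = p|x_n|^{p−1} sgn(x_n) e_n and Δu(x) = p(p−1)|x_n|^{p−2}, and for every x ∈ ℝⁿ it satisfies |∇u(x)|^γ Δu(x) = p^{1+γ}(p−1) |x_n|^θ, with |x_n|^θ ≤ |x|^θ. In particular u solves the degenerate equation |∇u|^γ Δu = f with a source f vanishing at the origin at rate θ, while |u(x)| = |x_n|^{2+(θ−γ)/(1+γ)}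 ≤ |x|^{2+(θ−γ)/(1+γ)}, i.e. u is C^{2,(θ−γ)/(1+γ)} at the origin. -/
/-!
The function `u` is the composition of `φ(t) = |t|^p` with the coordinate functional `x ↦ x i`,
so everything reduces to calculus in one variable. Mathlib gives `φ' = p |t|^(p-2) t`, and
`|t|^q t` with `q = p - 2 > 0` has derivative `(q+1) |t|^q` everywhere, including at `0`
(`hasDerivAt_abs_rpow_mul_self`). Hence `φ'' = p (p-1) |t|^(p-2)` is continuous and `φ` is `C²`.

By the chain rule `∇u = φ'(x i) e_i`, and the only nonzero entry of the Hessian is `φ''(x i)`.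
The equation then comes down to the exponent identity `(p-1) γ + (p-2) = θ`, and the bounds to
`|x i| ≤ ‖x‖`.
-/

open Metric Set
open scoped RealInnerProductSpace

noncomputable section

attribute [local instance] Matrix.normedAddCommGroup

lemma hasDerivAt_abs_rpow_mul_self {q : ℝ} (hq : 0 < q) (t : ℝ) :
    HasDerivAt (fun s : ℝ => |s| ^ q * s) ((q + 1) * |t| ^ q) t := by
  rcases eq_or_ne t 0 with rfl | ht
  -- At the origin the difference quotient is `|s| ^ q`, which tends to `0`.
  · rw [hasDerivAt_iff_tendsto_slope]
    have hcont : Continuous fun s : ℝ => |s| ^ q :=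
      continuous_abs.rpow_const fun _ => Or.inr hq.le
    have hlim := (hcont.tendsto 0).mono_left (nhdsWithin_le_nhds (s := {0}ᶜ))
    simp only [abs_zero, Real.zero_rpow hq.ne', mul_zero] at hlim ⊢
    refine hlim.congr' ?_
    filter_upwards [self_mem_nhdsWithin] with s hs
    have hs' : s ≠ 0 := hs
    simp [slope_def_field, hs']
  · have h := ((hasDerivAt_abs ht).rpow_const (p := q) (Or.inl (abs_ne_zero.mpr ht))).mul
      (hasDerivAt_id t)
    refine h.congr_deriv ?_
    have hpos : 0 < |t| := abs_pos.mpr ht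
    have hsgn : (SignType.sign t : ℝ) * t = |t| := sign_mul_self t
    have hpow : |t| ^ (q - 1) * |t| = |t| ^ q := by
      rw [← Real.rpow_add_one hpos.ne', sub_add_cancel]
    simp only [id, mul_one]
    linear_combination q * |t| ^ (q - 1) * hsgn + q * hpow

lemma deriv_abs_rpow {p : ℝ} (hp : 2 < p) :
    deriv (fun t : ℝ => |t| ^ p) = fun t => p * (|t| ^ (p - 2) * t) := by
  funext t
  rw [(hasDerivAt_abs_rpow t (by linarith)).deriv, mul_assoc]

lemma deriv_deriv_abs_rpow {p : ℝ} (hp : 2 < p) :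
    deriv (deriv (fun t : ℝ => |t| ^ p)) = fun t => p * (p - 1) * |t| ^ (p - 2) := by
  rw [deriv_abs_rpow hp]
  funext t
  rw [((hasDerivAt_abs_rpow_mul_self (sub_pos.mpr hp) t).const_mul p).deriv]
  ring

lemma contDiff_two_abs_rpow {p : ℝ} (hp : 2 < p) :
    ContDiff ℝ 2 (fun t : ℝ => |t| ^ p) := by
  rw [show (2 : WithTop ℕ∞) = 1 + 1 by norm_num, contDiff_succ_iff_deriv]
  refine ⟨fun t => (hasDerivAt_abs_rpow t (by linarith)).differentiableAt, by simp, ?_⟩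
  rw [contDiff_one_iff_deriv]
  constructor
  · rw [deriv_abs_rpow hp]
    exact fun t =>
      ((hasDerivAt_abs_rpow_mul_self (sub_pos.mpr hp) t).const_mul p).differentiableAt
  · rw [deriv_deriv_abs_rpow hp]
    exact continuous_const.mul
      (continuous_abs.rpow_const fun _ => Or.inr (by linarith))

/-- Up to the factor `p`, both sides are the derivative of `|t| ^ p`. At `t = 0` both vanish, whatever
the values of the powers. -/
lemma abs_rpow_mul_self_eq_sign (p t : ℝ) :
    |t| ^ (p - 2) * t = |t| ^ (p - 1) * Real.sign t := by
  rcases eq_or_ne t 0 with rfl | ht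
  · simp
  · have hpow : |t| ^ (p - 2) * |t| = |t| ^ (p - 1) := by
      rw [← Real.rpow_add_one (abs_ne_zero.mpr ht)]
      congr 1
      ring
    rw [← hpow, mul_assoc]
    congr 1
    rcases ht.lt_or_gt with h | h
    · simp [Real.sign_of_neg h, abs_of_neg h]
    · simp [Real.sign_of_pos h, abs_of_pos h]

lemma gradient_abs_coord_rpow {n : ℕ} (i : Fin n) {p : ℝ} (hp : 2 < p) (x : En n) :
    gradient (fun y : En n => |y i| ^ p) x =
      (p * |x i| ^ (p - 1) * Real.sign (x i)) • EuclideanSpace.single i 1 := by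
  apply HasGradientAt.gradient
  rw [hasGradientAt_iff_hasFDerivAt]
  have h := (hasDerivAt_abs_rpow (x i) (p := p) (by linarith)).comp_hasFDerivAt x
    (EuclideanSpace.proj (𝕜 := ℝ) i : En n →L[ℝ] ℝ).hasFDerivAt
  refine h.congr_fderiv ?_
  ext y
  have := abs_rpow_mul_self_eq_sign p (x i)
  simp [EuclideanSpace.inner_single_left, mul_assoc, this]

lemma trace_hessMat_abs_coord_rpow {n : ℕ} (i : Fin n) {p : ℝ} (hp : 2 < p) (x : En n) :
    (hessMat (fun y : En n => |y i| ^ p) x).trace = p * (p - 1) * |x i| ^ (p - 2) := by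
  have key : ∀ j : Fin n, hessMat (fun y : En n => |y i| ^ p) x j j =
      if j = i then p * (p - 1) * |x i| ^ (p - 2) else 0 := by
    intro j
    have h := (EuclideanSpace.proj (𝕜 := ℝ) i : En n →L[ℝ] ℝ).iteratedFDeriv_comp_right
      (contDiff_two_abs_rpow hp) x (i := 2) le_rfl
    have h2 : iteratedDeriv 2 (fun t : ℝ => |t| ^ p) (x i) = p * (p - 1) * |x i| ^ (p - 2) := by
      rw [iteratedDeriv_succ, iteratedDeriv_one, deriv_deriv_abs_rpow hp]
    change iteratedFDeriv ℝ 2 ((fun t : ℝ => |t| ^ p) ∘ (EuclideanSpace.proj (𝕜 := ℝ) i)) x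
      ![EuclideanSpace.single j 1, EuclideanSpace.single j 1] = _
    rw [h, ContinuousMultilinearMap.compContinuousLinearMap_apply,
      iteratedFDeriv_apply_eq_iteratedDeriv_mul_prod]
    by_cases hj : j = i
    · subst hj
      simp [Fin.prod_univ_two, h2]
    · simp [Fin.prod_univ_two, hj, Ne.symm hj]
  simp [Matrix.trace, key]

/-- The function `u(x) = |xₙ|^p` with `p = 2 + (θ−γ)/(1+γ)` is `C²`, satisfies
`|∇u|^γ Δu = p^{1+γ}(p−1)|xₙ|^θ` with `|xₙ|^θ ≤ |x|^θ`, and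
`|u(x)| ≤ |x|^p`, i.e. `u` is `C^{2,(θ−γ)/(1+γ)}` at the origin. -/
theorem one_dimensional_example
    {n : ℕ} (hn : 1 ≤ n) (γ θ : ℝ) (hγ : 0 < γ) (hγθ : γ < θ) (hθ : θ < 1) :
    ∀ (i : Fin n), i = ⟨n - 1, by omega⟩ →
    ∀ (p : ℝ), p = 2 + (θ - γ) / (1 + γ) →
    ∀ (u : En n → ℝ), u = (fun x => |x i| ^ p) →
      ContDiff ℝ 2 u ∧
      ∀ x : En n,
        gradient u x =
          (p * |x i| ^ (p - 1) * Real.sign (x i)) • EuclideanSpace.single i 1 ∧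
        (hessMat u x).trace = p * (p - 1) * |x i| ^ (p - 2) ∧
        ‖gradient u x‖ ^ γ * (hessMat u x).trace = p ^ (1 + γ) * (p - 1) * |x i| ^ θ ∧
        |x i| ^ θ ≤ ‖x‖ ^ θ ∧
        |u x| ≤ ‖x‖ ^ p := by
  intro i _ p hp u hu
  subst hu
  have hγ1 : (0 : ℝ) < 1 + γ := by linarith
  have hp2 : 2 < p := by
    have := div_pos (sub_pos.mpr hγθ) hγ1
    linarith
  have hexp : (p - 1) * γ + (p - 2) = θ := by
    rw [hp]
    field_simp
    ring
  refine ⟨(contDiff_two_abs_rpow hp2).comp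
    (EuclideanSpace.proj (𝕜 := ℝ) i : En n →L[ℝ] ℝ).contDiff, fun x => ?_⟩
  have hle : |x i| ≤ ‖x‖ := PiLp.norm_apply_le x i
  have h0 : 0 ≤ |x i| := abs_nonneg _
  refine ⟨gradient_abs_coord_rpow i hp2 x, trace_hessMat_abs_coord_rpow i hp2 x, ?_,
    Real.rpow_le_rpow h0 hle (by linarith), ?_⟩
  · have hp0 : 0 ≤ p := by linarith
    have hnorm : ‖(p * |x i| ^ (p - 1) * Real.sign (x i)) •
        (EuclideanSpace.single i 1 : En n)‖ = p * |x i| ^ (p - 1) := by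
      rcases lt_trichotomy (x i) 0 with h | h | h
      · simp [norm_smul, Real.sign_of_neg h, abs_of_nonneg hp0,
          abs_of_nonneg (Real.rpow_nonneg h0 (p - 1))]
      · simp [h, Real.zero_rpow (show p - 1 ≠ 0 by linarith)]
      · simp [norm_smul, Real.sign_of_pos h, abs_of_nonneg hp0,
          abs_of_nonneg (Real.rpow_nonneg h0 (p - 1))]
    rw [gradient_abs_coord_rpow i hp2 x, trace_hessMat_abs_coord_rpow i hp2 x, hnorm,
      Real.mul_rpow hp0 (Real.rpow_nonneg h0 _), ← Real.rpow_mul h0, ← hexp,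
      Real.rpow_add_of_nonneg h0 (mul_nonneg (by linarith) hγ.le) (by linarith),
      Real.rpow_add (by linarith : 0 < p), Real.rpow_one]
    ring
  · rw [abs_of_nonneg (Real.rpow_nonneg h0 p)]
    exact Real.rpow_le_rpow h0 hle (by linarith)

end
end
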